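/- arXiv:1207.1900 — 2 statements merged into one kernel-verified Lean document; each statement's English description precedes it below -/
import Mathlib

section
/- The existential theory of a free group is decidable: for F a free group of finite rank at least 2, with respect to a fixed Gödel numbering of sentences of the language of groups with constants from F, the set of existential sentences (sentences of the form ∃X θ(X) with θ quantifier-free, so in particular sentences asserting the solvability in F of a finite system of equations and inequations with constants) true in F is computable. -/
open FirstOrder FirstOrder.Language

/-- Function symbols of the first-order language of groups: a binary multiplication,
a unary inversion, and a constant for the identity. -/
inductive GroupFunc : ℕ → Type
  | mul : GroupFunc 2
  | inv : GroupFunc 1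
  | one : GroupFunc 0

/-- The first-order language of groups. -/
def groupLang : FirstOrder.Language :=
  ⟨GroupFunc, fun _ => Empty⟩

/-- Any group is a structure for the language of groups in the natural way.
Together with Mathlib's `withConstantsSelfStructure`, this makes a free group `F`
a structure for the language of groups with constants from `F`. -/
instance groupLang.structureOfGroup (G : Type*) [Group G] : groupLang.Structure G where
  funMap {_} f := match f with
    | .mul => fun v => v 0 * v 1
    | .inv => fun v => (v 0)⁻¹
    | .one => fun _ => 1
  RelMap {_} r := Empty.elim r

instance (n : ℕ) : Encodable (GroupFunc n) :=
  Encodable.ofLeftInjection (fun _ => 0)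
    (fun _ =>
      match n with
      | 0 => some GroupFunc.one
      | 1 => some GroupFunc.inv
      | 2 => some GroupFunc.mul
      | _ + 3 => none)
    (fun f => by cases f <;> rfl)

/-- A (computable) encoding of the elements of a free group of finite rank by natural
numbers, via reduced words. -/
instance (r : ℕ) : Encodable (FreeGroup (Fin r)) :=
  Encodable.ofLeftInjection FreeGroup.toWord (fun l => some (FreeGroup.mk l))
    (fun x => congrArg some FreeGroup.mk_toWord)

instance (α : Type*) [Encodable α] (n : ℕ) : Encodable ((constantsOn α).Functions n) :=
  match n with
  | 0 => inferInstanceAs (Encodable α)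
  | _ + 1 => inferInstanceAs (Encodable PEmpty)

instance (r n : ℕ) : Encodable ((groupLang[[FreeGroup (Fin r)]]).Functions n) :=
  inferInstanceAs (Encodable (GroupFunc n ⊕ (constantsOn (FreeGroup (Fin r))).Functions n))

instance (r n : ℕ) : Encodable ((groupLang[[FreeGroup (Fin r)]]).Relations n) :=
  inferInstanceAs (Encodable (Empty ⊕ Empty))

/-- A fixed Gödel numbering of the sentences of the language of groups with constants
from the free group of rank `r`, obtained from Mathlib's encoding of first-order
formulas as lists of symbols. -/
def godelNumberWithConstants (r : ℕ)
    (σ : (groupLang[[FreeGroup (Fin r)]]).Sentence) : ℕ :=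
  Encodable.encode σ.listEncode

/-- Existential formulas: formulas of the form `∃ X θ` with `θ` quantifier-free
(`X` a possibly empty tuple of variables). -/
inductive IsExistential {L : FirstOrder.Language} {α : Type*} :
    ∀ {n : ℕ}, L.BoundedFormula α n → Prop
  | of_isQF {n : ℕ} {φ : L.BoundedFormula α n} : φ.IsQF → IsExistential φ
  | ex {n : ℕ} {φ : L.BoundedFormula α (n + 1)} : IsExistential φ → IsExistential φ.ex

namespace Mak
open Finset

theorem count_lemma {S : Type*} [Fintype S] (P : S → ℕ → Prop) (C : ℕ)
    (h : ∀ s w, P s w → 0 < w → ∃ s' w', P s' w' ∧ w' < w ∧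
      ∀ v, P s' v → ∃ u, P s u ∧ u ≤ C * v + C) :
    ∀ s w, P s w → ∃ u, P s u ∧ u ≤ (fun v => C * v + C)^[Fintype.card S] 0 := by
  classical
  let m : S → ℕ := fun s => sInf {w | P s w}
  have hm : ∀ s w, P s w → P s (m s) := fun s w hw => Nat.sInf_mem (s := {w | P s w}) ⟨w, hw⟩
  have hle : ∀ s w, P s w → m s ≤ w := fun s w hw => Nat.sInf_le (s := {w | P s w}) hw
  have mono : Monotone (fun v : ℕ => C * v + C) := fun a b hab => by
    dsimp only; gcongr
  have itmono : ∀ i j, i ≤ j → (fun v => C * v + C)^[i] 0 ≤ (fun v => C * v + C)^[j] 0 :=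
    fun i j hij => mono.monotone_iterate_of_le_map (by simp) hij
  let rk : S → Finset S := fun s => univ.filter fun t => (∃ w, P t w) ∧ m t < m s
  have key : ∀ n s, m s = n → (∃ w, P s w) → m s ≤ (fun v => C * v + C)^[(rk s).card] 0 := by
    intro n
    induction n using Nat.strong_induction_on with
    | _ n ih =>
      intro s hs ⟨w, hw⟩
      rcases Nat.eq_zero_or_pos n with h0 | h0
      · omega
      obtain ⟨t, v, htv, hlt, hup⟩ := h s (m s) (hm s w hw) (by omega)
      have h1 : m t < m s := lt_of_le_of_lt (hle t v htv) hlt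
      have h2 := ih (m t) (by omega) t rfl ⟨v, htv⟩
      obtain ⟨u, hu, hu2⟩ := hup (m t) (hm t v htv)
      have h3 : (rk t).card + 1 ≤ (rk s).card := by
        apply Finset.card_lt_card
        rw [Finset.ssubset_iff_of_subset]
        · exact ⟨t, by simp only [rk, mem_filter, mem_univ, true_and]; exact ⟨⟨v, htv⟩, h1⟩, by simp [rk]⟩
        · intro z hz
          simp only [rk, mem_filter, mem_univ, true_and] at hz ⊢
          exact ⟨hz.1, by omega⟩
      refine le_trans ?_ (itmono _ _ h3)
      rw [Function.iterate_succ_apply']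
      exact le_trans (hle s u hu) (le_trans hu2 (mono h2))
  intro s w hw
  refine ⟨m s, hm s w hw, le_trans (key _ s rfl ⟨w, hw⟩) (itmono _ _ (Finset.card_le_univ _))⟩

/-- bound for the diophantine part -/
def dioB (k M : ℕ) : ℕ :=
  (fun v => (k + 2) * v + (k + 2))^[(2 * (M * k) + 1) ^ ((2 * M + 1) ^ k)] 0

theorem dio0 {κ : Type*} [Fintype κ] [DecidableEq κ] (M : ℕ)
    (J : (κ → Fin (2 * M + 1)) → Prop) (y : κ → ℕ) (b : (κ → Fin (2 * M + 1)) → ℤ)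
    (hb : ∀ c, |b c| ≤ (M * Fintype.card κ : ℕ))
    (hy : ∀ c, J c → ∑ k, ((c k : ℤ) - M) * y k = b c) :
    ∃ y' : κ → ℕ, (∀ c, J c → ∑ k, ((c k : ℤ) - M) * y' k = b c) ∧
      ∑ k, y' k ≤ dioB (Fintype.card κ) M := by
  classical
  set B := M * Fintype.card κ with hB
  let P : ((κ → Fin (2 * M + 1)) → Fin (2 * B + 1)) → ℕ → Prop := fun b w =>
    ∃ y : κ → ℕ, ∑ k, y k = w ∧ ∀ c, J c → ∑ k, ((c k : ℤ) - M) * y k = (b c : ℤ) - B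
  have conv : ∀ z : ℤ, |z| ≤ B → ∃ f : Fin (2 * B + 1), (f : ℤ) - B = z := by
    intro z hz
    rw [abs_le] at hz
    refine ⟨⟨(z + B).toNat, by omega⟩, by simp; omega⟩
  have hstep : ∀ s w, P s w → 0 < w → ∃ s' w', P s' w' ∧ w' < w ∧
      ∀ v, P s' v → ∃ u, P s u ∧ u ≤ (Fintype.card κ + 2) * v + (Fintype.card κ + 2) := by
    rintro s w ⟨y, rfl, hy⟩ hw
    let δ : κ → ℕ := fun k => y k % 2
    let y' : κ → ℕ := fun k => y k / 2
    have hyd : ∀ k, y k = 2 * y' k + δ k := fun k => by simp only [y', δ]; omega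
    have hcM : ∀ (c : κ → Fin (2 * M + 1)) k, |(c k : ℤ) - M| ≤ M := fun c k => by
      have := (c k).2
      rw [abs_le]; omega
    have hδ : ∀ c : κ → Fin (2 * M + 1), |∑ k, ((c k : ℤ) - M) * δ k| ≤ B := by
      intro c
      refine le_trans (Finset.abs_sum_le_sum_abs _ _) ?_
      have : ∀ k ∈ (univ : Finset κ), |((c k : ℤ) - M) * δ k| ≤ M := by
        intro k _
        have h2 : δ k = 0 ∨ δ k = 1 := by simp only [δ]; omega
        rcases h2 with h2 | h2 <;> simp [h2]
        exact hcM c k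
      refine le_trans (Finset.sum_le_sum this) ?_
      simp [hB, mul_comm]
    have hsum : ∀ c : κ → Fin (2 * M + 1), ∀ z : κ → ℕ, ∑ k, ((c k : ℤ) - M) * ((2 * z k + δ k : ℕ) : ℤ)
        = 2 * ∑ k, ((c k : ℤ) - M) * z k + ∑ k, ((c k : ℤ) - M) * δ k := by
      intro c z
      rw [Finset.mul_sum, ← Finset.sum_add_distrib]
      refine Finset.sum_congr rfl fun k _ => ?_
      push_cast; ring
    have hex : ∀ c, ∃ f : Fin (2 * B + 1), J c → (f : ℤ) - B = ∑ k, ((c k : ℤ) - M) * y' k := by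
      intro c
      by_cases hc : J c
      · obtain ⟨f, hf⟩ := conv (∑ k, ((c k : ℤ) - M) * y' k) (by
          have h1 := hy c hc
          have h2 := hsum c y'
          have h3 : ∑ k, ((c k : ℤ) - M) * ((2 * y' k + δ k : ℕ) : ℤ) = ∑ k, ((c k : ℤ) - M) * y k :=
            Finset.sum_congr rfl fun k _ => by rw [hyd k]
          have h4 := hδ c
          have h5 := (s c).2
          rw [abs_le] at h4 ⊢
          omega)
        exact ⟨f, fun _ => hf⟩
      · exact ⟨0, fun h => absurd h hc⟩
    choose s' hs' using hex
    refine ⟨s', ∑ k, y' k, ⟨y', rfl, fun c hc => (hs' c hc).symm⟩, ?_, ?_⟩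
    · obtain ⟨k, _, hk⟩ : ∃ k ∈ (univ : Finset κ), 0 < y k := by
        by_contra! hcon
        have : ∑ k, y k = 0 := Finset.sum_eq_zero fun k hk => Nat.le_zero.1 (hcon k hk)
        omega
      exact Finset.sum_lt_sum (fun k _ => by simp only [y']; omega) ⟨k, mem_univ _, by simp only [y']; omega⟩
    · rintro v ⟨z, rfl, hz⟩
      refine ⟨∑ k, (2 * z k + δ k), ⟨fun k => 2 * z k + δ k, rfl, fun c hc => ?_⟩, ?_⟩
      · rw [hsum, hz c hc, hs' c hc, ← hsum, ← hy c hc]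
        exact Finset.sum_congr rfl fun k _ => by rw [hyd k]
      · rw [Finset.sum_add_distrib, ← Finset.mul_sum]
        have : ∑ k, δ k ≤ Fintype.card κ := by
          refine le_trans (Finset.sum_le_card_nsmul _ _ 1 fun k _ => by simp only [δ]; omega) (by simp)
        nlinarith [Nat.zero_le (Fintype.card κ * ∑ k, z k)]
  choose s hs using fun c => conv (b c) (hb c)
  obtain ⟨u, ⟨z, hz1, hz2⟩, hu⟩ := count_lemma P (Fintype.card κ + 2) hstep s (∑ k, y k)
    ⟨y, rfl, fun c hc => by rw [hs, hy c hc]⟩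
  refine ⟨z, fun c hc => by rw [hz2 c hc, hs], ?_⟩
  rw [hz1]
  simpa [dioB, hB] using hu

theorem dio1 {κ : Type*} [Fintype κ] [DecidableEq κ] (M : ℕ) (hM : 1 ≤ M) (o : κ) (x : κ → ℕ)
    (hx : ∀ k, 1 ≤ x k) (ho : x o = 1) :
    ∃ x' : κ → ℕ, (∀ k, 1 ≤ x' k) ∧ x' o = 1 ∧ (∀ k, x' k ≤ dioB (Fintype.card κ) M + 1) ∧
      ∀ c : κ → ℤ, (∀ k, |c k| ≤ M) → ∑ k, c k * x k = 0 → ∑ k, c k * x' k = 0 := by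
  classical
  let J : (κ → Fin (2 * M + 1)) → Prop := fun c =>
    ∑ k, ((c k : ℤ) - M) * x k = 0 ∨ ∀ k, ((c k : ℤ) - M) = if k = o then 1 else 0
  let y : κ → ℕ := fun k => x k - 1
  have hxy : ∀ k, (x k : ℤ) = y k + 1 := fun k => by have := hx k; simp only [y]; omega
  let b : (κ → Fin (2 * M + 1)) → ℤ := fun c =>
    if ∑ k, ((c k : ℤ) - M) * x k = 0 then - ∑ k, ((c k : ℤ) - M) else 0
  have conv : ∀ c : κ → ℤ, (∀ k, |c k| ≤ M) → ∃ f : κ → Fin (2 * M + 1), ∀ k, (f k : ℤ) - M = c k := by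
    intro c hc
    refine ⟨fun k => ⟨(c k + M).toNat, by have := abs_le.1 (hc k); omega⟩, fun k => ?_⟩
    have := abs_le.1 (hc k)
    simp; omega
  have hsplit : ∀ c : κ → ℤ, ∀ z : κ → ℕ, ∑ k, c k * ((z k : ℤ) + 1) = ∑ k, c k * z k + ∑ k, c k := by
    intro c z; rw [← Finset.sum_add_distrib]; exact Finset.sum_congr rfl fun k _ => by ring
  have hJo : ∀ c : κ → Fin (2 * M + 1), (∀ k, ((c k : ℤ) - M) = if k = o then 1 else 0) →
      ¬ ∑ k, ((c k : ℤ) - M) * x k = 0 := by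
    intro c hc; simp [hc, ho]
  obtain ⟨z, hz, hzb⟩ := dio0 M J y b (by
      intro c
      simp only [b]
      split_ifs
      · rw [abs_neg]
        refine le_trans (Finset.abs_sum_le_sum_abs _ _) ?_
        refine le_trans (Finset.sum_le_sum (g := fun _ => (M : ℤ)) fun k _ => ?_) ?_
        · have := (c k).2
          rw [abs_le]; omega
        · simp [mul_comm]
      · simp; positivity) (by
      rintro c (hc | hc)
      · have : b c = - ∑ k, ((c k : ℤ) - M) := if_pos hc
        rw [this]
        have h2 : ∑ k, ((c k : ℤ) - M) * ((y k : ℤ) + 1) = 0 := by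
          rw [← hc]; exact Finset.sum_congr rfl fun k _ => by rw [hxy k]
        rw [hsplit (fun k => (c k : ℤ) - M)] at h2
        linarith
      · have : b c = 0 := if_neg (hJo c hc)
        rw [this]; simp [hc, y, ho])
  refine ⟨fun k => z k + 1, fun k => by simp, ?_, ?_, ?_⟩
  · obtain ⟨f, hf⟩ := conv (fun k => if k = o then 1 else 0) (by
      intro k; split_ifs <;> simp; exact_mod_cast hM)
    have := hz f (Or.inr hf)
    have h0 : b f = 0 := if_neg (hJo f hf)
    rw [h0] at this
    simp [hf] at this
    simp [this]
  · intro k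
    have : z k ≤ ∑ k, z k := Finset.single_le_sum (f := z) (fun _ _ => Nat.zero_le _) (mem_univ k)
    simp only; omega
  · intro c hc h0
    obtain ⟨f, hf⟩ := conv c hc
    have e : ∑ k, ((f k : ℤ) - M) * x k = 0 := by simpa [hf] using h0
    have := hz f (Or.inl e)
    have hb : b f = - ∑ k, ((f k : ℤ) - M) := if_pos e
    rw [hb] at this
    simp only [hf] at this
    push_cast
    rw [hsplit]; linarith

end Mak

namespace Mak

section pw
variable {A κ : Type*}

def pv (x : κ → ℕ) (q : List (A × κ)) : List A := q.flatMap fun p => List.replicate (x p.2) p.1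

def fs (x : κ → ℕ) (f : List κ) : ℕ := (f.map x).sum

def fv (x : κ → ℕ) (q : List (A × List κ)) : List A := q.flatMap fun p => List.replicate (fs x p.2) p.1

def colCons [DecidableEq A] (p : A × κ) : List (A × List κ) → List (A × List κ)
  | [] => [(p.1, [p.2])]
  | c :: t => if p.1 = c.1 then (c.1, p.2 :: c.2) :: t else (p.1, [p.2]) :: c :: t

def col [DecidableEq A] : List (A × κ) → List (A × List κ)
  | [] => []
  | p :: q => colCons p (col q)

theorem pv_append (x : κ → ℕ) (q q' : List (A × κ)) : pv x (q ++ q') = pv x q ++ pv x q' := by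
  simp [pv]

theorem fv_col [DecidableEq A] (x : κ → ℕ) (q : List (A × κ)) : fv x (col q) = pv x q := by
  induction q with
  | nil => rfl
  | cons p q ih =>
    have : pv x (p :: q) = List.replicate (x p.2) p.1 ++ fv x (col q) := by rw [ih]; simp [pv]
    rw [this, col]
    cases h : col q with
    | nil => simp [colCons, fv, fs]
    | cons c t =>
      by_cases hc : p.1 = c.1
      · simp [colCons, fv, fs, hc, ← List.append_assoc]
      · simp [colCons, fv, fs, hc]

def Fgood (q : List (A × List κ)) : Prop :=
  q.IsChain (fun a b => a.1 ≠ b.1) ∧ ∀ p ∈ q, p.2 ≠ []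

theorem col_good [DecidableEq A] (q : List (A × κ)) : Fgood (col q) := by
  induction q with
  | nil => simp [col, Fgood]
  | cons p q ih =>
    rw [col]
    cases h : col q with
    | nil => simp [colCons, Fgood]
    | cons c t =>
      rw [h] at ih
      by_cases hc : p.1 = c.1
      · simp only [colCons, hc, if_true]
        refine ⟨?_, ?_⟩
        · have := ih.1
          cases t with
          | nil => simp
          | cons d t => simpa [List.isChain_cons_cons] using this
        · intro z hz
          rcases List.mem_cons.1 hz with rfl | hz
          · simp
          · exact ih.2 z (by simp [hz])
      · simp only [colCons, hc, if_false]
        refine ⟨by simpa [List.isChain_cons_cons, hc] using ih.1, ?_⟩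
        intro z hz
        rcases List.mem_cons.1 hz with rfl | hz
        · simp
        · exact ih.2 z hz

theorem col_len [DecidableEq A] (q : List (A × κ)) : ∀ p ∈ col q, p.2.length ≤ q.length := by
  induction q with
  | nil => simp [col]
  | cons p q ih =>
    rw [col]
    intro z hz
    cases h : col q with
    | nil => rw [h] at hz; simp [colCons] at hz; simp [hz]
    | cons c t =>
      rw [h] at hz ih
      by_cases hc : p.1 = c.1
      · simp only [colCons, hc, if_true] at hz
        rcases List.mem_cons.1 hz with rfl | hz
        · simpa using ih c (by simp)
        · have := ih z (by simp [hz]); simp; omega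
      · simp only [colCons, hc, if_false] at hz
        rcases List.mem_cons.1 hz with rfl | hz
        · simp
        · have := ih z hz; simp; omega

theorem fs_pos {x : κ → ℕ} (hx : ∀ k, 1 ≤ x k) {f : List κ} (hf : f ≠ []) : 1 ≤ fs x f := by
  cases f with
  | nil => exact absurd rfl hf
  | cons k f => have := hx k; simp [fs]; omega

theorem fv_head {x : κ → ℕ} (hx : ∀ k, 1 ≤ x k) {q : List (A × List κ)} (hq : Fgood q) :
    (fv x q).head? = q.head?.map Prod.fst := by
  cases q with
  | nil => rfl
  | cons p q =>
    have := fs_pos hx (hq.2 p (by simp))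
    obtain ⟨n, hn⟩ : ∃ n, fs x p.2 = n + 1 := ⟨fs x p.2 - 1, by omega⟩
    simp [fv, hn, List.replicate_succ]

theorem repl_aux {a : A} {n m : ℕ} {R S : List A} (hR : R.head? ≠ some a) (hS : S.head? ≠ some a)
    (h : List.replicate n a ++ R = List.replicate m a ++ S) : n = m ∧ R = S := by
  induction n generalizing m with
  | zero =>
    cases m with
    | zero => simpa using h
    | succ m => simp [List.replicate_succ] at h; simp [h] at hR
  | succ n ih =>
    cases m with
    | zero => simp [List.replicate_succ] at h; simp [← h] at hS
    | succ m =>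
      simp only [List.replicate_succ, List.cons_append, List.cons.injEq, true_and] at h
      have := ih h
      exact ⟨by omega, this.2⟩

theorem fgood_tail {p : A × List κ} {q : List (A × List κ)} (h : Fgood (p :: q)) :
    Fgood q ∧ q.head?.map Prod.fst ≠ some p.1 := by
  refine ⟨⟨h.1.tail, fun z hz => h.2 z (by simp [hz])⟩, ?_⟩
  cases q with
  | nil => simp
  | cons c t => have := h.1; simp [List.isChain_cons_cons] at this ⊢; exact fun e => this.1 e.symm

theorem fv_unique {x : κ → ℕ} (hx : ∀ k, 1 ≤ x k) (q q' : List (A × List κ)) (hq : Fgood q)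
    (hq' : Fgood q') (h : fv x q = fv x q') :
    List.Forall₂ (fun p p' => p.1 = p'.1 ∧ fs x p.2 = fs x p'.2) q q' := by
  induction q generalizing q' with
  | nil =>
    have := fv_head hx hq'
    rw [← h] at this
    cases q' with
    | nil => exact .nil
    | cons => simp [fv] at this
  | cons p q ih =>
    have h1 := fv_head hx hq
    have h2 := fv_head hx hq'
    rw [h] at h1
    cases q' with
    | nil => simp [fv] at h1
    | cons p' q' =>
      rw [h1] at h2
      simp at h2
      obtain ⟨g1, g2⟩ := fgood_tail hq
      obtain ⟨g1', g2'⟩ := fgood_tail hq'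
      have e1 : fv x (p :: q) = List.replicate (fs x p.2) p.1 ++ fv x q := by simp [fv]
      have e2 : fv x (p' :: q') = List.replicate (fs x p'.2) p.1 ++ fv x q' := by simp [fv, h2]
      rw [e1, e2] at h
      rw [← fv_head hx g1] at g2
      rw [← fv_head hx g1', ← h2] at g2'
      obtain ⟨r1, r2⟩ := repl_aux g2 g2' h
      exact .cons ⟨h2, r1⟩ (ih q' g1 g1' r2)

theorem pw [Fintype κ] [DecidableEq κ] [DecidableEq A] (M : ℕ) (x x' : κ → ℕ)
    (hx : ∀ k, 1 ≤ x k)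
    (hc : ∀ c : κ → ℤ, (∀ k, |c k| ≤ M) → ∑ k, c k * x k = 0 → ∑ k, c k * x' k = 0)
    (q q' : List (A × κ)) (hq : q.length ≤ M) (hq' : q'.length ≤ M) (h : pv x q = pv x q') :
    pv x' q = pv x' q' := by
  rw [← fv_col, ← fv_col] at h ⊢
  have hu := fv_unique hx _ _ (col_good q) (col_good q') h
  have l1 := col_len q
  have l2 := col_len q'
  generalize col q = F at *
  generalize col q' = F' at *
  clear h
  have hfs : ∀ (z : κ → ℕ) (f : List κ), (fs z f : ℤ) = ∑ k, (f.count k : ℤ) * z k := by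
    intro z f
    rw [fs, Finset.sum_list_map_count]
    push_cast
    rw [Finset.sum_subset (Finset.subset_univ _)]
    · simp
    · intro k _ hk
      simp at hk
      simp [List.count_eq_zero_of_not_mem hk]
  induction hu with
  | nil => rfl
  | @cons p p' F F' hp _ ih =>
    have ih := ih (fun z hz => l1 z (by simp [hz])) (fun z hz => l2 z (by simp [hz]))
    have key : fs x' p.2 = fs x' p'.2 := by
      have := hc (fun k => (p.2.count k : ℤ) - p'.2.count k) (by
        intro k
        have a1 := l1 p (by simp)
        have a2 := l2 p' (by simp)
        have a3 := List.count_le_length (a := k) (l := p.2)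
        have a4 := List.count_le_length (a := k) (l := p'.2)
        rw [abs_le]; omega) (by
        simp only [sub_mul, Finset.sum_sub_distrib]
        rw [← hfs, ← hfs]; simp [hp.2])
      simp only [sub_mul, Finset.sum_sub_distrib] at this
      rw [← hfs, ← hfs] at this
      omega
    have e1 : fv x' (p :: F) = List.replicate (fs x' p.2) p.1 ++ fv x' F := by simp [fv]
    have e2 : fv x' (p' :: F') = List.replicate (fs x' p'.2) p'.1 ++ fv x' F' := by simp [fv]
    rw [e1, e2, ih, key, hp.1]
end pw
end Mak

namespace Mak
open FreeGroup (invRev)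

abbrev Gl (α : Type) := α × Bool
abbrev Dl (α : Type) := Gl α × Gl α × ℕ
abbrev Al (α : Type) := Dl α × Bool

def nv {β : Type} (g : β × Bool) : β × Bool := (g.1, !g.2)

@[simp] theorem nv_nv {β : Type} (g : β × Bool) : nv (nv g) = g := by simp [nv]
theorem nv_inj {β : Type} {g h : β × Bool} : nv g = nv h ↔ g = h :=
  ⟨fun e => by rw [← nv_nv g, e, nv_nv], fun e => by rw [e]⟩
theorem nv_ne {β : Type} (g : β × Bool) : nv g ≠ g := by
  intro h; have := congrArg Prod.snd h; simp [nv] at this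

theorem invRev_eq {β : Type} (w : List (β × Bool)) : invRev w = (w.map nv).reverse := rfl
theorem invRev_ne_nil {β : Type} {w : List (β × Bool)} (h : w ≠ []) : invRev w ≠ [] := by
  simpa [invRev_eq] using h

section
variable {α : Type}

def ft (a : Al α) : Gl α := if a.2 then a.1.1 else nv a.1.2.1
def lt (a : Al α) : Gl α := if a.2 then a.1.2.1 else nv a.1.1

theorem ft_nv (a : Al α) : ft (nv a) = nv (lt a) := by
  obtain ⟨d, _ | _⟩ := a <;> simp [ft, lt, nv]
theorem lt_nv (a : Al α) : lt (nv a) = nv (ft a) := by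
  obtain ⟨d, _ | _⟩ := a <;> simp [ft, lt, nv]

def Red (w : List (Al α)) : Prop := w.IsChain fun a b => ft b ≠ nv (lt a)

theorem Red.inv {w : List (Al α)} (h : Red w) : Red (invRev w) := by
  rw [Red, invRev_eq, List.isChain_reverse, List.isChain_map]
  refine List.IsChain.imp (fun a b hab => ?_) h
  rw [ft_nv, lt_nv, nv_nv]
  intro e; exact hab e.symm

theorem Red.infix {u w : List (Al α)} (h : Red w) (hu : u <:+: w) : Red u := List.IsChain.infix h hu

theorem Red.ne_inv {w : List (Al α)} (h : Red w) (hw : w ≠ []) : w ≠ invRev w := by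
  induction w using List.bidirectionalRec with
  | nil => exact absurd rfl hw
  | singleton a => simp [invRev_eq]; exact fun e => nv_ne a e.symm
  | cons_append a l b ih =>
    intro e
    simp only [invRev_eq, List.map_cons, List.map_append, List.map_nil, List.reverse_cons,
      List.reverse_append, List.reverse_nil, List.nil_append, List.cons_append, List.cons.injEq] at e
    obtain ⟨rfl, e⟩ := e
    have e := List.append_inj_left' e rfl
    rcases eq_or_ne l [] with rfl | hl
    · simp [Red, lt_nv] at h
    · exact ih (h.infix ⟨[nv b], [b], by simp⟩) hl e

variable [DecidableEq α]

def link (s : Dl α → Bool) (a b : Al α) : Bool := decide (a = b) || (a.2 == s a.1 && b.2 != s b.1)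

theorem link_inv (s : Dl α → Bool) (a b : Al α) : link s (nv b) (nv a) = link s a b := by
  have h1 : decide (nv b = nv a) = decide (a = b) := by rw [decide_eq_decide, nv_inj, eq_comm]
  have h2 : ((nv b).2 == s (nv b).1 && (nv a).2 != s (nv a).1) = (a.2 == s a.1 && b.2 != s b.1) := by
    simp only [nv]
    cases a.2 <;> cases b.2 <;> cases s a.1 <;> cases s b.1 <;> rfl
  rw [link, link, h1, h2]

def ch (s : Dl α → Bool) (w : List (Al α)) : List (List (Al α)) := w.splitBy (link s)

theorem ch_flatten (s : Dl α → Bool) (w : List (Al α)) : (ch s w).flatten = w :=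
  List.flatten_splitBy _ _

theorem ch_ne (s : Dl α → Bool) {w c : List (Al α)} (h : c ∈ ch s w) : c ≠ [] :=
  List.ne_nil_of_mem_splitBy h

theorem ch_infix (s : Dl α → Bool) {w c : List (Al α)} (h : c ∈ ch s w) : c <:+: w := by
  rw [← ch_flatten s w]; exact List.infix_of_mem_flatten h

theorem ch_append {s : Dl α → Bool} {u v : List (Al α)}
    (h : ∀ x ∈ u.getLast?, ∀ y ∈ v.head?, link s x y = false) : ch s (u ++ v) = ch s u ++ ch s v :=
  List.splitBy_append h

theorem ch_inv (s : Dl α → Bool) (w : List (Al α)) :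
    ch s (invRev w) = ((ch s w).map invRev).reverse := by
  rw [ch, List.splitBy_eq_iff]
  refine ⟨?_, ?_, ?_, ?_⟩
  · conv_lhs => rw [← ch_flatten s w]
    generalize ch s w = L
    induction L with
    | nil => rfl
    | cons c L ih => simp [FreeGroup.invRev_append, ih]
  · simp only [List.mem_reverse, List.mem_map, not_exists, not_and]
    intro c hc; exact invRev_ne_nil (ch_ne s hc)
  · intro m hm
    simp only [List.mem_reverse, List.mem_map] at hm
    obtain ⟨c, hc, rfl⟩ := hm
    rw [invRev_eq, List.isChain_reverse, List.isChain_map]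
    exact List.IsChain.imp (fun a b hab => by rw [link_inv]; exact hab) (List.isChain_of_mem_splitBy hc)
  · rw [List.isChain_reverse, List.isChain_map]
    refine List.IsChain.imp ?_ (List.isChain_getLast_head_splitBy (link s) w)
    rintro a b ⟨ha, hb, hab⟩
    refine ⟨invRev_ne_nil hb, invRev_ne_nil ha, ?_⟩
    simp only [invRev_eq, List.getLast_reverse, List.head_reverse, List.head_map, List.getLast_map]
    rw [link_inv]; exact hab

theorem ch_shape (s : Dl α → Bool) (c : List (Al α)) (hc : c ≠ [])
    (h : c.IsChain fun x y => link s x y) :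
    (∃ a i, c = List.replicate (i + 1) a) ∨
    (∃ a b i j, a.2 = s a.1 ∧ b.2 ≠ s b.1 ∧ c = List.replicate (i + 1) a ++ List.replicate (j + 1) b) := by
  induction c with
  | nil => exact absurd rfl hc
  | cons a c ih =>
    cases c with
    | nil => exact Or.inl ⟨a, 0, rfl⟩
    | cons b c =>
      rw [List.isChain_cons_cons] at h
      obtain ⟨h1, h2⟩ := h
      simp only [link, Bool.or_eq_true, decide_eq_true_eq, Bool.and_eq_true, beq_iff_eq, bne_iff_ne] at h1
      rcases ih (by simp) h2 with ⟨d, i, e⟩ | ⟨d, f, i, j, hd, hf, e⟩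
      · have hb : b = d := by simp [List.replicate_succ] at e; exact e.1
        rcases h1 with rfl | h1
        · exact Or.inl ⟨a, i + 1, by rw [e, ← hb]; rfl⟩
        · exact Or.inr ⟨a, d, 0, i, h1.1, by rw [← hb]; exact h1.2, by rw [e]; rfl⟩
      · have hb : b = d := by simp [List.replicate_succ] at e; exact e.1
        rcases h1 with rfl | h1
        · exact Or.inr ⟨d, f, i + 1, j, hd, hf, by rw [e, hb]; rfl⟩
        · exact absurd hd (by rw [← hb]; exact h1.2)

theorem ch_shape' (s : Dl α → Bool) {w c : List (Al α)} (h : c ∈ ch s w) :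
    ∃ l : List (Al α × ℕ), l ≠ [] ∧ l.length ≤ 2 ∧ (∀ p ∈ l, 1 ≤ p.2) ∧
      c = l.flatMap fun p => List.replicate p.2 p.1 := by
  rcases ch_shape s c (ch_ne s h) (List.isChain_of_mem_splitBy h) with ⟨a, i, e⟩ | ⟨a, b, i, j, -, -, e⟩
  · exact ⟨[(a, i + 1)], by simp, by simp, by simp, by simp [e]⟩
  · exact ⟨[(a, i + 1), (b, j + 1)], by simp, by simp, by simp, by simp [e]⟩

theorem ch_single (s : Dl α → Bool) (a : Al α) : ch s [a] = [ [a] ] := rfl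

theorem ch_len_cons (s : Dl α → Bool) (a b : Al α) (w : List (Al α)) :
    (ch s (a :: b :: w)).length = (if link s a b then 0 else 1) + (ch s (b :: w)).length := by
  by_cases h : link s a b
  · rw [if_pos h]
    obtain ⟨c, cs, e⟩ : ∃ c cs, ch s (b :: w) = c :: cs :=
      List.exists_cons_of_ne_nil (by rw [ch]; simp [List.splitBy_eq_nil])
    have hf := ch_flatten s (b :: w)
    obtain ⟨c', rfl⟩ : ∃ c', c = b :: c' := by
      have : c ≠ [] := ch_ne s (w := b :: w) (by rw [e]; simp)
      cases c with
      | nil => exact absurd rfl this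
      | cons z c' => rw [e] at hf; simp at hf; exact ⟨c', by rw [hf.1]⟩
    have : ch s (a :: b :: w) = (a :: b :: c') :: cs := by
      rw [ch, List.splitBy_eq_iff]
      obtain ⟨h1, h2, h3, h4⟩ := List.splitBy_eq_iff.1 e
      refine ⟨by simp [h1], ?_, ?_, ?_⟩
      · simp at h2 ⊢; exact h2
      · intro m hm
        rcases List.mem_cons.1 hm with rfl | hm
        · rw [List.isChain_cons_cons]; exact ⟨h, h3 _ (by simp)⟩
        · exact h3 _ (by simp [hm])
      · cases cs with
        | nil => simp
        | cons d cs =>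
          rw [List.isChain_cons_cons] at h4 ⊢
          obtain ⟨⟨q1, q2, q3⟩, q4⟩ := h4
          exact ⟨⟨by simp, q2, by simpa using q3⟩, q4⟩
    rw [this, e]; simp
  · rw [if_neg h]
    have : ch s ([a] ++ (b :: w)) = ch s [a] ++ ch s (b :: w) := ch_append (by simpa using h)
    rw [List.singleton_append] at this
    rw [this, ch_single]; simp [add_comm]

theorem ch_len_cons_le (s : Dl α → Bool) (a : Al α) (w : List (Al α)) :
    (ch s (a :: w)).length ≤ 1 + (ch s w).length := by
  cases w with
  | nil => simp [ch_single]
  | cons b w => rw [ch_len_cons]; split_ifs <;> omega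

theorem ch_len_append (s : Dl α → Bool) (u v : List (Al α)) :
    (ch s (u ++ v)).length ≤ (ch s u).length + (ch s v).length := by
  induction u with
  | nil => simp
  | cons a u ih =>
    cases u with
    | nil => simpa [ch_single] using ch_len_cons_le s a v
    | cons b u =>
      rw [List.cons_append, List.cons_append, ch_len_cons, ch_len_cons]
      rw [List.cons_append] at ih
      omega

theorem ch_len_snoc (s : Dl α → Bool) (u : List (Al α)) (a b : Al α) (h : a ∈ u.getLast?)
    (hl : link s a b) : (ch s (u ++ [b])).length ≤ (ch s u).length := by
  induction u with
  | nil => simp at h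
  | cons c u ih =>
    cases u with
    | nil =>
      simp at h; subst h
      rw [List.singleton_append, ch_len_cons, if_pos hl, ch_single, ch_single]; simp
    | cons d u =>
      rw [List.cons_append, List.cons_append, ch_len_cons, ch_len_cons]
      have := ih (by simpa [List.getLast?_cons_cons] using h)
      rw [List.cons_append] at this
      omega

variable [Encodable α] [Inhabited α]

def ftL (c : List (Al α)) : Gl α := ft (c.headD default)
def ltL (c : List (Al α)) : Gl α := lt (c.getLastD default)

theorem ftL_inv {c : List (Al α)} (h : c ≠ []) : ftL (invRev c) = nv (ltL c) := by
  rcases List.eq_nil_or_concat c with rfl | ⟨l, a, rfl⟩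
  · exact absurd rfl h
  · simp [ftL, ltL, invRev_eq, ft_nv]

theorem ltL_inv {c : List (Al α)} (h : c ≠ []) : ltL (invRev c) = nv (ftL c) := by
  cases c with
  | nil => exact absurd rfl h
  | cons a c => simp [ftL, ltL, invRev_eq, lt_nv]

def ori (c : List (Al α)) : Bool := decide (Encodable.encode c < Encodable.encode (invRev c))

theorem ori_inv {c : List (Al α)} (h : Red c) (hc : c ≠ []) : ori (invRev c) = !ori c := by
  have : Encodable.encode c ≠ Encodable.encode (invRev c) := fun e =>
    h.ne_inv hc (Encodable.encode_injective e)
  simp only [ori, FreeGroup.invRev_invRev]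
  rcases lt_or_gt_of_ne this with h | h <;> simp [h, h.le]

def enc (g : List (Al α) → ℕ) (c : List (Al α)) : Al α :=
  if ori c then ((ftL c, ltL c, g c), true)
  else ((ftL (invRev c), ltL (invRev c), g (invRev c)), false)

theorem enc_inv (g : List (Al α) → ℕ) {c : List (Al α)} (h : Red c) (hc : c ≠ []) :
    enc g (invRev c) = nv (enc g c) := by
  rw [enc, enc, ori_inv h hc]
  cases ori c <;> simp [nv]

theorem ft_enc (g : List (Al α) → ℕ) {c : List (Al α)} (hc : c ≠ []) : ft (enc g c) = ftL c := by
  rw [enc]; split_ifs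
  · simp [ft]
  · simp [ft, ltL_inv hc]

theorem lt_enc (g : List (Al α) → ℕ) {c : List (Al α)} (hc : c ≠ []) : lt (enc g c) = ltL c := by
  rw [enc]; split_ifs
  · simp [lt]
  · simp [lt, ftL_inv hc]

def cmp (s : Dl α → Bool) (g : List (Al α) → ℕ) (w : List (Al α)) : List (Al α) := (ch s w).map (enc g)

theorem Red.cmp {s : Dl α → Bool} {g : List (Al α) → ℕ} {w : List (Al α)} (h : Red w) :
    Red (cmp s g w) := by
  have h0 : [] ∉ ch s w := fun h => ch_ne s h rfl
  rw [← ch_flatten s w, Red, List.isChain_flatten h0] at h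
  rw [Mak.cmp, Red, List.isChain_map]
  have h1 := h.2
  have : ∀ c ∈ ch s w, c ≠ [] := fun c hc => ch_ne s hc
  generalize ch s w = L at h1 this
  clear h h0
  induction L with
  | nil => simp
  | cons c L ih =>
    cases L with
    | nil => simp
    | cons d L =>
      rw [List.isChain_cons_cons] at h1 ⊢
      refine ⟨?_, ih h1.2 fun c hc => this c (by simp [hc])⟩
      have hc := this c (by simp)
      have hd := this d (by simp)
      rw [ft_enc g hd, lt_enc g hc]
      have := h1.1
      cases d with
      | nil => exact absurd rfl hd
      | cons y d =>
        rcases List.eq_nil_or_concat c with rfl | ⟨l, x, rfl⟩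
        · exact absurd rfl hc
        · simpa [ftL, ltL] using this

theorem cmp_inv {s : Dl α → Bool} {g : List (Al α) → ℕ} {w : List (Al α)} (h : Red w) :
    cmp s g (invRev w) = invRev (cmp s g w) := by
  rw [cmp, ch_inv, cmp, invRev_eq, List.map_reverse, List.map_map, List.map_map]
  congr 1
  refine List.map_congr_left fun c hc => ?_
  exact enc_inv g (h.infix (ch_infix s hc)) (ch_ne s hc)

end
end Mak

namespace Mak
open FreeGroup (invRev)

section
variable {α V κ : Type}

abbrev Sy (α V : Type) := Al α ⊕ (V × Bool)

def sb {β : Type} (σ : V → List (β × Bool)) (p : V × Bool) : List (β × Bool) :=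
  if p.2 then σ p.1 else invRev (σ p.1)

def eval (σ : V → List (Al α)) (U : List (Sy α V)) : List (Al α) :=
  U.flatMap (Sum.elim (fun a => [a]) (sb σ))

@[simp] theorem eval_nil (σ : V → List (Al α)) : eval σ ([] : List (Sy α V)) = [] := rfl
@[simp] theorem eval_inl (σ : V → List (Al α)) (a : Al α) (U : List (Sy α V)) :
    eval σ (Sum.inl a :: U) = a :: eval σ U := rfl
@[simp] theorem eval_inr (σ : V → List (Al α)) (p : V × Bool) (U : List (Sy α V)) :
    eval σ (Sum.inr p :: U) = sb σ p ++ eval σ U := rfl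
theorem eval_append (σ : V → List (Al α)) (U W : List (Sy α V)) :
    eval σ (U ++ W) = eval σ U ++ eval σ W := by simp [eval]
theorem eval_map_inl (σ : V → List (Al α)) (w : List (Al α)) :
    eval σ (w.map Sum.inl : List (Sy α V)) = w := by
  induction w with
  | nil => rfl
  | cons a w ih => simp [ih]

def nlet (U : List (Sy α V)) : ℕ := U.countP Sum.isLeft
def nvar (U : List (Sy α V)) : ℕ := U.countP Sum.isRight

def sinv (q : List (Al α × κ)) : List (Al α × κ) := (q.map fun p => (nv p.1, p.2)).reverse

theorem invRev_replicate {β : Type} (n : ℕ) (a : β × Bool) :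
    invRev (List.replicate n a) = List.replicate n (nv a) := by simp [invRev_eq]

theorem pv_sinv (x : κ → ℕ) (q : List (Al α × κ)) : pv x (sinv q) = invRev (pv x q) := by
  induction q with
  | nil => rfl
  | cons p q ih =>
    have h1 : sinv (p :: q) = sinv q ++ [(nv p.1, p.2)] := by simp [sinv]
    have h2 : pv x (p :: q) = List.replicate (x p.2) p.1 ++ pv x q := by simp [pv]
    rw [h1, h2, pv_append, ih, FreeGroup.invRev_append, invRev_replicate]; simp [pv]

def sg (b : Bool) (q : List (Al α × κ)) : List (Al α × κ) := if b then q else sinv q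
def wg {β : Type} (b : Bool) (w : List (β × Bool)) : List (β × Bool) := if b then w else invRev w

theorem pv_sg (x : κ → ℕ) (b : Bool) (q : List (Al α × κ)) : pv x (sg b q) = wg b (pv x q) := by
  cases b <;> simp [sg, wg, pv_sinv]

def go (o : κ) (keep : V → Bool) (p q : V → List (Al α × κ)) :
    List (Al α × κ) → List (Sy α V) → List (List (Al α × κ) ⊕ (V × Bool))
  | acc, [] => [Sum.inl acc]
  | acc, Sum.inl a :: U => go o keep p q (acc ++ [(a, o)]) U
  | acc, Sum.inr v :: U =>
    if keep v.1 then
      Sum.inl (acc ++ sg v.2 (if v.2 then p v.1 else q v.1)) :: Sum.inr v ::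
        go o keep p q (sg v.2 (if v.2 then q v.1 else p v.1)) U
    else go o keep p q (acc ++ sg v.2 (p v.1)) U

def flat (f : List (Al α × κ) → List (Al α)) (L : List (List (Al α × κ) ⊕ (V × Bool))) :
    List (Sy α V) :=
  L.flatMap (Sum.elim (fun seg => (f seg).map Sum.inl) (fun v => [Sum.inr v]))

variable [DecidableEq α]

def NL (s : Dl α → Bool) (u v : List (Al α)) : Prop :=
  ∀ x ∈ u.getLast?, ∀ y ∈ v.head?, link s x y = false

theorem NL.inv {s : Dl α → Bool} {u v : List (Al α)} (h : NL s u v) :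
    NL s (invRev v) (invRev u) := by
  intro x hx y hy
  simp only [invRev_eq, List.getLast?_reverse, List.head?_reverse, List.head?_map,
    List.getLast?_map, Option.mem_def, Option.map_eq_some_iff] at hx hy
  obtain ⟨a, ha, rfl⟩ := hx
  obtain ⟨b, hb, rfl⟩ := hy
  rw [link_inv]; exact h b hb a ha

theorem NL.left {s : Dl α → Bool} {t u v : List (Al α)} (h : NL s u v) (hu : u ≠ []) :
    NL s (t ++ u) v := by
  intro x hx
  rw [List.getLast?_append_of_ne_nil _ hu] at hx
  exact h x hx
theorem NL.right {s : Dl α → Bool} {t u v : List (Al α)} (h : NL s u v) (hv : v ≠ []) :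
    NL s u (v ++ t) := by
  intro x hx y hy
  rw [List.head?_append_of_ne_nil _ hv] at hy
  exact h x hx y hy

structure Pop (s : Dl α → Bool) (σ mid : V → List (Al α)) (keep : V → Bool)
    (P Q : V → List (Al α)) : Prop where
  h1 : ∀ x, keep x = false → σ x = P x
  h2 : ∀ x, keep x = true → σ x = P x ++ mid x ++ Q x
  hP : ∀ x, keep x = true → P x ≠ []
  hQ : ∀ x, keep x = true → Q x ≠ []
  n1 : ∀ x, keep x = true → NL s (P x) (mid x ++ Q x)
  n2 : ∀ x, keep x = true → NL s (mid x) (Q x)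
  n3 : ∀ x, keep x = true → NL s (P x ++ mid x) (Q x)
  n4 : ∀ x, keep x = true → NL s (P x) (mid x)
  hm : ∀ x, keep x = false → mid x = []
  cP : ∀ x, (ch s (P x)).length ≤ 1
  cQ : ∀ x, (ch s (Q x)).length ≤ 1

theorem ch_wg (s : Dl α → Bool) (b : Bool) (w : List (Al α)) :
    (ch s (wg b w)).length = (ch s w).length := by
  cases b <;> simp [wg, ch_inv]

theorem wg_ne {β : Type} {b : Bool} {w : List (β × Bool)} (h : w ≠ []) : wg b w ≠ [] := by
  cases b
  · exact invRev_ne_nil h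
  · exact h

theorem Pop.signed {s : Dl α → Bool} {σ mid : V → List (Al α)} {keep : V → Bool}
    {P Q : V → List (Al α)} (h : Pop s σ mid keep P Q) (v : V × Bool) (hk : keep v.1 = true) :
    let A := wg v.2 (if v.2 then P v.1 else Q v.1)
    let B := wg v.2 (if v.2 then Q v.1 else P v.1)
    let m := wg v.2 (mid v.1)
    sb σ v = A ++ m ++ B ∧ A ≠ [] ∧ B ≠ [] ∧ NL s A (m ++ B) ∧ NL s m B := by
  obtain ⟨x, b⟩ := v
  cases b
  · refine ⟨?_, invRev_ne_nil (h.hQ x hk), invRev_ne_nil (h.hP x hk), ?_, ?_⟩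
    · have := h.h2 x hk
      simp [sb, wg, this, FreeGroup.invRev_append]
    · have := (h.n3 x hk).inv
      simpa [wg, FreeGroup.invRev_append] using this
    · exact (h.n4 x hk).inv
  · exact ⟨by simpa [sb, wg] using h.h2 x hk, h.hP x hk, h.hQ x hk, h.n1 x hk, h.n2 x hk⟩

variable [Encodable α] [Inhabited α]

theorem cmp_append {s : Dl α → Bool} {g : List (Al α) → ℕ} {u v : List (Al α)} (h : NL s u v) :
    cmp s g (u ++ v) = cmp s g u ++ cmp s g v := by
  rw [cmp, ch_append h, List.map_append]; rfl

theorem eval_go (o : κ) (s : Dl α → Bool) (g : List (Al α) → ℕ) {σ mid : V → List (Al α)}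
    {keep : V → Bool} {p q : V → List (Al α × κ)} (X : κ → ℕ) (hX : X o = 1)
    (h : Pop s σ mid keep (fun x => pv X (p x)) (fun x => pv X (q x)))
    (U : List (Sy α V)) (acc : List (Al α × κ)) (hr : Red (pv X acc ++ eval σ U)) :
    eval (fun x => cmp s g (mid x)) (flat (fun t => cmp s g (pv X t)) (go o keep p q acc U))
      = cmp s g (pv X acc ++ eval σ U) := by
  induction U generalizing acc with
  | nil => simp [go, flat, eval_map_inl]
  | cons u U ih =>
    rcases u with a | v
    · have e : pv X (acc ++ [(a, o)]) = pv X acc ++ [a] := by rw [pv_append]; simp [pv, hX]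
      rw [go, ih _ (by rw [e]; simpa using hr), e]; simp
    · by_cases hk : keep v.1 = true
      · obtain ⟨h1, hA, hB, hn1, hn2⟩ := h.signed v hk
        rw [go, if_pos hk]
        have eA : pv X (sg v.2 (if v.2 then p v.1 else q v.1)) =
            wg v.2 (if v.2 then pv X (p v.1) else pv X (q v.1)) := by
          rw [pv_sg]; split_ifs <;> rfl
        have eB : pv X (sg v.2 (if v.2 then q v.1 else p v.1)) =
            wg v.2 (if v.2 then pv X (q v.1) else pv X (p v.1)) := by
          rw [pv_sg]; split_ifs <;> rfl
        have hr' := hr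
        rw [eval_inr, h1, ← eA, ← eB] at hr'
        rw [← eA] at hA hn1
        rw [← eB] at hB hn1 hn2
        rw [← eA, ← eB] at h1
        set A := sg v.2 (if v.2 then p v.1 else q v.1)
        set B := sg v.2 (if v.2 then q v.1 else p v.1)
        have ih' := ih B (hr'.infix ⟨pv X acc ++ pv X A ++ wg v.2 (mid v.1), [], by simp⟩)
        have e1 : flat (fun t => cmp s g (pv X t)) (Sum.inl (acc ++ A) :: Sum.inr v :: go o keep p q B U)
          = (cmp s g (pv X (acc ++ A))).map Sum.inl ++ (Sum.inr v ::
            flat (fun t => cmp s g (pv X t)) (go o keep p q B U)) := rfl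
        have e2 : sb (fun x => cmp s g (mid x)) v = cmp s g (wg v.2 (mid v.1)) := by
          have hrm : Red (wg v.2 (mid v.1)) :=
            hr'.infix ⟨pv X acc ++ pv X A, pv X B ++ eval σ U, by simp⟩
          obtain ⟨x, b⟩ := v
          cases b
          · have := hrm.inv
            simp only [wg, Bool.false_eq_true, if_false, FreeGroup.invRev_invRev] at this
            simp [sb, wg, cmp_inv this]
          · rfl
        rw [e1, eval_append, eval_map_inl, eval_inr, ih', e2, eval_inr, h1, pv_append]
        have s1 : pv X acc ++ (pv X A ++ wg v.2 (mid v.1) ++ pv X B ++ eval σ U)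
          = (pv X acc ++ pv X A) ++ (wg v.2 (mid v.1) ++ (pv X B ++ eval σ U)) := by simp
        have k1 : NL s (pv X acc ++ pv X A) (wg v.2 (mid v.1) ++ (pv X B ++ eval σ U)) := by
          have := (hn1.right (t := eval σ U) (by simp [hB])).left (t := pv X acc) hA
          simpa using this
        have k2 : NL s (wg v.2 (mid v.1)) (pv X B ++ eval σ U) := hn2.right hB
        rw [s1, cmp_append k1, cmp_append k2]
      · have hk' : keep v.1 = false := by simpa using hk
        rw [go, if_neg hk]
        have e : pv X (acc ++ sg v.2 (p v.1)) = pv X acc ++ sb σ v := by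
          rw [pv_append, pv_sg]
          obtain ⟨x, b⟩ := v
          have := h.h1 x hk'
          cases b <;> simp [wg, sb, this]
        rw [ih _ (by rw [e]; simpa using hr), e]; simp

theorem lift_go (o : κ) (s : Dl α → Bool) (g : List (Al α) → ℕ)
    {keep : V → Bool} {p q : V → List (Al α × κ)} (X X' : κ → ℕ) (hX : X' o = 1)
    (φ : Al α → List (Al α)) (hφ : ∀ a, φ (nv a) = invRev (φ a)) (τ : V → List (Al α))
    (U : List (Sy α V)) (acc : List (Al α × κ))
    (h : ∀ t, Sum.inl t ∈ go o keep p q acc U → (cmp s g (pv X t)).flatMap φ = pv X' t) :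
    (eval τ (flat (fun t => cmp s g (pv X t)) (go o keep p q acc U))).flatMap φ
      = pv X' acc ++ eval (fun x => if keep x then pv X' (p x) ++ (τ x).flatMap φ ++ pv X' (q x)
          else pv X' (p x)) U := by
  have hinv : ∀ w : List (Al α), (invRev w).flatMap φ = invRev (w.flatMap φ) := by
    intro w
    induction w with
    | nil => rfl
    | cons a w ih =>
      rw [FreeGroup.invRev_cons, List.flatMap_append, ih, List.flatMap_cons, FreeGroup.invRev_append]
      congr 1
      simpa [invRev_eq] using hφ a
  induction U generalizing acc with
  | nil =>
    simp only [go, flat, List.flatMap_cons, Sum.elim_inl, List.flatMap_nil, List.append_nil, eval_nil]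
    rw [eval_map_inl]; exact h acc (by simp [go])
  | cons u U ih =>
    rcases u with a | v
    · rw [go, ih _ (by rw [go] at h; exact h), pv_append]; simp [pv, hX]
    · by_cases hk : keep v.1 = true
      · rw [go, if_pos hk] at h ⊢
        have ih' := ih (sg v.2 (if v.2 then q v.1 else p v.1))
          (fun t ht => h t (List.mem_cons_of_mem _ (List.mem_cons_of_mem _ ht)))
        have e1 := h (acc ++ sg v.2 (if v.2 then p v.1 else q v.1)) (by simp)
        simp only [flat, List.flatMap_cons, Sum.elim_inl, Sum.elim_inr] at ih' ⊢
        rw [eval_append, eval_map_inl, List.flatMap_append, e1, List.singleton_append, eval_inr,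
          List.flatMap_append, ih', eval_inr, pv_append]
        obtain ⟨x, b⟩ := v
        simp only at hk
        cases b <;> simp [sb, hk, sg, pv_sinv, hinv, FreeGroup.invRev_append]
      · have hk' : keep v.1 = false := by simpa using hk
        rw [go, if_neg hk] at h ⊢
        rw [ih _ h, eval_inr, pv_append, pv_sg]
        obtain ⟨x, b⟩ := v
        simp only at hk'
        cases b <;> simp [wg, sb, hk']

def Lc (s : Dl α → Bool) : Option (Al α) → List (Sy α V) → ℕ
  | _, [] => 0
  | z, Sum.inl a :: U => (if z.any (fun y => link s y a) then 0 else 1) + Lc s (some a) U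
  | _, Sum.inr _ :: U => 2 + Lc s none U

theorem nlet_append (U W : List (Sy α V)) : nlet (U ++ W) = nlet U + nlet W := by simp [nlet]
theorem nlet_map_inl (w : List (Al α)) : nlet (w.map Sum.inl : List (Sy α V)) = w.length := by
  induction w with
  | nil => rfl
  | cons a w ih => rw [nlet] at ih ⊢; rw [List.map_cons, List.countP_cons, ih]; simp

theorem nlet_go (o : κ) (s : Dl α → Bool) (g : List (Al α) → ℕ) {σ mid : V → List (Al α)}
    {keep : V → Bool} {p q : V → List (Al α × κ)} (X : κ → ℕ) (hX : X o = 1)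
    (h : Pop s σ mid keep (fun x => pv X (p x)) (fun x => pv X (q x)))
    (U : List (Sy α V)) (acc : List (Al α × κ)) (z : Option (Al α))
    (hz : ∀ y ∈ z, y ∈ (pv X acc).getLast?) :
    nlet (flat (fun t => cmp s g (pv X t)) (go o keep p q acc U)) ≤
      (ch s (pv X acc)).length + Lc s z U := by
  induction U generalizing acc z with
  | nil =>
    have : flat (fun t => cmp s g (pv X t)) (go o keep p q acc ([] : List (Sy α V)))
      = (cmp s g (pv X acc)).map Sum.inl := by simp [go, flat]
    rw [this, nlet_map_inl, cmp, List.length_map]; simp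
  | cons u U ih =>
    rcases u with a | v
    · have e : pv X (acc ++ [(a, o)]) = pv X acc ++ [a] := by rw [pv_append]; simp [pv, hX]
      rw [go, Lc]
      have := ih (acc ++ [(a, o)]) (some a) (by rw [e]; simp)
      rw [e] at this
      split_ifs with hl
      · rw [Option.any_eq_true] at hl
        obtain ⟨y, hy, hl⟩ := hl
        have := ch_len_snoc s _ y a (hz y hy) hl
        omega
      · have h3 := ch_len_append s (pv X acc) [a]
        rw [ch_single] at h3; simp at h3
        omega
    · rw [go, Lc]
      by_cases hk : keep v.1 = true
      · rw [if_pos hk]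
        have ih' := ih (sg v.2 (if v.2 then q v.1 else p v.1)) none (by simp)
        rw [pv_sg, ch_wg] at ih'
        have b1 : (ch s (pv X (if v.2 then q v.1 else p v.1))).length ≤ 1 := by
          split_ifs
          · exact h.cQ v.1
          · exact h.cP v.1
        have h3 := ch_len_append s (pv X acc) (pv X (sg v.2 (if v.2 then p v.1 else q v.1)))
        rw [pv_sg, ch_wg, ← pv_sg, ← pv_append] at h3
        have b2 : (ch s (pv X (if v.2 then p v.1 else q v.1))).length ≤ 1 := by
          split_ifs
          · exact h.cP v.1
          · exact h.cQ v.1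
        have e1 : ∀ (A : List (Al α × κ)) L, flat (fun t => cmp s g (pv X t)) (Sum.inl A :: Sum.inr v :: L)
          = (cmp s g (pv X A)).map Sum.inl ++ (Sum.inr v ::
            flat (fun t => cmp s g (pv X t)) L) := fun _ _ => rfl
        rw [e1, nlet_append, nlet_map_inl]
        have e2 : ∀ L : List (Sy α V), nlet (Sum.inr v :: L) = nlet L := fun L => by simp [nlet]
        rw [e2, cmp, List.length_map]
        omega
      · rw [if_neg hk]
        have ih' := ih (acc ++ sg v.2 (p v.1)) none (by simp)
        have h3 := ch_len_append s (pv X acc) (pv X (sg v.2 (p v.1)))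
        rw [← pv_append, pv_sg, ch_wg] at h3
        have := h.cP v.1
        omega

theorem nvar_go (o : κ) (f : List (Al α × κ) → List (Al α)) {keep : V → Bool}
    {p q : V → List (Al α × κ)} (U : List (Sy α V)) (acc : List (Al α × κ)) :
    nvar (flat f (go o keep p q acc U)) ≤ nvar U := by
  have e0 : ∀ w : List (Al α), nvar (w.map Sum.inl : List (Sy α V)) = 0 := by
    intro w; simp [nvar]
  have e4 : ∀ U W : List (Sy α V), nvar (U ++ W) = nvar U + nvar W := fun U W => by simp [nvar]
  have e3 : ∀ (v : V × Bool) (L : List (Sy α V)), nvar (Sum.inr v :: L) = nvar L + 1 :=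
    fun v L => by rw [nvar, List.countP_cons]; simp [nvar]
  induction U generalizing acc with
  | nil => simp [go, flat, e0]
  | cons u U ih =>
    rcases u with a | v
    · rw [go]; refine le_trans (ih _) ?_; simp [nvar]
    · rw [go, e3]
      by_cases hk : keep v.1 = true
      · rw [if_pos hk]
        have e1 : ∀ (A : List (Al α × κ)) L, flat f (Sum.inl A :: Sum.inr v :: L)
          = (f A).map Sum.inl ++ (Sum.inr v :: flat f L) := fun _ _ => rfl
        rw [e1, e4, e0, e3]
        have := ih (sg v.2 (if v.2 then q v.1 else p v.1))
        omega
      · rw [if_neg hk]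
        have := ih (acc ++ sg v.2 (p v.1)); omega

theorem seg_len (o : κ) {keep : V → Bool} {p q : V → List (Al α × κ)}
    (hp : ∀ x, (p x).length ≤ 2) (hq : ∀ x, (q x).length ≤ 2) (U : List (Sy α V))
    (acc : List (Al α × κ)) : ∀ t, Sum.inl t ∈ go o keep p q acc U →
      t.length ≤ acc.length + 2 * U.length + 2 := by
  have hs : ∀ b (t : List (Al α × κ)), (sg b t).length = t.length := fun b t => by
    cases b <;> simp [sg, sinv]
  induction U generalizing acc with
  | nil => intro t ht; simp [go] at ht; subst ht; simp
  | cons u U ih =>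
    intro t ht
    rcases u with a | v
    · rw [go] at ht
      have := ih _ t ht
      simp at this ⊢; omega
    · rw [go] at ht
      have b1 := hp v.1
      have b2 := hq v.1
      split_ifs at ht with hk hb hb
      · simp only [List.mem_cons, Sum.inl.injEq, reduceCtorEq, false_or] at ht
        rcases ht with rfl | ht
        · simp [hs]; omega
        · have := ih _ t ht
          rw [hs] at this; simp; omega
      · simp only [List.mem_cons, Sum.inl.injEq, reduceCtorEq, false_or] at ht
        rcases ht with rfl | ht
        · simp [hs]; omega
        · have := ih _ t ht
          rw [hs] at this; simp; omega
      · have := ih _ t ht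
        simp [hs] at this ⊢; omega
end
end Mak

namespace Mak
open FreeGroup (invRev)

section
variable {α V κ : Type}

def prs : Option (Al α) → List (Sy α V) → List (Al α × Al α)
  | _, [] => []
  | z, Sum.inl a :: U => (z.map fun y => (y, a)).toList ++ prs (some a) U
  | _, Sum.inr _ :: U => prs none U

theorem nlet_inl (a : Al α) (U : List (Sy α V)) : nlet (Sum.inl a :: U) = nlet U + 1 := by
  rw [nlet, List.countP_cons]; simp [nlet]
theorem nlet_inr (a : V × Bool) (U : List (Sy α V)) : nlet (Sum.inr a :: U) = nlet U := by
  rw [nlet, List.countP_cons]; simp [nlet]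
theorem nvar_inl (a : Al α) (U : List (Sy α V)) : nvar (Sum.inl a :: U) = nvar U := by
  rw [nvar, List.countP_cons]; simp [nvar]
theorem nvar_inr (a : V × Bool) (U : List (Sy α V)) : nvar (Sum.inr a :: U) = nvar U + 1 := by
  rw [nvar, List.countP_cons]; simp [nvar]
theorem len_nn (U : List (Sy α V)) : U.length = nlet U + nvar U := by
  induction U with
  | nil => rfl
  | cons u U ih =>
    rcases u with a | a
    · rw [nlet_inl, nvar_inl, List.length_cons, ih]; omega
    · rw [nlet_inr, nvar_inr, List.length_cons, ih]; omega

theorem prs_len (U : List (Sy α V)) (z : Option (Al α)) :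
    nlet U ≤ (prs z U).length + nvar U + (if z.isNone then 1 else 0) := by
  induction U generalizing z with
  | nil => simp [nlet]
  | cons u U ih =>
    rcases u with a | a
    · rw [nlet_inl, nvar_inl, prs]
      have := ih (some a)
      cases z <;> simp at this ⊢ <;> omega
    · rw [nlet_inr, nvar_inr, prs]
      have := ih none
      simp at this; omega

theorem prs_ne (σ : V → List (Al α)) (U : List (Sy α V)) (z : Option (Al α))
    (h : Red (z.toList ++ eval σ U)) : ∀ p ∈ prs z U, p.2 ≠ nv p.1 := by
  induction U generalizing z with
  | nil => simp [prs]
  | cons u U ih =>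
    rcases u with a | a
    · intro p hp
      rw [prs, List.mem_append] at hp
      rcases hp with hp | hp
      · cases z with
        | none => simp at hp
        | some y =>
          simp at hp; subst hp
          simp [Red] at h
          rintro e
          simp only at e
          exact h.1 (by rw [e, ft_nv])
      · exact ih (some a) (h.infix ⟨z.toList, [], by simp⟩) p hp
    · intro p hp
      rw [prs] at hp
      refine ih none (h.infix ⟨z.toList ++ sb σ a, [], by simp⟩) p hp

variable [DecidableEq α]

theorem Lc_prs (s : Dl α → Bool) (U : List (Sy α V)) (z : Option (Al α)) :
    Lc s z U + (prs z U).countP (fun p => link s p.1 p.2) = nlet U + 2 * nvar U := by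
  induction U generalizing z with
  | nil => simp [Lc, prs, nlet, nvar]
  | cons u U ih =>
    rcases u with a | a
    · rw [nlet_inl, nvar_inl, prs, Lc, List.countP_append]
      have := ih (some a)
      cases z with
      | none => simp at this ⊢; omega
      | some y =>
        by_cases h : link s y a <;> simp [h] at this ⊢ <;> omega
    · rw [nlet_inr, nvar_inr, prs, Lc]
      have := ih none
      omega

theorem avg1 {D : Type} [Fintype D] [DecidableEq D] (f : (D → Bool) → ℕ) (d1 d2 : D)
    (x y : Bool) (h : ∀ s, s d1 = x → s d2 = y → 1 ≤ f s) (hd : d1 ≠ d2) :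
    Fintype.card (D → Bool) ≤ 4 * ∑ s, f s := by
  let fl : D → (D → Bool) → (D → Bool) := fun d s => Function.update s d (!s d)
  have hfl : ∀ d, Function.Involutive (fl d) := by
    intro d s; ext e; by_cases he : e = d <;> simp [fl, Function.update_apply, he]
  have key : ∀ s, 1 ≤ f s + f (fl d1 s) + f (fl d2 s) + f (fl d2 (fl d1 s)) := by
    intro s
    by_cases h1 : s d1 = x <;> by_cases h2 : s d2 = y
    · have := h s h1 h2; omega
    · have := h (fl d2 s) (by simp [fl, hd, h1]) (by simp [fl]; cases y <;> simp_all); omega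
    · have := h (fl d1 s) (by simp [fl]; cases x <;> simp_all) (by simp [fl, hd.symm, h2]); omega
    · have := h (fl d2 (fl d1 s)) (by simp [fl, hd]; cases x <;> simp_all)
        (by simp [fl, hd.symm]; cases y <;> simp_all); omega
  have e : ∀ d (k : (D → Bool) → ℕ), ∑ s, k (fl d s) = ∑ s, k s := fun d k =>
    Equiv.sum_comp (hfl d).toPerm k
  calc Fintype.card (D → Bool) = ∑ s : D → Bool, 1 := by simp
    _ ≤ ∑ s, (f s + f (fl d1 s) + f (fl d2 s) + f (fl d2 (fl d1 s))) :=
        Finset.sum_le_sum fun s _ => key s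
    _ = 4 * ∑ s, f s := by
        rw [Finset.sum_add_distrib, Finset.sum_add_distrib, Finset.sum_add_distrib, e, e,
          e d1 (fun s => f (fl d2 s)), e]; ring

theorem avg (L : List (Al α × Al α)) (h : ∀ p ∈ L, p.2 ≠ nv p.1) :
    ∃ s : Dl α → Bool, L.length ≤ 4 * L.countP (fun p => link s p.1 p.2) := by
  classical
  let D : Finset (Dl α) := (L.flatMap fun p => [p.1.1, p.2.1]).toFinset
  have hD : ∀ p ∈ L, p.1.1 ∈ D ∧ p.2.1 ∈ D := by
    intro p hp
    simp only [D, List.mem_toFinset, List.mem_flatMap]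
    exact ⟨⟨p, hp, by simp⟩, ⟨p, hp, by simp⟩⟩
  let ex : (D → Bool) → Dl α → Bool := fun s d => if h : d ∈ D then s ⟨d, h⟩ else false
  have hsum : ∀ L' : List (Al α × Al α), (∀ p ∈ L', p ∈ L) →
      L'.length * Fintype.card (D → Bool) ≤
        4 * ∑ s : D → Bool, L'.countP (fun p => link (ex s) p.1 p.2) := by
    intro L' hL'
    induction L' with
    | nil => simp
    | cons p L' ih =>
      have h1 := ih fun q hq => hL' q (by simp [hq])
      have hp := hL' p (by simp)
      have h2 : Fintype.card (D → Bool) ≤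
          4 * ∑ s : D → Bool, (if link (ex s) p.1 p.2 then 1 else 0) := by
        by_cases he : p.1 = p.2
        · have : ∀ s, link (ex s) p.1 p.2 = true := by intro s; simp [link, he]
          simp [this]
        · have hd : (⟨p.1.1, (hD p hp).1⟩ : D) ≠ ⟨p.2.1, (hD p hp).2⟩ := by
            intro e
            have e : p.1.1 = p.2.1 := congrArg Subtype.val e
            have h3 := h p hp
            obtain ⟨⟨d, b⟩, ⟨d', b'⟩⟩ := p
            simp only at e; subst e
            cases b <;> cases b' <;> simp [nv] at h3 he
          refine avg1 _ ⟨p.1.1, (hD p hp).1⟩ ⟨p.2.1, (hD p hp).2⟩ p.1.2 (!p.2.2) ?_ hd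
          intro s hs1 hs2
          rw [if_pos]
          simp [link, ex, hD p hp, hs1, hs2]
      simp only [List.countP_cons, Finset.sum_add_distrib, List.length_cons]
      linarith
  by_contra hc
  push Not at hc
  have h1 := hsum L fun _ h => h
  have h2 : ∑ s : D → Bool, 4 * L.countP (fun p => link (ex s) p.1 p.2) <
      ∑ s : D → Bool, L.length := Finset.sum_lt_sum_of_nonempty Finset.univ_nonempty fun s _ => hc _
  rw [← Finset.mul_sum, Finset.sum_const, smul_eq_mul, mul_comm (Finset.card _)] at h2
  exact absurd h1 (not_le.2 h2)

theorem NL_split {s : Dl α → Bool} {w : List (Al α)} {A B : List (List (Al α))}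
    (h : ch s w = A ++ B) : NL s A.flatten B.flatten := by
  have hc := List.isChain_getLast_head_splitBy (link s) w
  have hne : ∀ c ∈ A ++ B, c ≠ [] := fun c hc => ch_ne s (by rw [h]; exact hc)
  rw [ch] at h
  rw [h] at hc
  rcases List.eq_nil_or_concat A with rfl | ⟨A', c, rfl⟩
  · simp [NL]
  cases B with
  | nil => simp [NL]
  | cons d B =>
    rw [List.concat_eq_append, List.append_assoc, List.singleton_append,
      List.isChain_append] at hc
    have := (List.isChain_cons_cons.1 hc.2.1).1
    obtain ⟨h1, h2, h3⟩ := this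
    rw [List.concat_eq_append, List.flatten_append, List.flatten_cons]
    refine NL.right (NL.left ?_ (by simpa using h1)) h2
    intro x hx y hy
    rw [List.flatten_nil, List.append_nil, List.getLast?_eq_some_getLast h1] at hx
    rw [List.head?_eq_some_head h2] at hy
    simp at hx hy; subst hx; subst hy
    exact h3

theorem ch_chunk {s : Dl α → Bool} {w c : List (Al α)} (h : c ∈ ch s w) : ch s c = [c] := by
  rw [ch, List.splitBy_eq_iff]
  refine ⟨by simp, by simpa using (ch_ne s h).symm, ?_, by simp⟩
  intro m hm
  simp at hm; subst hm
  exact List.isChain_of_mem_splitBy h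

def rp (l : List (Al α × ℕ)) : List (Al α) := l.flatMap fun p => List.replicate p.2 p.1

theorem pop1 (s : Dl α → Bool) (w : List (Al α)) :
    ∃ (k : Bool) (m : List (Al α)) (l l' : List (Al α × ℕ)),
      (k = false → w = rp l ∧ m = []) ∧
      (k = true → w = rp l ++ m ++ rp l' ∧ rp l ≠ [] ∧ rp l' ≠ [] ∧ NL s (rp l) (m ++ rp l') ∧
        NL s m (rp l') ∧ NL s (rp l ++ m) (rp l') ∧ NL s (rp l) m) ∧
      (ch s (rp l)).length ≤ 1 ∧ (ch s (rp l')).length ≤ 1 ∧ l.length ≤ 2 ∧ l'.length ≤ 2 ∧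
      (∀ p ∈ l, 1 ≤ p.2) ∧ (∀ p ∈ l', 1 ≤ p.2) ∧ m.length ≤ w.length ∧
      (w ≠ [] → m.length < w.length) := by
  have hf := ch_flatten s w
  cases hL : ch s w with
  | nil =>
    rw [hL] at hf
    refine ⟨false, [], [], [], ?_⟩
    simp at hf
    simp [rp, hf, ch]
  | cons c R =>
    rw [hL] at hf
    have hc : c ∈ ch s w := by rw [hL]; simp
    obtain ⟨l, hl1, hl2, hl3, hl4⟩ := ch_shape' s hc
    change c = rp l at hl4
    have hc0 := ch_ne s hc
    rcases List.eq_nil_or_concat R with rfl | ⟨R', d, rfl⟩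
    · refine ⟨false, [], l, [], ?_⟩
      simp at hf
      have := ch_chunk hc
      refine ⟨fun _ => ⟨by rw [← hf, hl4], rfl⟩, by simp, ?_, by simp [rp, ch], hl2, by simp, hl3, by simp, by simp, ?_⟩
      · rw [← hl4, this]; simp
      · intro h; exact List.length_pos_of_ne_nil h
    · have hd : d ∈ ch s w := by rw [hL]; simp
      obtain ⟨l', hl1', hl2', hl3', hl4'⟩ := ch_shape' s hd
      change d = rp l' at hl4'
      have hd0 := ch_ne s hd
      have n1 : NL s c (R'.flatten ++ d) := by
        simpa using NL_split (s := s) (w := w) (A := [c]) (B := R' ++ [d]) (by rw [hL]; simp)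
      have n3 : NL s (c ++ R'.flatten) d := by
        simpa using NL_split (s := s) (w := w) (A := c :: R') (B := [d]) (by rw [hL]; simp)
      refine ⟨true, R'.flatten, l, l', by simp, fun _ => ⟨?_, ?_, ?_, ?_, ?_, ?_, ?_⟩, ?_, ?_, hl2, hl2', hl3, hl3', ?_, ?_⟩
      · rw [← hl4, ← hl4', ← hf]; simp
      · rw [← hl4]; exact hc0
      · rw [← hl4']; exact hd0
      · rw [← hl4, ← hl4']; exact n1
      · rw [← hl4']
        rcases eq_or_ne R'.flatten [] with e | e
        · rw [e]; simp [NL]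
        · intro x hx; refine n3 x ?_; rw [List.getLast?_append_of_ne_nil _ e]; exact hx
      · rw [← hl4, ← hl4']; exact n3
      · rw [← hl4]
        rcases eq_or_ne R'.flatten [] with e | e
        · rw [e]; simp [NL]
        · intro x hx y hy; refine n1 x hx y ?_; rw [List.head?_append_of_ne_nil _ e]; exact hy
      · rw [← hl4, ch_chunk hc]; simp
      · rw [← hl4', ch_chunk hd]; simp
      · rw [← hf]; simp; omega
      · intro _
        have := List.length_pos_of_ne_nil hc0
        rw [← hf]; simp; omega
end
end Mak

namespace Mak
open FreeGroup (invRev)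

section
variable {α V κ : Type}

def sy (o : κ) (k : Bool → κ) : List (Al α × ℕ) → List (Al α × κ)
  | [] => []
  | [p] => [(p.1, if p.2 = 1 then o else k false)]
  | p :: p' :: _ => [(p.1, if p.2 = 1 then o else k false), (p'.1, if p'.2 = 1 then o else k true)]

def sv (l : List (Al α × ℕ)) (b : Bool) : ℕ := max 1 ((l.map Prod.snd).getD b.toNat 1)

theorem sy_len (o : κ) (k : Bool → κ) (l : List (Al α × ℕ)) : (sy o k l).length ≤ 2 := by
  rcases l with _ | ⟨p, _ | ⟨p', l⟩⟩ <;> simp [sy]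

theorem sy_ne (o : κ) (k : Bool → κ) {l : List (Al α × ℕ)} (h : l ≠ []) : sy o k l ≠ [] := by
  rcases l with _ | ⟨p, _ | ⟨p', l⟩⟩
  · exact absurd rfl h
  all_goals simp [sy]

theorem pv_sy [DecidableEq α] (o : κ) (k : Bool → κ) (X : κ → ℕ) (ho : X o = 1) (l : List (Al α × ℕ))
    (hl : l.length ≤ 2) (h1 : ∀ p ∈ l, 1 ≤ p.2) (hX : ∀ b, X (k b) = sv l b) :
    pv X (sy o k l) = rp l := by
  have e : ∀ (n : ℕ) b, 1 ≤ n → sv l b = n → X (if n = 1 then o else k b) = n := by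
    intro n b hn hs
    split_ifs with h
    · rw [ho, h]
    · rw [hX, hs]
  rcases l with _ | ⟨p, _ | ⟨p', _ | ⟨p'', l⟩⟩⟩
  · rfl
  · have := h1 p (by simp)
    simp [sy, pv, rp]
    rw [e _ _ this (by simp [sv, this])]
  · have := h1 p (by simp)
    have h2 := h1 p' (by simp)
    simp [sy, pv, rp]
    rw [e _ _ this (by simp [sv, this]), e _ _ h2 (by simp [sv, h2])]
  · simp at hl

theorem sy_one (o : κ) (k : Bool → κ) (X : κ → ℕ) (l : List (Al α × ℕ))
    (hl : l.length ≤ 2) (h1 : ∀ p ∈ l, 1 ≤ p.2) (hX : ∀ b, X (k b) = sv l b) :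
    ∀ p ∈ sy o k l, X p.2 = 1 → p.2 = o := by
  have e : ∀ (n : ℕ) b, 1 ≤ n → sv l b = n → X (if n = 1 then o else k b) = 1 →
      (if n = 1 then o else k b) = o := by
    intro n b hn hs
    split_ifs with h
    · simp
    · rw [hX, hs]; exact fun h' => absurd h' h
  rcases l with _ | ⟨p, _ | ⟨p', _ | ⟨p'', l⟩⟩⟩
  · simp [sy]
  · have := h1 p (by simp)
    have h3 := e _ false this (by simp [sv, this])
    intro q hq
    simp [sy] at hq; subst hq; exact h3
  · have := h1 p (by simp)
    have h2 := h1 p' (by simp)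
    have h3 := e _ false this (by simp [sv, this])
    have h4 := e _ true h2 (by simp [sv, h2])
    intro q hq
    simp [sy] at hq
    rcases hq with rfl | rfl
    · exact h3
    · exact h4
  · simp at hl

theorem pv_len (X : κ → ℕ) (G : ℕ) (hG : ∀ k, X k ≤ G) (q : List (Al α × κ)) :
    (pv X q).length ≤ q.length * G := by
  induction q with
  | nil => simp [pv]
  | cons p q ih =>
    have : pv X (p :: q) = List.replicate (X p.2) p.1 ++ pv X q := by simp [pv]
    rw [this]
    have := hG p.2
    simp; linarith

theorem pv_ends [Inhabited α] (X : κ → ℕ) (hX : ∀ k, 1 ≤ X k) (q : List (Al α × κ)) (hq : q ≠ []) :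
    ftL (pv X q) = ftL (q.map Prod.fst) ∧ ltL (pv X q) = ltL (q.map Prod.fst) ∧ pv X q ≠ [] := by
  have hr : ∀ (k : κ) (a : Al α), ∃ n, List.replicate (X k) a = List.replicate (n + 1) a := fun k a =>
    ⟨X k - 1, by rw [Nat.sub_add_cancel (hX k)]⟩
  refine ⟨?_, ?_, ?_⟩
  · rcases q with _ | ⟨p, q⟩
    · exact absurd rfl hq
    · obtain ⟨n, hn⟩ := hr p.2 p.1
      simp [pv, hn, ftL, List.replicate_succ]
  · rcases List.eq_nil_or_concat q with rfl | ⟨q, p, rfl⟩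
    · exact absurd rfl hq
    · obtain ⟨n, hn⟩ := hr p.2 p.1
      rw [List.concat_eq_append, pv_append]
      simp [pv, hn, ltL, List.replicate_succ']
  · rcases q with _ | ⟨p, q⟩
    · exact absurd rfl hq
    · obtain ⟨n, hn⟩ := hr p.2 p.1
      simp [pv, hn, List.replicate_succ]

theorem Red_pv (X X' : κ → ℕ) (hX : ∀ k, 1 ≤ X k) (hX' : ∀ k, 1 ≤ X' k) (q : List (Al α × κ))
    (h : ∀ p ∈ q, X p.2 = 1 → X' p.2 = 1) (hr : Red (pv X q)) : Red (pv X' q) := by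
  have h0 : ∀ Y : κ → ℕ, (∀ k, 1 ≤ Y k) → [] ∉ q.map (fun p => List.replicate (Y p.2) p.1) := by
    intro Y hY hm
    simp only [List.mem_map, List.replicate_eq_nil_iff] at hm
    obtain ⟨p, -, hp⟩ := hm
    have := hY p.2; omega
  have e : ∀ Y : κ → ℕ, pv Y q = (q.map (fun p => List.replicate (Y p.2) p.1)).flatten := fun Y => by
    rw [pv, List.flatMap_def]
  rw [Red, e, List.isChain_flatten (h0 _ hX)] at hr
  rw [Red, e, List.isChain_flatten (h0 _ hX')]
  refine ⟨?_, ?_⟩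
  · intro l hl
    rw [List.mem_map] at hl
    obtain ⟨p, hp, rfl⟩ := hl
    have h1 := hr.1 _ (List.mem_map.2 ⟨p, hp, rfl⟩)
    by_cases hp1 : X p.2 = 1
    · rw [h p hp hp1]; simp
    · obtain ⟨n, hn⟩ : ∃ n, X p.2 = n + 2 := ⟨X p.2 - 2, by have := hX p.2; omega⟩
      rw [hn] at h1
      simp only [List.replicate_succ, List.isChain_cons_cons] at h1
      exact List.isChain_replicate_of_rel _ h1.1
  · have h2 := hr.2
    rw [List.isChain_map] at h2 ⊢
    refine List.IsChain.imp ?_ h2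
    intro a b hab x hx y hy
    refine hab x ?_ y ?_
    · have := hX a.2
      have := hX' a.2
      rw [List.getLast?_replicate] at hx ⊢
      rw [if_neg (by omega)] at hx ⊢; exact hx
    · have := hX b.2
      have := hX' b.2
      rw [List.head?_replicate] at hy ⊢
      rw [if_neg (by omega)] at hy ⊢; exact hy

def phi (f : Dl α → List (Al α)) (a : Al α) : List (Al α) := wg a.2 (f a.1)

theorem phi_nv (f : Dl α → List (Al α)) (a : Al α) : phi f (nv a) = invRev (phi f a) := by
  obtain ⟨d, _ | _⟩ := a <;> simp [phi, nv, wg]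

theorem Red_phi [DecidableEq α] [Encodable α] [Inhabited α] (f : Dl α → List (Al α))
    (h : ∀ d, f d ≠ [] ∧ Red (f d) ∧ ftL (f d) = d.1 ∧ ltL (f d) = d.2.1) (w : List (Al α))
    (hw : Red w) : Red (w.flatMap (phi f)) := by
  have hne : ∀ a, phi f a ≠ [] := fun a => wg_ne (h a.1).1
  have hf : ∀ a, ftL (phi f a) = ft a := by
    rintro ⟨d, _ | _⟩
    · simp [phi, wg, ft, ftL_inv (h d).1, h d]
    · simp [phi, wg, ft, h d]
  have hl : ∀ a, ltL (phi f a) = lt a := by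
    rintro ⟨d, _ | _⟩
    · simp [phi, wg, lt, ltL_inv (h d).1, h d]
    · simp [phi, wg, lt, h d]
  rw [Red, List.flatMap_def, List.isChain_flatten (by simp [hne])]
  refine ⟨?_, ?_⟩
  · intro l hl
    rw [List.mem_map] at hl
    obtain ⟨⟨d, b⟩, hp, rfl⟩ := hl
    cases b
    · exact (h d).2.1.inv
    · exact (h d).2.1
  · rw [List.isChain_map]
    refine List.IsChain.imp ?_ hw
    intro a b hab x hx y hy
    have e1 : ltL (phi f a) = lt x := by
      rw [ltL, List.getLastD_eq_getLast?, hx]; rfl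
    have e2 : ftL (phi f b) = ft y := by
      rw [ftL, List.headD_eq_head?_getD, hy]; rfl
    rw [← e1, ← e2, hf, hl]; exact hab

theorem nlet_flat [DecidableEq α] [Encodable α] [Inhabited α] (s : Dl α → Bool) (g : List (Al α) → ℕ)
    (X : κ → ℕ) (L : List (List (Al α × κ) ⊕ (V × Bool))) :
    nlet (flat (fun t => cmp s g (pv X t)) L) =
      (L.flatMap (Sum.elim (fun t => ch s (pv X t)) (fun _ => []))).length := by
  induction L with
  | nil => rfl
  | cons u L ih =>
    have : flat (fun t => cmp s g (pv X t)) (u :: L) = 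
      Sum.elim (fun seg => (cmp s g (pv X seg)).map Sum.inl) (fun v => [Sum.inr v]) u ++
        flat (fun t => cmp s g (pv X t)) L := rfl
    rw [this, nlet_append, ih, List.flatMap_cons, List.length_append]
    rcases u with t | v
    · rw [Sum.elim_inl, Sum.elim_inl, nlet_map_inl, cmp, List.length_map]
    · simp [nlet]

end
end Mak

namespace Mak
open FreeGroup (invRev)

section
variable {α V ι : Type} [Fintype V] [Fintype ι]

def wt (σ : V → List (Al α)) : ℕ := ∑ x, (σ x).length

def Sol (E : ι × Bool → List (Sy α V)) (σ : V → List (Al α)) : Prop :=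
  ∀ i, eval σ (E (i, true)) = eval σ (E (i, false)) ∧ Red (eval σ (E (i, true)))

structure Bd (K N : ℕ) (E : ι × Bool → List (Sy α V)) : Prop where
  idx : ∀ j a, Sum.inl a ∈ E j → a.1.2.2 < K
  nl : ∑ j, nlet (E j) ≤ K
  nn : ∑ j, nvar (E j) ≤ N

def stepG (v K N : ℕ) : ℕ := dioB (1 + v * 4 + K * 2) (2 * (K + N) + 2) + 1
def stepC (v K N : ℕ) : ℕ := (v + 1) * (4 * stepG v K N)

variable [DecidableEq α] [Encodable α] [Inhabited α]

theorem step_s (E : ι × Bool → List (Sy α V)) (σ : V → List (Al α))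
    (hr : ∀ j, Red (eval σ (E j))) : ∃ s : Dl α → Bool,
      4 * ∑ j, Lc s none (E j) ≤ 3 * ∑ j, nlet (E j) + 9 * ∑ j, nvar (E j) + Fintype.card (ι × Bool) := by
  obtain ⟨s, hs⟩ := avg ((Finset.univ : Finset (ι × Bool)).toList.flatMap fun j => prs none (E j)) (by
    intro p hp
    rw [List.mem_flatMap] at hp
    obtain ⟨j, -, hp⟩ := hp
    exact prs_ne σ (E j) none (by simpa using hr j) p hp)
  refine ⟨s, ?_⟩
  rw [List.length_flatMap, List.countP_flatMap, Finset.sum_map_toList, Finset.sum_map_toList] at hs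
  have h1 : ∑ j, nlet (E j) ≤ ∑ j, ((prs none (E j)).length + nvar (E j) + 1) :=
    Finset.sum_le_sum fun j _ => by simpa using prs_len (E j) none
  have h2 : ∑ j, (Lc s none (E j) + (prs none (E j)).countP (fun p => link s p.1 p.2)) =
    ∑ j, (nlet (E j) + 2 * nvar (E j)) := Finset.sum_congr rfl fun j _ => Lc_prs s (E j) none
  rw [Finset.sum_add_distrib, Finset.sum_add_distrib] at h1 h2
  rw [← Finset.mul_sum] at h2
  simp only [Finset.sum_const, smul_eq_mul, mul_one, Finset.card_univ, Function.comp_def] at h1 hs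
  omega

def oc (c : List (Al α)) : List (Al α) := wg (ori c) c

theorem enc_eq (g : List (Al α) → ℕ) (c : List (Al α)) :
    enc g c = ((ftL (oc c), ltL (oc c), g (oc c)), ori c) := by
  simp only [enc, oc, wg]; cases ori c <;> rfl

theorem wg_oc (c : List (Al α)) : wg (ori c) (oc c) = c := by
  simp only [oc, wg]; cases ori c <;> simp

theorem seg_red {κ : Type} (o : κ) (s : Dl α → Bool) {σ mid : V → List (Al α)}
    {keep : V → Bool} {p q : V → List (Al α × κ)} (X : κ → ℕ) (hX : X o = 1)
    (h : Pop s σ mid keep (fun x => pv X (p x)) (fun x => pv X (q x)))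
    (U : List (Sy α V)) (acc : List (Al α × κ)) (hr : Red (pv X acc ++ eval σ U)) :
    ∀ t, Sum.inl t ∈ go o keep p q acc U → Red (pv X t) := by
  induction U generalizing acc with
  | nil => intro t ht; simp [go] at ht; subst ht; simpa using hr
  | cons u U ih =>
    intro t ht
    rcases u with a | v
    · have e : pv X (acc ++ [(a, o)]) = pv X acc ++ [a] := by rw [pv_append]; simp [pv, hX]
      rw [go] at ht
      exact ih _ (by rw [e]; simpa using hr) t ht
    · by_cases hk : keep v.1 = true
      · obtain ⟨h1, hA, hB, hn1, hn2⟩ := h.signed v hk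
        rw [go, if_pos hk] at ht
        have eA : pv X (sg v.2 (if v.2 then p v.1 else q v.1)) =
            wg v.2 (if v.2 then pv X (p v.1) else pv X (q v.1)) := by
          rw [pv_sg]; split_ifs <;> rfl
        have eB : pv X (sg v.2 (if v.2 then q v.1 else p v.1)) =
            wg v.2 (if v.2 then pv X (q v.1) else pv X (p v.1)) := by
          rw [pv_sg]; split_ifs <;> rfl
        rw [eval_inr, h1, ← eA, ← eB] at hr
        rcases List.mem_cons.1 ht with ht | ht
        · simp only [Sum.inl.injEq] at ht
          rw [ht, pv_append]
          exact hr.infix ⟨[], _, by simp; rfl⟩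
        · rcases List.mem_cons.1 ht with ht | ht
          · simp at ht
          · exact ih _ (hr.infix ⟨pv X acc ++ pv X (sg v.2 (if v.2 then p v.1 else q v.1)) ++
              wg v.2 (mid v.1), [], by simp⟩) t ht
      · have hk' : keep v.1 = false := by simpa using hk
        rw [go, if_neg hk] at ht
        have e : pv X (acc ++ sg v.2 (p v.1)) = pv X acc ++ sb σ v := by
          rw [pv_append, pv_sg]
          obtain ⟨x, b⟩ := v
          have := h.h1 x hk'
          cases b <;> simp [wg, sb, this]
        exact ih _ (by rw [e]; simpa using hr) t ht

theorem step (K N : ℕ) (hK : 9 * N + Fintype.card (ι × Bool) ≤ K) (E : ι × Bool → List (Sy α V))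
    (hB : Bd K N E) (σ : V → List (Al α)) (hS : Sol E σ) (hw : 0 < wt σ) :
    ∃ E' : ι × Bool → List (Sy α V), Bd K N E' ∧ (∃ σ', Sol E' σ' ∧ wt σ' < wt σ) ∧
      ∀ τ, Sol E' τ → ∃ τ', Sol E τ' ∧
        wt τ' ≤ stepC (Fintype.card V) K N * wt τ + stepC (Fintype.card V) K N := by
  classical
  have hr : ∀ j, Red (eval σ (E j)) := by
    rintro ⟨i, _ | _⟩
    · rw [← (hS i).1]; exact (hS i).2
    · exact (hS i).2
  obtain ⟨s, hs⟩ := step_s E σ hr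
  choose keep mid l l' hk0 hk1 c1 c2 len1 len2 e1 e2 m1 m2 using fun x => pop1 s (σ x)
  let κ1 := Option (V × Bool × Bool)
  let X1 : κ1 → ℕ := fun k => k.elim 1 fun k => if k.2.1 then sv (l k.1) k.2.2 else sv (l' k.1) k.2.2
  let o : κ1 := none
  let p : V → List (Al α × κ1) := fun x => sy o (fun b => some (x, true, b)) (l x)
  let q : V → List (Al α × κ1) := fun x => sy o (fun b => some (x, false, b)) (l' x)
  have hX1 : ∀ k, 1 ≤ X1 k := by
    rintro (_ | ⟨x, _ | _, b⟩) <;> simp [X1, sv]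
  have hp : ∀ x, pv X1 (p x) = rp (l x) := fun x =>
    pv_sy o _ X1 rfl _ (len1 x) (e1 x) fun b => by simp [X1]
  have hq : ∀ x, pv X1 (q x) = rp (l' x) := fun x =>
    pv_sy o _ X1 rfl _ (len2 x) (e2 x) fun b => by simp [X1]
  have e0 : pv X1 ([] : List (Al α × κ1)) = [] := rfl
  have hpop : Pop s σ mid keep (fun x => pv X1 (p x)) (fun x => pv X1 (q x)) := by
    simp only [hp, hq]
    exact ⟨fun x h => (hk0 x h).1, fun x h => (hk1 x h).1, fun x h => (hk1 x h).2.1,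
      fun x h => (hk1 x h).2.2.1, fun x h => (hk1 x h).2.2.2.1, fun x h => (hk1 x h).2.2.2.2.1,
      fun x h => (hk1 x h).2.2.2.2.2.1, fun x h => (hk1 x h).2.2.2.2.2.2, fun x h => (hk0 x h).2, c1, c2⟩
  -- segments
  let Gs : ι × Bool → List (List (Al α × κ1) ⊕ (V × Bool)) := fun j => go o keep p q [] (E j)
  let vis : List (List (Al α)) := (Finset.univ : Finset (ι × Bool)).toList.flatMap fun j =>
    (Gs j).flatMap (Sum.elim (fun t => ch s (pv X1 t)) (fun _ => []))
  let T : List (List (Al α)) := vis.map oc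
  have hvis : ∀ j t c, Sum.inl t ∈ Gs j → c ∈ ch s (pv X1 t) → c ∈ vis := by
    intro j t c ht hc
    simp only [vis, List.mem_flatMap]
    exact ⟨j, by simp, Sum.inl t, ht, hc⟩
  have hvis' : ∀ c ∈ vis, ∃ j t, Sum.inl t ∈ Gs j ∧ c ∈ ch s (pv X1 t) := by
    intro c hc
    simp only [vis, List.mem_flatMap] at hc
    obtain ⟨j, -, t | v, ht, hc⟩ := hc
    · exact ⟨j, t, ht, hc⟩
    · simp at hc
  let g : List (Al α) → ℕ := fun c => T.idxOf c
  let E' : ι × Bool → List (Sy α V) := fun j => flat (fun t => cmp s g (pv X1 t)) (Gs j)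
  let σ' : V → List (Al α) := fun x => cmp s g (mid x)
  have hev : ∀ j, eval σ' (E' j) = cmp s g (eval σ (E j)) := by
    intro j
    have := eval_go o s g X1 rfl hpop (E j) [] (by simpa [pv] using hr j)
    exact this
  have hnl : ∀ j, nlet (E' j) ≤ Lc s none (E j) := by
    intro j
    have := nlet_go o s g X1 rfl hpop (E j) [] none (by simp)
    rw [e0, show (ch s ([] : List (Al α))).length = 0 from rfl, zero_add] at this
    exact this
  have hnlK : ∑ j, nlet (E' j) ≤ K := by
    have h1 : ∑ j, nlet (E' j) ≤ ∑ j, Lc s none (E j) := Finset.sum_le_sum fun j _ => hnl j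
    have := hB.nl
    have := hB.nn
    omega
  have hTlen : T.length ≤ K := by
    refine le_trans (le_of_eq ?_) hnlK
    simp only [T, List.length_map, vis, List.length_flatMap (l := Finset.toList _), Finset.sum_map_toList]
    exact Finset.sum_congr rfl fun j _ => (nlet_flat s g X1 (Gs j)).symm
  have hchlen : ∀ j t, Sum.inl t ∈ Gs j → (ch s (pv X1 t)).length ≤ K := by
    intro j t ht
    have h1 : (ch s (pv X1 t)).length ≤ nlet (E' j) := by
      rw [nlet_flat s g X1 (Gs j), List.length_flatMap]
      exact List.single_le_sum (by simp) _ (List.mem_map.2 ⟨Sum.inl t, ht, rfl⟩)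
    exact h1.trans ((Finset.single_le_sum (f := fun j => nlet (E' j)) (by simp) (Finset.mem_univ j)).trans hnlK)
  have hsegred : ∀ c ∈ vis, c ≠ [] := by
    intro c hc
    obtain ⟨j, t, ht, hc⟩ := hvis' c hc
    exact ch_ne s hc
  have hE'idx : ∀ j a, Sum.inl a ∈ E' j → a.1.2.2 < K := by
    intro j a ha
    simp only [E', flat, List.mem_flatMap] at ha
    obtain ⟨t | v, ht, ha⟩ := ha
    · simp only [Sum.elim_inl, List.mem_map, Sum.inl.injEq, exists_eq_right, cmp] at ha
      obtain ⟨c, hc, rfl⟩ := ha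
      have hcT : oc c ∈ T := List.mem_map.2 ⟨c, hvis j t c ht hc, rfl⟩
      have h1 := List.idxOf_lt_length_iff.2 hcT
      have : (enc g c).1.2.2 = g (oc c) := by
        simp only [enc, oc, wg]; split_ifs <;> rfl
      rw [this]; exact lt_of_lt_of_le h1 hTlen
    · simp at ha
  refine ⟨E', ⟨hE'idx, hnlK, ?_⟩, ⟨σ', ?_, ?_⟩, ?_⟩
  · exact (Finset.sum_le_sum fun j _ => nvar_go o _ (E j) []).trans hB.nn
  · intro i
    rw [hev, hev, (hS i).1]
    exact ⟨rfl, (hr _).cmp⟩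
  · have hlen : ∀ w : List (Al α), (cmp s g w).length ≤ w.length := by
      intro w
      rw [cmp, List.length_map]
      induction w with
      | nil => simp [ch]
      | cons a w ih => have := ch_len_cons_le s a w; simp; omega
    obtain ⟨x, -, hx⟩ : ∃ x ∈ Finset.univ, 0 < (σ x).length := by
      by_contra hc
      push Not at hc
      exact absurd (Finset.sum_nonpos hc) (not_le.2 hw)
    exact Finset.sum_lt_sum (fun y _ => (hlen _).trans (m1 y))
      ⟨x, Finset.mem_univ _, lt_of_le_of_lt (hlen _) (m2 x (List.ne_nil_of_length_pos hx))⟩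
  -- lifting
  have hTsh : ∀ c : List (Al α), ∃ l : List (Al α × ℕ), l.length ≤ 2 ∧ (∀ p ∈ l, 1 ≤ p.2) ∧ (c ∈ T → c = rp l ∧ l ≠ [] ∧ Red c) := by
    intro c
    by_cases hc : c ∈ T
    · obtain ⟨c', hc', rfl⟩ := List.mem_map.1 hc
      obtain ⟨j, t, ht, hc'⟩ := hvis' c' hc'
      have hrt := seg_red o s X1 rfl hpop (E j) [] (by simpa [pv] using hr j) t ht
      have hin : ∃ w, Red w ∧ oc c' ∈ ch s w := by
        simp only [oc, wg]
        split_ifs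
        · exact ⟨_, hrt, hc'⟩
        · exact ⟨_, hrt.inv, by rw [ch_inv]; simpa using ⟨c', hc', rfl⟩⟩
      obtain ⟨w, hw1, hw2⟩ := hin
      obtain ⟨l, k1, k2, k3, k4⟩ := ch_shape' s hw2
      exact ⟨l, k2, k3, fun _ => ⟨k4, k1, hw1.infix (ch_infix s hw2)⟩⟩
    · exact ⟨[], by simp, by simp, fun h => absurd h hc⟩
  choose L hL1 hL2 hL3 using hTsh
  let κ := κ1 ⊕ (Fin K × Bool)
  let X : κ → ℕ := Sum.elim X1 fun k => sv (L (T.getD k.1 [])) k.2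
  have hX : ∀ k, 1 ≤ X k := by
    rintro (k | k)
    · exact hX1 k
    · simp [X, sv]
  obtain ⟨X', hX'1, hX'o, hX'G, hX'M⟩ := dio1 (2 * (K + N) + 2) (by omega) (Sum.inl o : κ) X hX rfl
  have hcard : Fintype.card κ = 1 + Fintype.card V * 4 + K * 2 := by
    simp [κ, κ1]; ring
  rw [hcard] at hX'G
  change ∀ k, X' k ≤ stepG (Fintype.card V) K N at hX'G
  let X1' : κ1 → ℕ := fun k => X' (Sum.inl k)
  let sym : List (Al α) → List (Al α × κ) := fun c =>
    if h : T.idxOf c < K then sy (Sum.inl o) (fun b => Sum.inr (⟨T.idxOf c, h⟩, b)) (L c) else []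
  let f : Dl α → List (Al α) := fun d => 
    if T.getD d.2.2 [] ∈ T ∧ ftL (T.getD d.2.2 []) = d.1 ∧ ltL (T.getD d.2.2 []) = d.2.1 then
      pv X' (sym (T.getD d.2.2 [])) else [(d, true)]
  have hgetD : ∀ c ∈ T, T.getD (T.idxOf c) [] = c := by
    intro c hc
    rw [List.getD_eq_getElem?_getD, List.getElem?_idxOf hc]; rfl
  have hsym : ∀ c ∈ T, pv X (sym c) = c ∧ sym c ≠ [] ∧ (∀ p ∈ sym c, X p.2 = 1 → X' p.2 = 1) := by
    intro c hc
    have h1 : T.idxOf c < K := lt_of_lt_of_le (List.idxOf_lt_length_iff.2 hc) hTlen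
    have h2 : ∀ b, X (Sum.inr (⟨T.idxOf c, h1⟩, b)) = sv (L c) b := by
      intro b
      change sv (L (T.getD (T.idxOf c) [])) b = _
      rw [hgetD c hc]
    simp only [sym, dif_pos h1]
    refine ⟨?_, sy_ne _ _ (hL3 c hc).2.1, ?_⟩
    · rw [pv_sy _ _ X rfl _ (hL1 c) (hL2 c) h2]; exact (hL3 c hc).1.symm
    · intro p hp hp1
      rw [sy_one _ _ X _ (hL1 c) (hL2 c) h2 p hp hp1, hX'o]
  have hf : ∀ d, f d ≠ [] ∧ Red (f d) ∧ ftL (f d) = d.1 ∧ ltL (f d) = d.2.1 := by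
    intro d
    simp only [f]
    split_ifs with h
    · obtain ⟨h1, h2, h3⟩ := h
      obtain ⟨k1, k2, k3⟩ := hsym _ h1
      obtain ⟨p1, p2, p3⟩ := pv_ends X' hX'1 _ k2
      obtain ⟨q1, q2, q3⟩ := pv_ends X hX _ k2
      refine ⟨p3, Red_pv X X' hX hX'1 _ k3 (by rw [k1]; exact (hL3 _ h1).2.2), ?_, ?_⟩
      · rw [p1, ← q1, k1, h2]
      · rw [p2, ← q2, k1, h3]
    · simp [Red, ftL, ltL, ft, lt]
  have hflen : ∀ d, (f d).length ≤ 2 * stepG (Fintype.card V) K N := by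
    intro d
    simp only [f]
    split_ifs with h
    · refine (pv_len X' _ hX'G _).trans (Nat.mul_le_mul_right _ ?_)
      simp only [sym]
      split_ifs
      · exact sy_len _ _ _
      · simp
    · simp [stepG]; omega
  have hseg : ∀ j t, Sum.inl t ∈ Gs j → (cmp s g (pv X1 t)).flatMap (phi f) = pv X1' t := by
    intro j t ht
    let ws : List (Al α) → List (Al α × κ) := fun c => sg (ori c) (sym (oc c))
    have hT : ∀ c ∈ ch s (pv X1 t), oc c ∈ T := fun c hc => List.mem_map.2 ⟨c, hvis j t c ht hc, rfl⟩
    have hfm : ∀ (Y : κ → ℕ) (l : List (List (Al α))), pv Y (l.flatMap ws) = l.flatMap fun c => pv Y (ws c) := by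
      intro Y l; simp only [pv, List.flatMap_assoc]
    have h1 : (cmp s g (pv X1 t)).flatMap (phi f) = pv X' ((ch s (pv X1 t)).flatMap ws) := by
      rw [hfm, cmp, List.flatMap_map]
      refine List.flatMap_congr fun c hc => ?_
      simp only [ws, enc_eq, phi, pv_sg, f, g, hgetD _ (hT c hc)]
      rw [if_pos (by simp [hT c hc])]
    have h2 : pv X ((ch s (pv X1 t)).flatMap ws) = pv X1 t := by
      rw [hfm]
      conv_rhs => rw [← ch_flatten s (pv X1 t)]
      rw [← List.flatMap_id]
      refine List.flatMap_congr fun c hc => ?_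
      simp only [ws, pv_sg, (hsym _ (hT c hc)).1, wg_oc]; rfl
    have h3 : ∀ Y : κ → ℕ, pv Y (t.map fun p => (p.1, (Sum.inl p.2 : κ))) = pv (fun k => Y (Sum.inl k)) t := by
      intro Y; simp only [pv, List.flatMap_map]
    rw [h1, ← h3 X']
    refine pw (2 * (K + N) + 2) X X' hX hX'M _ _ ?_ ?_ ?_
    · have h4 : ∀ l : List (List (Al α)), (l.flatMap ws).length ≤ 2 * l.length := by
        intro l
        induction l with
        | nil => simp
        | cons c l ih =>
          have : (ws c).length ≤ 2 := by
            have : (sym (oc c)).length ≤ 2 := by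
              simp only [sym]
              split_ifs
              · exact sy_len _ _ _
              · simp
            simp only [ws, sg]
            split_ifs <;> simpa [sinv] using this
          rw [List.flatMap_cons, List.length_append, List.length_cons]; omega
      have := h4 (ch s (pv X1 t))
      have := hchlen j t ht
      omega
    · rw [List.length_map]
      have h5 := seg_len o (fun x => sy_len _ _ _) (fun x => sy_len _ _ _) (E j) [] t ht
      have h6 : (E j).length ≤ K + N := by
        rw [len_nn]
        exact add_le_add
          ((Finset.single_le_sum (f := fun j => nlet (E j)) (by simp) (Finset.mem_univ j)).trans hB.nl)
          ((Finset.single_le_sum (f := fun j => nvar (E j)) (by simp) (Finset.mem_univ j)).trans hB.nn)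
      simp at h5; omega
    · rw [h2, h3]; rfl
  intro τ hτ
  have hlift : ∀ j, (eval τ (E' j)).flatMap (phi f) = _ := fun j =>
    lift_go o s g X1 X1' hX'o (phi f) (phi_nv f) τ (E j) [] (hseg j)
  refine ⟨fun x => if keep x then pv X1' (p x) ++ (τ x).flatMap (phi f) ++ pv X1' (q x)
          else pv X1' (p x), fun i => ⟨?_, ?_⟩, ?_⟩
  · have h1 := hlift (i, true)
    have h2 := hlift (i, false)
    rw [(hτ i).1] at h1
    simpa [pv] using h1.symm.trans h2
  · have h1 := hlift (i, true)
    have h2 := Red_phi f hf _ (hτ i).2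
    rw [h1] at h2
    simpa [pv] using h2
  · set G := stepG (Fintype.card V) K N with hG
    have hphi : ∀ w : List (Al α), (w.flatMap (phi f)).length ≤ 2 * G * w.length := by
      intro w
      induction w with
      | nil => simp
      | cons a w ih =>
        have : (phi f a).length ≤ 2 * G := by
          have := hflen a.1
          simp only [phi, wg]
          split_ifs
          · exact this
          · simpa [invRev_eq] using this
        rw [List.flatMap_cons, List.length_append, List.length_cons, mul_add]; omega
    have hpl : ∀ x, (pv X1' (p x)).length ≤ 2 * G := fun x =>
      (pv_len X1' G (fun k => hX'G _) _).trans (Nat.mul_le_mul_right _ (sy_len _ _ _))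
    have hql : ∀ x, (pv X1' (q x)).length ≤ 2 * G := fun x =>
      (pv_len X1' G (fun k => hX'G _) _).trans (Nat.mul_le_mul_right _ (sy_len _ _ _))
    have hx : ∀ x, (if keep x = true then pv X1' (p x) ++ (τ x).flatMap (phi f) ++ pv X1' (q x)
          else pv X1' (p x)).length ≤ 2 * G * (τ x).length + 4 * G := by
      intro x
      have a1 := hpl x
      have a2 := hql x
      have a3 := hphi (τ x)
      split_ifs
      · simp only [List.length_append]; omega
      · omega
    refine (Finset.sum_le_sum fun x _ => hx x).trans ?_
    rw [Finset.sum_add_distrib, ← Finset.mul_sum]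
    change 2 * G * wt τ + _ ≤ _
    simp only [Finset.sum_const, Finset.card_univ, smul_eq_mul, stepC, ← hG]
    nlinarith [Nat.zero_le (G * wt τ), Nat.zero_le (G * wt τ * Fintype.card V)]
end
end Mak

namespace Mak
open FreeGroup (invRev)

section
variable {α V ι : Type} [Fintype V] [Fintype ι]

abbrev BS (α V : Type) (K : ℕ) := ((Gl α × Gl α × Fin K) × Bool) ⊕ (V × Bool)
abbrev ST (α V ι : Type) (K n : ℕ) := ι × Bool → Fin n → Option (BS α V K)

def emb {K : ℕ} : BS α V K → Sy α V :=
  Sum.map (fun a => ((a.1.1, a.1.2.1, (a.1.2.2 : ℕ)), a.2)) id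

def dec {K n : ℕ} (s : ST α V ι K n) (j : ι × Bool) : List (Sy α V) :=
  ((List.ofFn (s j)).reduceOption).map emb

theorem ofFn_red {β : Type} (U : List β) (n : ℕ) (h : U.length ≤ n) :
    (List.ofFn fun k : Fin n => U[(k : ℕ)]?).reduceOption = U := by
  induction n generalizing U with
  | zero => simp at h; subst h; rfl
  | succ n ih =>
    rw [List.ofFn_succ]
    cases U with
    | nil =>
      have := ih [] (by simp)
      simp at this ⊢
    | cons u U =>
      have := ih U (by simpa using h)
      simp at this ⊢
      rw [this]

theorem emb_surj {K : ℕ} (U : List (Sy α V)) (h : ∀ a, Sum.inl a ∈ U → a.1.2.2 < K) :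
    ∃ U' : List (BS α V K), U'.map emb = U := by
  induction U with
  | nil => exact ⟨[], rfl⟩
  | cons u U ih =>
    obtain ⟨U', hU'⟩ := ih fun a ha => h a (by simp [ha])
    rcases u with a | v
    · exact ⟨Sum.inl ((a.1.1, a.1.2.1, ⟨a.1.2.2, h a (by simp)⟩), a.2) :: U', by rw [List.map_cons, hU']; rfl⟩
    · exact ⟨Sum.inr v :: U', by rw [List.map_cons, hU']; rfl⟩

theorem dec_surj {K N : ℕ} (E : ι × Bool → List (Sy α V)) (hB : Bd K N E) :
    ∃ s : ST α V ι K (K + N), dec s = E := by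
  choose U hU using fun j => emb_surj (E j) (hB.idx j)
  refine ⟨fun j k => (U j)[(k : ℕ)]?, ?_⟩
  funext j
  rw [dec, ofFn_red _ _ ?_, hU]
  have h6 : (E j).length ≤ K + N := by
    rw [len_nn]
    exact add_le_add
      ((Finset.single_le_sum (f := fun j => nlet (E j)) (by simp) (Finset.mem_univ j)).trans hB.nl)
      ((Finset.single_le_sum (f := fun j => nvar (E j)) (by simp) (Finset.mem_univ j)).trans hB.nn)
  rw [← hU j, List.length_map] at h6; exact h6

def solB (a v i K N : ℕ) : ℕ :=
  (fun w => stepC v K N * w + stepC v K N)^[(((a * 2) * ((a * 2) * K) * 2 + v * 2 + 1) ^ (K + N)) ^ (i * 2)] 0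

theorem bound [Fintype α] [DecidableEq α] [Encodable α] [Inhabited α] (K N : ℕ)
    (hK : 9 * N + Fintype.card (ι × Bool) ≤ K) (E : ι × Bool → List (Sy α V))
    (hB : Bd K N E) (σ : V → List (Al α)) (hS : Sol E σ) :
    ∃ τ, Sol E τ ∧ wt τ ≤ solB (Fintype.card α) (Fintype.card V) (Fintype.card ι) K N := by
  classical
  let P : ST α V ι K (K + N) → ℕ → Prop := fun s w => Bd K N (dec s) ∧ ∃ σ, Sol (dec s) σ ∧ wt σ = w
  obtain ⟨s, rfl⟩ := dec_surj E hB
  have := count_lemma P (stepC (Fintype.card V) K N) (by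
    rintro s w ⟨hb, σ, hσ, rfl⟩ hw
    obtain ⟨E', hE', ⟨σ', hσ', hw'⟩, hl⟩ := step K N hK _ hb σ hσ hw
    obtain ⟨s', rfl⟩ := dec_surj E' hE'
    refine ⟨s', wt σ', ⟨hE', σ', hσ', rfl⟩, hw', ?_⟩
    rintro v ⟨-, τ, hτ, rfl⟩
    obtain ⟨τ', h1, h2⟩ := hl τ hτ
    exact ⟨_, ⟨hb, τ', h1, rfl⟩, h2⟩) s (wt σ) ⟨hB, σ, hS, rfl⟩
  obtain ⟨u, ⟨-, τ, hτ, rfl⟩, hu⟩ := this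
  refine ⟨τ, hτ, hu.trans (le_of_eq ?_)⟩
  rw [solB]
  congr 2
  simp
end
end Mak

namespace Mak
open FreeGroup (invRev)

section
variable {r : ℕ}

abbrev LW (r : ℕ) := Fin r × Bool

def bl (g : LW r) : Al (Fin r) := (((g.1, true), (g.1, true), 0), g.2)

theorem ft_bl (g : LW r) : ft (bl g) = g := by
  obtain ⟨a, _ | _⟩ := g <;> simp [ft, bl, nv]
theorem lt_bl (g : LW r) : lt (bl g) = g := by
  obtain ⟨a, _ | _⟩ := g <;> simp [lt, bl, nv]
theorem bl_nv (g : LW r) : bl (nv g) = nv (bl g) := rfl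

theorem Red_bl (w : List (LW r)) : Red (w.map bl) ↔ FreeGroup.IsReduced w := by
  rw [Red, List.isChain_map, FreeGroup.IsReduced]
  have : ∀ a b : LW r, (ft (bl b) ≠ nv (lt (bl a))) ↔ (a.1 = b.1 → a.2 = b.2) := by
    intro a b
    rw [ft_bl, lt_bl]
    obtain ⟨a, x⟩ := a
    obtain ⟨b, y⟩ := b
    simp only [nv, ne_eq, Prod.mk.injEq, not_and]
    constructor
    · intro h e; have := h e.symm; revert this; cases x <;> cases y <;> simp
    · intro h e; have := h e.symm; revert this; cases x <;> cases y <;> simp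
  simp only [this]

theorem invRev_map_bl (w : List (LW r)) : invRev (w.map bl) = (invRev w).map bl := by
  simp only [invRev_eq, List.map_reverse, List.map_map]; rfl

def zz (hr : 2 ≤ r) (x : LW r) : LW r :=
  if x.1 = ⟨0, by omega⟩ then (⟨1, by omega⟩, true) else (⟨0, by omega⟩, true)

theorem zz_ne (hr : 2 ≤ r) (x : LW r) : (zz hr x).1 ≠ x.1 := by
  rw [zz]; split_ifs with h
  · rw [h]; simp [Fin.ext_iff]
  · exact fun e => h e.symm

def ps1 (hr : 2 ≤ r) (d : Dl (Fin r)) : List (LW r) :=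
  if d.1 = d.2.1 then [d.1] else if d.2.1 = nv d.1 then [d.1, zz hr d.1, d.2.1] else [d.1, d.2.1]

def ps (hr : 2 ≤ r) (a : Al (Fin r)) : List (LW r) := wg a.2 (ps1 hr a.1)

theorem ps_phi (hr : 2 ≤ r) (a : Al (Fin r)) : (ps hr a).map bl = phi (fun d => (ps1 hr d).map bl) a := by
  simp only [ps, phi, wg]; split_ifs
  · rfl
  · rw [invRev_map_bl]

theorem ps_len (hr : 2 ≤ r) (a : Al (Fin r)) : (ps hr a).length ≤ 3 := by
  have : (ps1 hr a.1).length ≤ 3 := by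
    simp only [ps1]; split_ifs <;> simp
  simp only [ps, wg]; split_ifs
  · exact this
  · simpa [invRev_eq] using this

theorem ps_ne (hr : 2 ≤ r) (a : Al (Fin r)) : ps hr a ≠ [] := by
  refine wg_ne ?_
  simp only [ps1]; split_ifs <;> simp

theorem ps_bl (hr : 2 ≤ r) (g : LW r) : ps hr (bl g) = [g] := by
  obtain ⟨a, _ | _⟩ := g <;> simp [ps, ps1, bl, wg, invRev_eq, nv]

theorem ps_red (hr : 2 ≤ r) [Inhabited (Fin r)] (w : List (Al (Fin r))) (hw : Red w) :
    FreeGroup.IsReduced (w.flatMap (ps hr)) := by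
  rw [← Red_bl, List.map_flatMap]
  simp only [ps_phi]
  refine Red_phi _ ?_ w hw
  intro d
  have hz := zz_ne hr d.1
  refine ⟨?_, ?_, ?_, ?_⟩
  · simp only [ps1]; split_ifs <;> simp
  · simp only [ps1]; split_ifs with h1 h2
    · simp [Red]
    · rw [Red_bl, FreeGroup.IsReduced, h2]
      simp [nv, hz, hz.symm]
    · simp only [Red, List.map_cons, List.map_nil, List.isChain_cons_cons, ft_bl, lt_bl]
      exact ⟨h2, by simp⟩
  · simp only [ps1]; split_ifs <;> simp [ftL, ft_bl]
  · simp only [ps1]; split_ifs with h1 <;> simp [ltL, lt_bl, h1]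

def mm (hr : 2 ≤ r) (w : List (Al (Fin r))) : FreeGroup (Fin r) := FreeGroup.mk (w.flatMap (ps hr))

theorem mm_append (hr : 2 ≤ r) (u w : List (Al (Fin r))) : mm hr (u ++ w) = mm hr u * mm hr w := by
  rw [mm, List.flatMap_append, ← FreeGroup.mul_mk]; rfl

theorem mm_inv (hr : 2 ≤ r) (w : List (Al (Fin r))) : mm hr (invRev w) = (mm hr w)⁻¹ := by
  rw [mm, mm, FreeGroup.inv_mk]
  congr 1
  induction w with
  | nil => rfl
  | cons a w ih =>
    rw [FreeGroup.invRev_cons, List.flatMap_append, ih, List.flatMap_cons, FreeGroup.invRev_append]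
    congr 1
    have : ps hr (nv a) = invRev (ps hr a) := by
      obtain ⟨d, _ | _⟩ := a <;> simp [ps, wg, nv]
    simpa [invRev_eq] using this

theorem mm_bl (hr : 2 ≤ r) (w : List (LW r)) : mm hr (w.map bl) = FreeGroup.mk w := by
  rw [mm, List.flatMap_map]; simp only [ps_bl]; simp

theorem cancel (x y : List (LW r)) (hx : FreeGroup.IsReduced x) (hy : FreeGroup.IsReduced y) :
    ∃ P Q R, x = P ++ Q ∧ y = invRev Q ++ R ∧ FreeGroup.reduce (x ++ y) = P ++ R := by
  induction x using List.reverseRecOn generalizing y with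
  | nil => exact ⟨[], [], y, rfl, rfl, by simpa using hy.reduce_eq⟩
  | append_singleton x a ih =>
    by_cases h : FreeGroup.IsReduced (x ++ [a] ++ y)
    · exact ⟨x ++ [a], [], y, by simp, rfl, h.reduce_eq⟩
    · cases y with
      | nil => exact absurd (by simpa using hx) h
      | cons b y =>
        have hb : b = nv a := by
          by_contra hb
          apply h
          rw [List.append_assoc]
          refine FreeGroup.IsReduced.append_overlap (L₂ := [a]) (L₃ := b :: y) hx ?_ (by simp) |>.infix ⟨[], [], by simp⟩
          rw [List.singleton_append, FreeGroup.isReduced_cons_cons]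
          refine ⟨?_, hy⟩
          intro e
          obtain ⟨a, p⟩ := a
          obtain ⟨b, q⟩ := b
          simp only at e; subst e
          cases p <;> cases q <;> simp [nv] at hb ⊢
        subst hb
        obtain ⟨P, Q, R, h1, h2, h3⟩ := ih y (hx.infix ⟨[], [a], by simp⟩) (hy.infix ⟨[nv a], [], by simp⟩)
        refine ⟨P, Q ++ [a], R, by rw [h1]; simp, ?_, ?_⟩
        · rw [h2]; simp [invRev_eq]
        · rw [← h3]
          have : FreeGroup.Red.Step (x ++ (a.1, a.2) :: (a.1, !a.2) :: y) (x ++ y) := FreeGroup.Red.Step.not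
          have := FreeGroup.reduce.Step.eq this
          simpa [nv] using this

inductive Cn (r : ℕ) (W : Type)
  | mul (i j k : W)
  | con (i : W) (w : List (LW r))
  | non (i : W)

variable {W C : Type}

def Cn.holds (u : W → FreeGroup (Fin r)) : Cn r W → Prop
  | mul i j k => u i * u j = u k
  | con i w => u i = FreeGroup.mk w
  | non i => u i ≠ 1

def Cn.len : Cn r W → ℕ
  | mul _ _ _ => 0
  | con _ w => w.length
  | non _ => 1

def vr {V : Type} (x : V) (b : Bool := true) : Sy (Fin r) V := Sum.inr (x, b)
def cw {V : Type} (w : List (LW r)) : List (Sy (Fin r) V) := (w.map bl).map Sum.inl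

def eqs (cn : C → Cn r W) (first : C → LW r) :
    (C × Fin 3) × Bool → List (Sy (Fin r) (W ⊕ C × Fin 3)) := fun j =>
  let c := j.1.1
  let p : Fin 3 → W ⊕ C × Fin 3 := fun k => Sum.inr (c, k)
  match cn c with
  | .mul x y z =>
    if j.2 then [vr (Sum.inl (if j.1.2 = 0 then x else if j.1.2 = 1 then y else z))]
    else if j.1.2 = 0 then [vr (p 0), vr (p 1)] else if j.1.2 = 1 then [vr (p 1) false, vr (p 2)]
      else [vr (p 0), vr (p 2)]
  | .con x w => if j.1.2 = 0 then (if j.2 then [vr (Sum.inl x)] else cw w) else []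
  | .non x => if j.1.2 = 0 then (if j.2 then [vr (Sum.inl x)] else cw [first c] ++ [vr (p 0)]) else []

def groupB (r w c l : ℕ) : ℕ :=
  3 * solB r (w + c * 3) (c * 3) (l + 1 + 87 * c) (9 * c)

theorem nlet_cw {V : Type} (w : List (LW r)) : nlet (cw w : List (Sy (Fin r) V)) = w.length := by
  induction w with
  | nil => rfl
  | cons a w ih => simp only [nlet, cw, List.map_cons] at *; rw [List.countP_cons, ih]; rfl

theorem nvar_cw {V : Type} (w : List (LW r)) : nvar (cw w : List (Sy (Fin r) V)) = 0 := by
  have h1 := len_nn (cw w : List (Sy (Fin r) V))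
  have h2 : (cw w : List (Sy (Fin r) V)).length = w.length := by simp [cw]
  rw [nlet_cw] at h1; omega

theorem eqs_Bd [Fintype C] [Fintype W] (cn : C → Cn r W) (first : C → LW r) (l : ℕ)
    (hl : ∑ c, (cn c).len ≤ l) :
    Bd (l + 1 + 87 * Fintype.card C) (9 * Fintype.card C) (eqs cn first) := by
  have hsum : ∀ f : (C × Fin 3) × Bool → ℕ, ∑ j, f j = ∑ c, ∑ k, (f ((c, k), true) + f ((c, k), false)) := by
    intro f
    rw [Fintype.sum_prod_type, Fintype.sum_prod_type]
    simp
  refine ⟨?_, ?_, ?_⟩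
  · intro j a ha
    have : a.1.2.2 = 0 := by
      simp only [eqs] at ha
      split at ha <;> split_ifs at ha <;> simp [vr, cw] at ha
      · obtain ⟨b, ⟨-, rfl⟩ | ⟨-, rfl⟩⟩ := ha <;> rfl
      · rw [ha]; rfl
    omega
  · rw [hsum]
    refine le_trans (Finset.sum_le_sum (g := fun c => (cn c).len) ?_) (by omega)
    intro c _
    have hna : ∀ U W' : List (Sy (Fin r) (W ⊕ C × Fin 3)), nlet (U ++ W') = nlet U + nlet W' := fun U W => by simp [nlet]
    simp only [eqs]
    rw [Fin.sum_univ_three]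
    cases cn c with
    | mul x y z => simp [nlet, vr, Cn.len]
    | con x w => 
      simp only [Cn.len]
      simp only [if_true, Bool.false_eq_true, if_false, nlet_cw]
      simp [nlet, vr]
    | non x =>
      simp only [Cn.len]
      simp only [if_true, Bool.false_eq_true, if_false, hna, nlet_cw]
      simp [nlet, vr]
  · rw [hsum]
    refine le_trans (Finset.sum_le_sum (g := fun c => 9) ?_) (by simp [mul_comm])
    intro c _
    have ha : ∀ U W' : List (Sy (Fin r) (W ⊕ C × Fin 3)), nvar (U ++ W') = nvar U + nvar W' := fun U W => by simp [nvar]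
    have h0 : nvar ([] : List (Sy (Fin r) (W ⊕ C × Fin 3))) = 0 := rfl
    simp only [eqs]
    rw [Fin.sum_univ_three]
    cases cn c with
    | mul x y z => simp [vr, nvar_inr, h0]
    | con x w => simp [vr, nvar_inr, h0, nvar_cw]
    | non x => simp [vr, nvar_inr, h0, nvar_cw, ha]

theorem gsys (hr : 2 ≤ r) [Fintype C] [Fintype W] (cn : C → Cn r W) (l : ℕ)
    (hl : ∑ c, (cn c).len ≤ l) (hw : ∀ c i w, cn c = .con i w → FreeGroup.IsReduced w)
    (u : W → FreeGroup (Fin r)) (hu : ∀ c, (cn c).holds u) :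
    ∃ u' : W → FreeGroup (Fin r), (∀ c, (cn c).holds u') ∧
      ∀ i, (u' i).norm ≤ groupB r (Fintype.card W) (Fintype.card C) l := by
  classical
  haveI : Inhabited (Fin r) := ⟨⟨0, by omega⟩⟩
  let first : C → LW r := fun c => match cn c with
    | .non i => (u i).toWord.headD default
    | _ => default
  have hpq : ∀ c, ∃ t : Fin 3 → List (LW r), match cn c with
      | .mul i j k => (u i).toWord = t 0 ++ t 1 ∧ (u j).toWord = invRev (t 1) ++ t 2 ∧ (u k).toWord = t 0 ++ t 2
      | .con _ _ => True
      | .non i => (u i).toWord = first c :: t 0 := by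
    intro c
    have := hu c
    cases h : cn c with
    | mul i j k =>
      rw [h] at this
      obtain ⟨P, Q, R, h1, h2, h3⟩ := cancel _ _ (FreeGroup.isReduced_toWord (x := u i)) (FreeGroup.isReduced_toWord (x := u j))
      refine ⟨![P, Q, R], h1, h2, ?_⟩
      change u i * u j = u k at this
      rw [← this, FreeGroup.toWord_mul]; exact h3
    | con i w => exact ⟨fun _ => [], trivial⟩
    | non i =>
      rw [h] at this
      change u i ≠ 1 at this
      cases hi : (u i).toWord with
      | nil => exact absurd (FreeGroup.toWord_eq_nil_iff.1 hi) this
      | cons a w => exact ⟨fun _ => w, by simp [first, h, hi]⟩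
  choose t ht using hpq
  let σ : W ⊕ C × Fin 3 → List (Al (Fin r)) :=
    Sum.elim (fun i => (u i).toWord.map bl) (fun p => (t p.1 p.2).map bl)
  have hred : ∀ i, Red ((u i).toWord.map bl) := fun i => (Red_bl _).2 FreeGroup.isReduced_toWord
  have hcw : ∀ (τ : W ⊕ C × Fin 3 → List (Al (Fin r))) (w : List (LW r)) , eval τ (cw w) = w.map bl :=
    fun τ w => eval_map_inl τ _
  have hS : Sol (eqs cn first) σ := by
    rintro ⟨c, k⟩
    have h1 := ht c
    have h2 := hu c
    simp only [eqs]
    cases h : cn c with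
    | mul x y z =>
      rw [h] at h1
      obtain ⟨a1, a2, a3⟩ := h1
      fin_cases k
      · simp [vr, sb, σ, hred]; rw [a1]; simp
      · simp [vr, sb, σ, hred, invRev_map_bl]; rw [a2]; simp
      · simp [vr, sb, σ, hred]; rw [a3]; simp
    | con x w =>
      rw [h] at h2
      change u x = _ at h2
      have h3 := (hw c x w h).reduce_eq
      fin_cases k
      · simp [vr, sb, σ, hred, hcw]; rw [h2, FreeGroup.toWord_mk, h3]
      · simp [Red]
      · simp [Red]
    | non x =>
      rw [h] at h1
      simp only at h1
      fin_cases k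
      · simp [vr, sb, σ, hred, hcw, eval_append]; rw [h1]; simp
      · simp [Red]
      · simp [Red]
  obtain ⟨τ, hτ, hb⟩ := bound (l + 1 + 87 * Fintype.card C) (9 * Fintype.card C)
    (by simp; omega) _ (eqs_Bd cn first l hl) σ hS
  refine ⟨fun i => mm hr (τ (Sum.inl i)), ?_, ?_⟩
  · intro c
    have k0 := hτ (c, 0)
    have k1 := hτ (c, 1)
    have k2 := hτ (c, 2)
    simp only [eqs] at k0 k1 k2
    cases h : cn c with
    | mul x y z =>
      simp [h, vr, sb] at k0 k1 k2
      simp only [Cn.holds]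
      rw [k0.1, k1.1, k2.1, mm_append, mm_append, mm_append, mm_inv]; group
    | con x w =>
      simp [h, vr, sb, hcw] at k0
      simp only [Cn.holds]
      rw [k0.1, mm_bl]
    | non x =>
      simp [h, vr, sb, hcw, eval_append] at k0
      simp only [Cn.holds]
      intro hm
      rw [k0.1] at hm k0
      have h3 := (ps_red hr _ k0.2).reduce_eq
      have h4 := congrArg FreeGroup.toWord hm
      rw [mm, FreeGroup.toWord_mk, h3] at h4
      simp [ps_bl] at h4
  · intro i
    have h1 : (τ (Sum.inl i)).length ≤ wt τ :=
      Finset.single_le_sum (f := fun x => (τ x).length) (by simp) (Finset.mem_univ _)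
    have h2 : ∀ w : List (Al (Fin r)), (w.flatMap (ps hr)).length ≤ 3 * w.length := by
      intro w
      induction w with
      | nil => simp
      | cons a w ih =>
        have := ps_len hr a
        rw [List.flatMap_cons, List.length_append, List.length_cons]; omega
    refine FreeGroup.norm_mk_le.trans ((h2 _).trans ?_)
    rw [groupB]
    simp only [Fintype.card_fin, Fintype.card_sum, Fintype.card_prod] at hb
    omega

end
end Mak

namespace Mak
section
variable {r : ℕ}

def finB (r n : ℕ) : ℕ := groupB r (n+1) ((n+1)*(n+1) + ((n+1) + (n+1))) ((n+1)*n + (n+1))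

theorem gsysS (hr : 2 ≤ r) (n : ℕ) (S : Finset (FreeGroup (Fin r))) (hS : S.card ≤ n) :
    ∃ f : FreeGroup (Fin r) → FreeGroup (Fin r), (∀ x ∈ S, ∀ y ∈ S, x * y ∈ S → f (x * y) = f x * f y) ∧
      (∀ x ∈ S, x.norm ≤ n → f x = x) ∧ (f 1 = 1) ∧ (∀ x ∈ S, x⁻¹ ∈ S → f x⁻¹ = (f x)⁻¹) ∧
      (∀ x ∈ S, x ≠ 1 → f x ≠ 1) ∧ ∀ x, (f x).norm ≤ finB r n := by
  classical
  have : Nonempty (Fin r) := ⟨⟨0, by omega⟩⟩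
  obtain ⟨T, hT, hc⟩ := Infinite.exists_superset_card_eq (insert 1 S) (n+1)
    ((Finset.card_insert_le _ _).trans (by omega))
  have h1 : (1 : FreeGroup (Fin r)) ∈ T := hT (by simp)
  have hST : S ⊆ T := fun x hx => hT (by simp [hx])
  let o : T := ⟨1, h1⟩
  let cn : (T × T) ⊕ (T ⊕ T) → Cn r T := fun c => match c with
    | .inl p => if h : p.1.1 * p.2.1 ∈ T then .mul p.1 p.2 ⟨_, h⟩ else .con o []
    | .inr (.inl x) => if x.1.norm ≤ n then .con x x.1.toWord else .con o []
    | .inr (.inr x) => if x.1 = 1 then .con o [] else .non x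
  obtain ⟨u, hu, hb⟩ := gsys hr cn ((n+1)*n + (n+1)) (by
      rw [Fintype.sum_sum_type, Fintype.sum_sum_type]
      have a1 : ∑ x : T × T, (cn (.inl x)).len ≤ 0 := by
        rw [Nat.le_zero, Finset.sum_eq_zero_iff]
        intro x _
        simp only [cn]; split_ifs <;> rfl
      have a2 : ∑ x : T, (cn (.inr (.inl x))).len ≤ (n+1) * n := by
        refine (Finset.sum_le_card_nsmul _ _ n ?_).trans (by simp [hc])
        intro x _
        simp only [cn]; split_ifs with h
        · exact h
        · simp [Cn.len]
      have a3 : ∑ x : T, (cn (.inr (.inr x))).len ≤ (n+1) := by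
        refine (Finset.sum_le_card_nsmul _ _ 1 ?_).trans (by simp [hc])
        intro x _
        simp only [cn]; split_ifs with h <;> simp [Cn.len]
      omega) (by
      rintro (c | c | c) i w h <;> simp only [cn] at h <;> split_ifs at h
      · cases h; exact FreeGroup.IsReduced.nil
      · cases h; exact FreeGroup.isReduced_toWord
      · cases h; exact FreeGroup.IsReduced.nil
      · cases h; exact FreeGroup.IsReduced.nil) (fun x => x.1) (by
      rintro (c | c | c) <;> simp only [cn] <;> split_ifs with h <;> first | exact h | rfl | exact FreeGroup.mk_toWord.symm)
  have ho : u o = 1 := by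
    have := hu (.inr (.inr o))
    simpa [cn, o, Cn.holds, ← FreeGroup.one_eq_mk] using this
  have hmul : ∀ x y : T, ∀ h : x.1 * y.1 ∈ T, u ⟨_, h⟩ = u x * u y := by
    intro x y h
    have := hu (.inl (x, y))
    simp only [cn, h, dif_pos, Cn.holds] at this
    exact this.symm
  refine ⟨fun x => if h : x ∈ T then u ⟨x, h⟩ else 1, ?_, ?_, ?_, ?_, ?_, ?_⟩
  · intro x hx y hy hxy
    simp only [hST hx, hST hy, hST hxy, dif_pos]
    exact hmul ⟨x, _⟩ ⟨y, _⟩ _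
  · intro x hx hn
    simp only [hST hx, dif_pos]
    have := hu (.inr (.inl ⟨x, hST hx⟩))
    simpa [cn, hn, Cn.holds, FreeGroup.mk_toWord] using this
  · simp only [h1, dif_pos]; exact ho
  · intro x hx hx'
    simp only [hST hx, hST hx', dif_pos]
    have := hmul ⟨x, hST hx⟩ ⟨x⁻¹, hST hx'⟩ (by simp [h1])
    rw [eq_inv_iff_mul_eq_one, ← mul_eq_one_comm, ← this]
    exact (congrArg u (Subtype.ext (mul_inv_cancel x) : _ = o)).trans ho
  · intro x hx hn
    simp only [hST hx, dif_pos]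
    have := hu (.inr (.inr ⟨x, hST hx⟩))
    simpa [cn, hn, Cn.holds] using this
  · intro x
    simp only []
    split_ifs with h
    · refine (hb _).trans ?_
      simp [hc, finB]
    · simp
end
end Mak

open FirstOrder FirstOrder.Language
namespace Mak
section
variable {r : ℕ}

abbrev GF (r : ℕ) := groupLang[[FreeGroup (Fin r)]]
abbrev Tm (r k : ℕ) := (GF r).Term (Empty ⊕ Fin k)
abbrev Fm (r k : ℕ) := (GF r).BoundedFormula Empty k
abbrev FG (r : ℕ) := FreeGroup (Fin r)

def fMul : (GF r).Functions 2 := Sum.inl GroupFunc.mul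
def fInv : (GF r).Functions 1 := Sum.inl GroupFunc.inv
def fOne : (GF r).Functions 0 := Sum.inl GroupFunc.one
def fCon (g : FG r) : (GF r).Functions 0 := Sum.inr g

def tMul {k : ℕ} (s t : Tm r k) : Tm r k := Term.func fMul ![s, t]
def tInv {k : ℕ} (s : Tm r k) : Tm r k := Term.func fInv ![s]
def tOne {k : ℕ} : Tm r k := Term.func fOne ![]
def tCon {k : ℕ} (g : FG r) : Tm r k := Term.func (fCon g) ![]
def tVar {k : ℕ} (i : Fin k) : Tm r k := Term.var (Sum.inr i)

theorem tm_ind {k : ℕ} {P : Tm r k → Prop} (hm : ∀ s t, P s → P t → P (tMul s t))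
    (hi : ∀ s, P s → P (tInv s)) (ho : P tOne) (hc : ∀ g, P (tCon g)) (hv : ∀ i, P (tVar i)) (t : Tm r k) : P t := by
  induction t with
  | var x =>
    obtain x | x := x
    · exact x.elim
    · exact hv x
  | @func n f ts ih =>
    obtain f | f := f
    · cases f with
      | mul =>
        have := hm (ts 0) (ts 1) (ih 0) (ih 1)
        have e : ![ts 0, ts 1] = ts := by ext i; fin_cases i <;> rfl
        rw [tMul, e] at this; exact this
      | inv =>
        have := hi (ts 0) (ih 0)
        have e : ![ts 0] = ts := by ext i; fin_cases i; rfl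
        rw [tInv, e] at this; exact this
      | one =>
        have e : ![] = ts := by ext i; exact i.elim0
        rw [tOne, e] at ho; exact ho
    · match n, f, ts with
      | 0, f, ts =>
        have e : ![] = ts := by ext i; exact i.elim0
        have := hc f
        subst e; exact this
      | n+1, f, ts => exact PEmpty.elim f

def tv {k : ℕ} (xs : Fin k → FG r) (t : Tm r k) : FG r := t.realize (Sum.elim (default : Empty → FG r) xs)

variable {k : ℕ} (xs : Fin k → FG r)
@[simp] theorem tv_mul (s t : Tm r k) : tv xs (tMul s t) = tv xs s * tv xs t := rfl
@[simp] theorem tv_inv (s : Tm r k) : tv xs (tInv s) = (tv xs s)⁻¹ := rfl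
@[simp] theorem tv_one : tv xs (tOne : Tm r k) = 1 := rfl
@[simp] theorem tv_con (g : FG r) : tv xs (tCon g : Tm r k) = g := rfl
@[simp] theorem tv_var (i : Fin k) : tv xs (tVar i : Tm r k) = xs i := rfl

/- token codes -/
def te (t : Tm r k) : List ℕ := t.listEncode.map Encodable.encode

def cMul : ℕ := 2 * Nat.pair 2 0 + 1
def cInv : ℕ := 2 * Nat.pair 1 0 + 1
def cOne : ℕ := 2 * Nat.pair 0 0 + 1
def cCon (c : ℕ) : ℕ := 2 * Nat.pair 0 (2 * c + 1) + 1
def cVar (i : ℕ) : ℕ := 2 * (2 * i + 1)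

theorem te_mul (s t : Tm r k) : te (tMul s t) = cMul :: (te s ++ te t) := by
  simp only [te, tMul, Term.listEncode, List.map_cons]
  congr 1
  simp [List.finRange_succ]
theorem te_inv (s : Tm r k) : te (tInv s) = cInv :: te s := by
  simp only [te, tInv, Term.listEncode, List.map_cons]
  congr 1
  simp [List.finRange_succ]
theorem te_one : te (tOne : Tm r k) = [cOne] := rfl
theorem te_con (g : FG r) : te (tCon g : Tm r k) = [cCon (Encodable.encode g.toWord)] := rfl
theorem te_var (i : Fin k) : te (tVar i : Tm r k) = [cVar i] := rfl

theorem encode_tm (t : Tm r k) : Encodable.encode t = Encodable.encode (te t) := by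
  change Encodable.encode t.listEncode = _
  rw [te]
  induction t.listEncode with
  | nil => rfl
  | cons a l ih => rw [List.map_cons, Encodable.encode_list_cons, Encodable.encode_list_cons, ih]; rfl

def fvl {k : ℕ} (xs : Fin k → FG r) (φ : Fm r k) : Prop := φ.Realize (default : Empty → FG r) xs

def fe (φ : Fm r k) : List ℕ := φ.listEncode.map Encodable.encode

def cTm (k : ℕ) (l : List ℕ) : ℕ := 2 * Nat.pair k (Encodable.encode l)
def cImp : ℕ := 3
def cAll : ℕ := 7
def cBot (n : ℕ) : ℕ := 2 * (2 * (n + 2) + 1) + 1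

theorem fe_bot : fe (BoundedFormula.falsum : Fm r k) = [cBot k] := rfl
theorem fe_eq (s t : Tm r k) : fe (BoundedFormula.equal s t) = [cTm k (te s), cTm k (te t)] := by
  simp only [cTm, ← encode_tm]; rfl
theorem fe_imp (φ ψ : Fm r k) : fe (φ.imp ψ) = cImp :: (fe φ ++ fe ψ) := by
  simp only [fe, BoundedFormula.listEncode, List.cons_append, List.map_cons, List.map_append]; rfl
theorem fe_all (φ : Fm r (k+1)) : fe φ.all = cAll :: fe φ := rfl

theorem fv_eq (s t : Tm r k) : fvl xs (BoundedFormula.equal s t) ↔ tv xs s = tv xs t := Iff.rfl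
theorem fv_imp (φ ψ : Fm r k) : fvl xs (φ.imp ψ) ↔ (fvl xs φ → fvl xs ψ) := Iff.rfl
theorem fv_bot : ¬ fvl xs (BoundedFormula.falsum : Fm r k) := id

theorem qf_ind {P : Fm r k → Prop} (hb : P .falsum) (he : ∀ s t, P (.equal s t))
    (hi : ∀ φ ψ, P φ → P ψ → P (φ.imp ψ)) (φ : Fm r k) (h : φ.IsQF) : P φ := by
  induction h with
  | falsum => exact hb
  | of_isAtomic h =>
    cases h with
    | equal s t => exact he s t
    | rel R => obtain R | R := R <;> exact Empty.elim R
  | imp _ _ h1 h2 => exact hi _ _ h1 h2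

/- small solutions -/
def esum (l : List ℕ) : ℕ := (l.map (· + 1)).sum

theorem esum_append (l l' : List ℕ) : esum (l ++ l') = esum l + esum l' := by simp [esum]
theorem esum_cons (a : ℕ) (l : List ℕ) : esum (a :: l) = a + 1 + esum l := by simp [esum]
theorem esum_nil : esum [] = 0 := rfl

theorem esum_le (l : List ℕ) : esum l ≤ Encodable.encode l := by
  induction l with
  | nil => simp [esum]
  | cons a l ih =>
    have := Nat.add_le_pair a (Encodable.encode l)
    rw [esum_cons, Encodable.encode_list_cons, Nat.succ_eq_add_one]
    simp only [Encodable.encode_nat]; omega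

theorem norm_le_code (g : FG r) : g.norm ≤ Encodable.encode g.toWord := by
  rw [FreeGroup.norm]
  generalize g.toWord = l
  induction l with
  | nil => simp
  | cons a l ih =>
    have := Nat.add_le_pair (Encodable.encode a) (Encodable.encode l)
    rw [Encodable.encode_list_cons, Nat.succ_eq_add_one, List.length_cons]; omega

def Hm (n : ℕ) (S : Finset (FG r)) (f : FG r → FG r) : Prop :=
  (∀ x ∈ S, ∀ y ∈ S, x * y ∈ S → f (x * y) = f x * f y) ∧
      (∀ x ∈ S, x.norm ≤ n → f x = x) ∧ (f 1 = 1) ∧ (∀ x ∈ S, x⁻¹ ∈ S → f x⁻¹ = (f x)⁻¹) ∧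
      (∀ x ∈ S, x ≠ 1 → f x ≠ 1)

theorem tm_small (t : Tm r k) : ∃ S : Finset (FG r), S.card ≤ esum (te t) ∧ tv xs t ∈ S ∧
    ∀ n f S', S ⊆ S' → esum (te t) ≤ n → Hm n S' f → tv (fun i => f (xs i)) t = f (tv xs t) := by
  classical
  induction t using tm_ind with
  | hm s t hs ht =>
    obtain ⟨A, a1, a2, a3⟩ := hs
    obtain ⟨B, b1, b2, b3⟩ := ht
    rw [te_mul, esum_cons, esum_append]
    refine ⟨insert (tv xs (tMul s t)) (A ∪ B), ?_, by simp, ?_⟩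
    · have h1 := Finset.card_insert_le (tv xs (tMul s t)) (A ∪ B)
      have h2 := Finset.card_union_le A B
      omega
    · intro n f S' hS hn hf
      rw [tv_mul, a3 n f S' (fun x hx => hS (by simp [hx])) (by omega) hf,
        b3 n f S' (fun x hx => hS (by simp [hx])) (by omega) hf, tv_mul]
      exact (hf.1 _ (hS (by simp [a2])) _ (hS (by simp [b2])) (hS (by simp))).symm
  | hi s hs =>
    obtain ⟨A, a1, a2, a3⟩ := hs
    rw [te_inv, esum_cons]
    refine ⟨insert (tv xs (tInv s)) A, ?_, by simp, ?_⟩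
    · have h1 := Finset.card_insert_le (tv xs (tInv s)) A
      omega
    · intro n f S' hS hn hf
      rw [tv_inv, a3 n f S' (fun x hx => hS (by simp [hx])) (by omega) hf, tv_inv]
      exact (hf.2.2.2.1 _ (hS (by simp [a2])) (hS (by simp))).symm
  | ho =>
    refine ⟨{1}, by simp [te_one, esum_cons]; omega, by simp, ?_⟩
    intro n f S' hS hn hf
    simp [hf.2.2.1]
  | hc g =>
    have h1 := Nat.right_le_pair 0 (2 * (Encodable.encode g.toWord) + 1)
    have h2 := norm_le_code g
    rw [te_con, esum_cons, esum_nil, cCon]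
    refine ⟨{g}, by simp, by simp, ?_⟩
    intro n f S' hS hn hf
    simp only [tv_con]
    exact (hf.2.1 _ (hS (by simp)) (by omega)).symm
  | hv i =>
    exact ⟨{xs i}, by simp [te_var, esum_cons]; omega, by simp, fun n f S' hS hn hf => by simp⟩

theorem fm_small (φ : Fm r k) (hφ : φ.IsQF) : ∃ S : Finset (FG r), S.card ≤ esum (fe φ) ∧
    ∀ n f S', S ⊆ S' → esum (fe φ) ≤ n → Hm n S' f → (fvl (fun i => f (xs i)) φ ↔ fvl xs φ) := by
  classical
  refine qf_ind (P := fun φ => ∃ S : Finset (FG r), S.card ≤ esum (fe φ) ∧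
    ∀ n f S', S ⊆ S' → esum (fe φ) ≤ n → Hm n S' f → (fvl (fun i => f (xs i)) φ ↔ fvl xs φ)) ?_ ?_ ?_ φ hφ
  · exact ⟨∅, by simp, fun n f S' _ _ _ => Iff.rfl⟩
  · intro s t
    obtain ⟨A, a1, a2, a3⟩ := tm_small xs s
    obtain ⟨B, b1, b2, b3⟩ := tm_small xs t
    have s1 := esum_le (te s)
    have s2 := esum_le (te t)
    have p1 := Nat.right_le_pair k (Encodable.encode (te s))
    have p2 := Nat.right_le_pair k (Encodable.encode (te t))
    have hle : esum (te s) + esum (te t) + 1 ≤ esum (fe (BoundedFormula.equal s t)) := by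
      rw [fe_eq, esum_cons, esum_cons, esum_nil, cTm, cTm]; omega
    generalize esum (fe (BoundedFormula.equal s t)) = e at *
    refine ⟨insert (tv xs s * (tv xs t)⁻¹) (A ∪ B), ?_, ?_⟩
    · have h1 := Finset.card_insert_le (tv xs s * (tv xs t)⁻¹) (A ∪ B)
      have h2 := Finset.card_union_le A B
      omega
    · intro n f S' hS hn hf
      rw [fv_eq, fv_eq, a3 n f S' (fun x hx => hS (by simp [hx])) (by omega) hf,
        b3 n f S' (fun x hx => hS (by simp [hx])) (by omega) hf]
      constructor
      · intro h
        by_contra hne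
        have hd := hf.1 (tv xs s * (tv xs t)⁻¹) (hS (by simp)) (tv xs t) (hS (by simp [b2]))
          (hS (by simp [a2]))
        rw [inv_mul_cancel_right, h] at hd
        refine hf.2.2.2.2 (tv xs s * (tv xs t)⁻¹) (hS (by simp)) ?_ ?_
        · rwa [Ne, mul_inv_eq_one]
        · exact (right_eq_mul.1 hd)
      · intro h; rw [h]
  · intro φ ψ h1 h2
    obtain ⟨A, a1, a3⟩ := h1
    obtain ⟨B, b1, b3⟩ := h2
    rw [fe_imp, esum_cons, esum_append]
    refine ⟨A ∪ B, ?_, ?_⟩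
    · have h2 := Finset.card_union_le A B
      omega
    · intro n f S' hS hn hf
      rw [fv_imp, fv_imp, a3 n f S' (fun x hx => hS (by simp [hx])) (by omega) hf,
        b3 n f S' (fun x hx => hS (by simp [hx])) (by omega) hf]

theorem small (hr : 2 ≤ r) (φ : Fm r k) (hφ : φ.IsQF) (n : ℕ) (hn : esum (fe φ) ≤ n)
    (h : fvl xs φ) : ∃ ys : Fin k → FG r, fvl ys φ ∧ ∀ i, (ys i).norm ≤ finB r n := by
  obtain ⟨S, h1, h2⟩ := fm_small xs φ hφ
  obtain ⟨f, f1, f2, f3, f4, f5, f6⟩ := gsysS hr n S (by omega)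
  exact ⟨fun i => f (xs i), (h2 n f S subset_rfl (by omega) ⟨f1, f2, f3, f4, f5⟩).2 h, fun i => f6 _⟩

end
end Mak

open FirstOrder FirstOrder.Language
namespace Mak
section
variable {r : ℕ}

abbrev WD (r : ℕ) := List (LW r)

def opMul (s : List (WD r)) : Option (List (WD r)) :=
  s.head?.bind fun x => s.tail.head?.map fun y => (x ++ y) :: s.tail.tail
def opInv (s : List (WD r)) : Option (List (WD r)) :=
  s.head?.map fun x => FreeGroup.invRev x :: s.tail
def opCon (c : ℕ) (s : List (WD r)) : Option (List (WD r)) :=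
  (Encodable.decode (α := WD r) ((Nat.unpair (c / 2)).2 / 2)).bind fun w =>
    if c = cCon (Encodable.encode w) ∧ FreeGroup.reduce w = w then some (w :: s) else none

def tst (a : List (WD r)) (k c : ℕ) (s : List (WD r)) : Option (List (WD r)) :=
  if c = cMul then opMul s
  else if c = cInv then opInv s
  else if c = cOne then some ([] :: s)
  else if c = cVar (c / 4) ∧ c / 4 < k then some (a.getD (c / 4) [] :: s)
  else opCon c s

def trun (a : List (WD r)) (k : ℕ) (l : List ℕ) : Option (List (WD r)) :=
  l.foldr (fun c s => s.bind (tst a k c)) (some [])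

def asg (a : List (WD r)) (k : ℕ) : Fin k → FG r := fun i => FreeGroup.mk (a.getD i [])

def TR (a : List (WD r)) (k : ℕ) (v : WD r) (t : Tm r k) : Prop := FreeGroup.mk v = tv (asg a k) t

theorem trun_sound (a : List (WD r)) (k : ℕ) (l : List ℕ) (st) (h : trun a k l = some st) :
    ∃ ts : List (Tm r k), l = ts.flatMap te ∧ List.Forall₂ (TR a k) st ts := by
  induction l generalizing st with
  | nil => cases h; exact ⟨[], rfl, .nil⟩
  | cons c l ih =>
    rw [trun, List.foldr_cons, Option.bind_eq_some_iff] at h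
    obtain ⟨s, h1, h2⟩ := h
    obtain ⟨ts, e1, e2⟩ := ih s h1
    subst e1
    rw [tst] at h2
    split_ifs at h2 with c1 c2 c3 c4
    · match s, ts, e2, h2 with
      | [], _, _, h2 => simp [opMul] at h2
      | [x], _, _, h2 => simp [opMul] at h2
      | x :: y :: s, _, .cons (b := t1) hx (.cons (b := t2) (l₂ := ts) hy e2), h2 =>
        simp only [opMul, List.head?_cons, List.tail_cons, Option.bind_some, Option.map_some, Option.some.injEq] at h2
        subst h2
        refine ⟨tMul t1 t2 :: ts, by simp [te_mul, c1], .cons ?_ e2⟩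
        rw [TR] at *
        rw [tv_mul, ← hx, ← hy, FreeGroup.mul_mk]
    · match s, ts, e2, h2 with
      | [], _, _, h2 => simp [opInv] at h2
      | x :: s, _, .cons (b := t1) (l₂ := ts) hx e2, h2 =>
        simp only [opInv, List.head?_cons, List.tail_cons, Option.map_some, Option.some.injEq] at h2
        subst h2
        refine ⟨tInv t1 :: ts, by simp [te_inv, c2], .cons ?_ e2⟩
        rw [TR] at *
        rw [tv_inv, ← hx, FreeGroup.inv_mk]
    · cases h2
      exact ⟨tOne :: ts, by simp [te_one, c3], .cons rfl e2⟩
    · cases h2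
      exact ⟨tVar ⟨c / 4, c4.2⟩ :: ts, by simp [te_var, ← c4.1], .cons rfl e2⟩
    · rw [opCon, Option.bind_eq_some_iff] at h2
      obtain ⟨w, -, h2⟩ := h2
      split_ifs at h2 with h3
      cases h2
      refine ⟨tCon (FreeGroup.mk w) :: ts, ?_, .cons rfl e2⟩
      simp [te_con, FreeGroup.toWord_mk, h3.2, ← h3.1]

theorem trun_complete (a : List (WD r)) (k : ℕ) (t : Tm r k) : ∃ v, TR a k v t ∧
    ∀ l st, trun a k l = some st → trun a k (te t ++ l) = some (v :: st) := by
  have hc : ∀ c l st st', trun a k l = some st → tst a k c st = some st' → trun a k (c :: l) = some st' := by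
    intro c l st st' h h'
    rw [trun] at *
    rw [List.foldr_cons, h]; exact h'
  have p1 : ∀ i, cVar i ≠ cMul := fun i => by rw [cVar, cMul]; omega
  have p2 : ∀ i, cVar i ≠ cInv := fun i => by rw [cVar, cInv]; omega
  have p3 : ∀ i, cVar i ≠ cOne := fun i => by rw [cVar, cOne]; omega
  have q1 : ∀ i, cCon i ≠ cMul := fun i h => by
    have : Nat.pair 0 (2 * i + 1) = Nat.pair 2 0 := by rw [cCon, cMul] at h; omega
    rw [Nat.pair_eq_pair] at this; omega
  have q2 : ∀ i, cCon i ≠ cInv := fun i h => by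
    have : Nat.pair 0 (2 * i + 1) = Nat.pair 1 0 := by rw [cCon, cInv] at h; omega
    rw [Nat.pair_eq_pair] at this; omega
  have q3 : ∀ i, cCon i ≠ cOne := fun i h => by
    have : Nat.pair 0 (2 * i + 1) = Nat.pair 0 0 := by rw [cCon, cOne] at h; omega
    rw [Nat.pair_eq_pair] at this; omega
  have q4 : ∀ i j, cCon i ≠ cVar j := fun i h => by rw [cVar, cCon]; omega
  induction t using tm_ind with
  | hm s t hs ht =>
    obtain ⟨v, h1, h2⟩ := hs
    obtain ⟨w, h3, h4⟩ := ht
    refine ⟨v ++ w, ?_, ?_⟩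
    · rw [TR] at *
      rw [tv_mul, ← h1, ← h3, FreeGroup.mul_mk]
    · intro l st h
      rw [te_mul, List.cons_append, List.append_assoc]
      exact hc _ _ _ _ (h2 _ _ (h4 _ _ h)) (by simp [tst, opMul])
  | hi s hs =>
    obtain ⟨v, h1, h2⟩ := hs
    refine ⟨FreeGroup.invRev v, ?_, ?_⟩
    · rw [TR] at *
      rw [tv_inv, ← h1, FreeGroup.inv_mk]
    · intro l st h
      rw [te_inv, List.cons_append]
      exact hc _ _ _ _ (h2 _ _ h) (by simp [tst, opInv, cInv, cMul])
  | ho =>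
    refine ⟨[], rfl, ?_⟩
    intro l st h
    rw [te_one, List.singleton_append]
    exact hc _ _ _ _ h (by simp [tst, cInv, cMul, cOne])
  | hc g =>
    refine ⟨g.toWord, ?_, ?_⟩
    · rw [TR, tv_con, FreeGroup.mk_toWord]
    · intro l st h
      rw [te_con, List.singleton_append]
      refine hc _ _ _ _ h ?_
      rw [tst, if_neg (q1 _), if_neg (q2 _), if_neg (q3 _), if_neg (fun h => q4 _ _ h.1), opCon]
      have : (Nat.unpair (cCon (Encodable.encode g.toWord) / 2)).2 / 2 = Encodable.encode g.toWord := by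
        have : cCon (Encodable.encode g.toWord) / 2 = Nat.pair 0 (2 * Encodable.encode g.toWord + 1) := by
          rw [cCon]; omega
        rw [this, Nat.unpair_pair]; simp only; omega
      rw [this, Encodable.encodek, Option.bind_some, if_pos ⟨rfl, FreeGroup.reduce_toWord g⟩]
  | hv i =>
    refine ⟨a.getD i [], rfl, ?_⟩
    intro l st h
    rw [te_var, List.singleton_append]
    refine hc _ _ _ _ h ?_
    have : cVar i / 4 = i := by rw [cVar]; omega
    rw [tst, if_neg (p1 _), if_neg (p2 _), if_neg (p3 _), this, if_pos ⟨rfl, i.2⟩]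

abbrev It (r : ℕ) := (ℕ × WD r) ⊕ (ℕ × Bool)

def fTm (k : ℕ) (v : WD r) (s : List (It r)) : Option (List (It r)) :=
  match s.head?.bind Sum.getLeft? with
  | none => some (Sum.inl (k, v) :: s)
  | some p => if p.1 = k then some (Sum.inr (k, decide (FreeGroup.reduce v = FreeGroup.reduce p.2)) :: s.tail) else none

def fImp (s : List (It r)) : Option (List (It r)) :=
  (s.head?.bind Sum.getRight?).bind fun p => (s.tail.head?.bind Sum.getRight?).bind fun q =>
    if p.1 = q.1 then some (Sum.inr (p.1, !p.2 || q.2) :: s.tail.tail) else none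

def fTk (a : List (WD r)) (k : ℕ) (l : List ℕ) (s : List (It r)) : Option (List (It r)) :=
  (trun a k l).bind fun st => st.head?.bind fun v => if st.tail = [] then fTm k v s else none

def tkL (c : ℕ) : List ℕ := Denumerable.ofNat (List ℕ) (Nat.unpair (c / 2)).2

def fst (a : List (WD r)) (c : ℕ) (s : List (It r)) : Option (List (It r)) :=
  if c = cImp then fImp s
  else if c = cBot ((c - 11) / 4) then some (Sum.inr ((c - 11) / 4, false) :: s)
  else if c = cTm (Nat.unpair (c / 2)).1 (tkL c) then fTk a (Nat.unpair (c / 2)).1 (tkL c) s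
  else none

def frun (a : List (WD r)) (l : List ℕ) : Option (List (It r)) :=
  l.foldr (fun c s => s.bind (fst a c)) (some [])

abbrev Ob (r : ℕ) := (Σ k, Tm r k) ⊕ (Σ k, {φ : Fm r k // φ.IsQF})

def oe : Ob r → List ℕ
  | .inl t => [cTm t.1 (te t.2)]
  | .inr φ => fe φ.2.1

def OR (a : List (WD r)) : It r → Ob r → Prop
  | .inl p, .inl t => p.1 = t.1 ∧ TR a t.1 p.2 t.2
  | .inr p, .inr φ => p.1 = φ.1 ∧ (p.2 = true ↔ fvl (asg a φ.1) φ.2.1)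
  | _, _ => False

theorem frun_sound (a : List (WD r)) (l : List ℕ) (st) (h : frun a l = some st) :
    ∃ ts : List (Ob r), l = ts.flatMap oe ∧ List.Forall₂ (OR a) st ts := by
  induction l generalizing st with
  | nil => cases h; exact ⟨[], rfl, .nil⟩
  | cons c l ih =>
    rw [frun, List.foldr_cons, Option.bind_eq_some_iff] at h
    obtain ⟨s, h1, h2⟩ := h
    obtain ⟨ts, e1, e2⟩ := ih s h1
    subst e1
    rw [fst] at h2
    split_ifs at h2 with c1 c2 c3
    · match s, ts, e2, h2 with
      | [], _, _, h2 => simp [fImp] at h2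
      | [x], _, _, h2 => simp [fImp] at h2
      | .inl x :: y :: s, _, _, h2 => simp [fImp] at h2
      | .inr x :: .inl y :: s, _, _, h2 => simp [fImp] at h2
      | .inr x :: .inr y :: s, _, .cons (b := t1) hx (.cons (b := t2) (l₂ := ts) hy e2), h2 =>
        obtain t1 | ⟨m, φ, hφ⟩ := t1
        · exact hx.elim
        obtain t2 | ⟨m', ψ, hψ⟩ := t2
        · exact hy.elim
        obtain ⟨k1, b1⟩ := x
        obtain ⟨k2, b2⟩ := y
        obtain ⟨rfl, hx⟩ := hx
        obtain ⟨rfl, hy⟩ := hy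
        simp only [fImp, List.head?_cons, List.tail_cons, Option.bind_some, Sum.getRight?_inr] at h2
        split_ifs at h2 with he
        cases he
        cases h2
        refine ⟨.inr ⟨k1, φ.imp ψ, hφ.imp hψ⟩ :: ts, by simp [oe, fe_imp, c1], .cons ⟨rfl, ?_⟩ e2⟩
        rw [fv_imp, ← hx, ← hy]
        simp only
        cases b1 <;> cases b2 <;> simp
    · cases h2
      refine ⟨.inr ⟨(c - 11) / 4, .falsum, .falsum⟩ :: ts, by simp [oe, fe_bot, ← c2], .cons ⟨rfl, ?_⟩ e2⟩
      simp [fv_bot]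
    · generalize (Nat.unpair (c / 2)).1 = k at *
      generalize tkL c = tl at *
      rw [fTk, Option.bind_eq_some_iff] at h2
      obtain ⟨st', h3, h2⟩ := h2
      obtain ⟨us, hu1, hu2⟩ := trun_sound _ _ _ _ h3
      obtain - | ⟨ht, hu2⟩ := hu2
      · simp at h2
      obtain - | ⟨_, _⟩ := hu2
      swap
      · simp at h2
      · rename_i v t
        simp only [List.head?_cons, Option.bind_some, List.tail_cons, if_true] at h2
        simp only [List.flatMap_cons, List.flatMap_nil, List.append_nil] at hu1
        subst hu1
        rw [fTm] at h2
        match s, ts, e2, h2 with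
        | [], _, .nil, h2 =>
          cases h2
          exact ⟨[.inl ⟨k, t⟩], by simp [oe, c3], .cons ⟨rfl, ht⟩ .nil⟩
        | .inr x :: s, ts, e2, h2 =>
          cases h2
          exact ⟨.inl ⟨k, t⟩ :: ts, by simp [oe, c3], .cons ⟨rfl, ht⟩ e2⟩
        | .inl x :: s, _, .cons (b := t2) (l₂ := ts) hx e2, h2 =>
          obtain ⟨m, t2⟩ | t2 := t2
          swap
          · exact hx.elim
          obtain ⟨k1, v1⟩ := x
          obtain ⟨rfl, hx⟩ := hx
          simp only [List.head?_cons, Option.bind_some, List.tail_cons, Sum.getLeft?_inl] at h2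
          split_ifs at h2 with he
          subst he
          cases h2
          refine ⟨.inr ⟨k1, .equal t t2, .of_isAtomic (.equal t t2)⟩ :: ts, by simp [oe, fe_eq, c3], .cons ⟨rfl, ?_⟩ e2⟩
          rw [TR] at ht hx
          rw [fv_eq, ← ht, ← hx]
          simp only [decide_eq_true_eq]
          exact ⟨FreeGroup.reduce.exact, fun h => FreeGroup.reduce.sound h⟩

theorem frun_complete (a : List (WD r)) (k : ℕ) (φ : Fm r k) (hφ : φ.IsQF) : ∃ b : Bool, (b = true ↔ fvl (asg a k) φ) ∧
    ∀ l st, frun a l = some st → (st.head?.bind Sum.getLeft? = none) →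
      frun a (fe φ ++ l) = some (.inr (k, b) :: st) := by
  have hc : ∀ c l st st', frun a l = some st → fst a c st = some st' → frun a (c :: l) = some st' := by
    intro c l st st' h h'
    rw [frun] at *
    rw [List.foldr_cons, h]; exact h'
  have ht : ∀ t : Tm r k, ∃ v, TR a k v t ∧ ∀ s, fst a (cTm k (te t)) s = fTm k v s := by
    intro t
    obtain ⟨v, h1, h2⟩ := trun_complete a k t
    refine ⟨v, h1, fun s => ?_⟩
    have h3 := h2 [] [] rfl
    rw [List.append_nil] at h3
    have e : cTm k (te t) / 2 = Nat.pair k (Encodable.encode (te t)) := by rw [cTm]; omega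
    have e1 : (Nat.unpair (cTm k (te t) / 2)).1 = k := by rw [e, Nat.unpair_pair]
    have e2 : tkL (cTm k (te t)) = te t := by
      rw [tkL, e, Nat.unpair_pair]; exact Denumerable.ofNat_encode (te t)
    rw [fst, if_neg, if_neg, e1, e2, if_pos rfl, fTk, h3]
    · rfl
    · rw [cTm, cBot]; omega
    · rw [cTm, cImp]; omega
  refine qf_ind (P := fun φ => ∃ b : Bool, (b = true ↔ fvl (asg a k) φ) ∧
    ∀ l st, frun a l = some st → (st.head?.bind Sum.getLeft? = none) →
      frun a (fe φ ++ l) = some (.inr (k, b) :: st)) ?_ ?_ ?_ φ hφ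
  · refine ⟨false, by simp [fv_bot], ?_⟩
    intro l st h h'
    rw [fe_bot, List.singleton_append]
    refine hc _ _ _ _ h ?_
    have : (cBot k - 11) / 4 = k := by rw [cBot]; omega
    rw [fst, this, if_neg, if_pos rfl]
    rw [cBot, cImp]; omega
  · intro s t
    obtain ⟨v, h1, h2⟩ := ht s
    obtain ⟨w, h3, h4⟩ := ht t
    refine ⟨decide (FreeGroup.reduce v = FreeGroup.reduce w), ?_, ?_⟩
    · rw [TR] at h1 h3
      rw [fv_eq, ← h1, ← h3, decide_eq_true_eq]
      exact ⟨FreeGroup.reduce.exact, fun h => FreeGroup.reduce.sound h⟩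
    · intro l st h h'
      rw [fe_eq]
      refine hc _ _ _ _ (hc _ _ _ (.inl (k, w) :: st) h ?_) ?_
      · rw [h4, fTm, h']
      · rw [h2, fTm]; simp
  · rintro φ ψ ⟨b1, h1, h2⟩ ⟨b2, h3, h4⟩
    refine ⟨!b1 || b2, ?_, ?_⟩
    · rw [fv_imp, ← h1, ← h3]; cases b1 <;> cases b2 <;> simp
    · intro l st h h'
      rw [fe_imp, List.cons_append, List.append_assoc]
      refine hc _ _ _ _ (h2 _ _ (h4 _ _ h h') rfl) ?_
      simp [fst, fImp]

/- prefix and suffix of existential closures -/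
def pre : ℕ → List ℕ
  | 0 => []
  | n + 1 => pre n ++ [cImp, cAll, cImp]
def post : ℕ → List ℕ
  | 0 => []
  | n + 1 => [cBot (n + 1), cBot n] ++ post n

theorem fe_exs {k : ℕ} (φ : Fm r k) : fe (k := 0) φ.exs = pre k ++ fe φ ++ post k := by
  induction k with
  | zero => simp [pre, post, BoundedFormula.exs]
  | succ k ih =>
    rw [BoundedFormula.exs, ih, pre, post]
    have : fe φ.ex = [cImp, cAll, cImp] ++ fe φ ++ [cBot (k + 1), cBot k] := by
      change fe ((φ.imp .falsum).all.imp .falsum) = _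
      rw [fe_imp, fe_all, fe_imp, fe_bot, fe_bot]; simp
    rw [this]; simp

theorem ex_exs {k : ℕ} (φ : Fm r k) (h : IsExistential φ) : IsExistential (n := 0) φ.exs := by
  induction k with
  | zero => exact h
  | succ k ih => exact ih _ h.ex

theorem exs_of_ex {k : ℕ} (φ : Fm r k) (h : IsExistential φ) : ∃ m, ∃ θ : Fm r m, θ.IsQF ∧ θ.exs = φ.exs := by
  induction h with
  | of_isQF h => exact ⟨_, _, h, rfl⟩
  | ex _ ih => exact ih

theorem godel_eq (σ : (GF r).Sentence) : godelNumberWithConstants r σ = Encodable.encode (fe (k := 0) σ) := by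
  rw [godelNumberWithConstants, fe]
  induction σ.listEncode with
  | nil => rfl
  | cons a l ih => rw [List.map_cons, Encodable.encode_list_cons, Encodable.encode_list_cons, ih]; rfl

def accept (l : List ℕ) (a : List (WD r)) (m : ℕ) (th : List ℕ) : Prop :=
  l = pre m ++ th ++ post m ∧ frun a th = some [Sum.inr (m, true)]

theorem pred_iff (hr : 2 ≤ r) (n : ℕ) (A : Set (List (WD r)))
    (hA : ∀ a : List (WD r), a.length ≤ n → (∀ w ∈ a, w.length ≤ finB r n) → a ∈ A) :
    (∃ σ : (GF r).Sentence, godelNumberWithConstants r σ = n ∧ IsExistential σ ∧ FreeGroup (Fin r) ⊨ σ) ↔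
    ∃ m ≤ n, ∃ a ∈ A, ∃ th, accept (Denumerable.ofNat (List ℕ) n) a m th := by
  constructor
  · rintro ⟨σ, h1, h2, h3⟩
    obtain ⟨m, θ, hθ, he⟩ := exs_of_ex (k := 0) σ h2
    change _ = σ at he
    subst he
    rw [godel_eq, fe_exs] at h1
    obtain ⟨xs, hxs⟩ := BoundedFormula.realize_exs.1 h3
    have hsub : esum (pre m ++ fe θ ++ post m) ≤ n := by rw [← h1]; exact esum_le _
    rw [esum_append, esum_append] at hsub
    have hpost : m ≤ esum (post m) := by
      clear * -
      induction m with
      | zero => simp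
      | succ m ih => rw [post, esum_append, esum_cons]; omega
    obtain ⟨ys, hys, hb⟩ := small xs hr θ hθ n (by omega) (by unfold fvl; convert hxs)
    refine ⟨m, by omega, List.ofFn (fun i => (ys i).toWord), hA _ (by simp; omega) ?_, fe θ, ?_, ?_⟩
    · intro w hw
      obtain ⟨i, rfl⟩ := (List.mem_ofFn' _ _).1 hw
      exact hb i
    · rw [← h1]; exact Denumerable.ofNat_encode _
    · obtain ⟨b, c1, c2⟩ := frun_complete (List.ofFn (fun i => (ys i).toWord)) m θ hθ
      have e : asg (List.ofFn (fun i => (ys i).toWord)) m = ys := by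
        ext i
        simp [asg, FreeGroup.mk_toWord]
      rw [e] at c1
      have c3 := c2 [] [] rfl rfl
      rw [List.append_nil, c1.2 hys] at c3
      exact c3
  · rintro ⟨m, -, a, -, th, h1, h2⟩
    obtain ⟨ts, e1, e2⟩ := frun_sound _ _ _ h2
    obtain - | ⟨he, hn⟩ := e2
    cases hn
    rename_i o
    obtain o | ⟨m', φ, hφ⟩ := o
    · exact he.elim
    obtain ⟨rfl, he⟩ := he
    simp only [oe, List.flatMap_cons, List.flatMap_nil, List.append_nil] at e1
    subst e1
    refine ⟨φ.exs, ?_, ex_exs _ (.of_isQF hφ), ?_⟩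
    · rw [godel_eq, fe_exs]
      refine Eq.trans (congrArg _ h1.symm) ?_
      exact Denumerable.encode_ofNat n
    · exact BoundedFormula.realize_exs.2 ⟨asg a m, by have := he.1 rfl; unfold fvl at this; convert this⟩
end
end Mak

open FirstOrder FirstOrder.Language
namespace Mak
section
variable {r : ℕ} {σ : Type} [Primcodable σ]

theorem p_pow {x y : σ → ℕ} (hx : Primrec x) (hy : Primrec y) : Primrec fun z => x z ^ y z :=
  (Primrec₂.unpaired'.1 Nat.Primrec.pow).comp hx hy
theorem p_add {x y : σ → ℕ} (hx : Primrec x) (hy : Primrec y) : Primrec fun z => x z + y z :=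
  Primrec.nat_add.comp hx hy
theorem p_mul {x y : σ → ℕ} (hx : Primrec x) (hy : Primrec y) : Primrec fun z => x z * y z :=
  Primrec.nat_mul.comp hx hy
theorem p_iter {x y : σ → ℕ} (hx : Primrec x) (hy : Primrec y) :
    Primrec fun z => (fun v => x z * v + x z)^[y z] 0 :=
  Primrec.nat_iterate (h := fun z v => x z * v + x z) hy (Primrec.const 0)
    (p_add (p_mul (hx.comp Primrec.fst) Primrec.snd) (hx.comp Primrec.fst))

theorem p_dioB {x y : σ → ℕ} (hx : Primrec x) (hy : Primrec y) : Primrec fun z => dioB (x z) (y z) := by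
  unfold dioB
  exact p_iter (p_add hx (.const 2)) (p_pow (p_add (p_mul (.const 2) (p_mul hy hx)) (.const 1))
    (p_pow (p_add (p_mul (.const 2) hy) (.const 1)) hx))

theorem p_stepC {v K N : σ → ℕ} (hv : Primrec v) (hK : Primrec K) (hN : Primrec N) :
    Primrec fun z => stepC (v z) (K z) (N z) := by
  unfold stepC stepG
  exact p_mul (p_add hv (.const 1)) (p_mul (.const 4) (p_add (p_dioB
    (p_add (p_add (.const 1) (p_mul hv (.const 4))) (p_mul hK (.const 2)))
    (p_add (p_mul (.const 2) (p_add hK hN)) (.const 2))) (.const 1)))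

theorem p_solB {v i K N : σ → ℕ} (a : ℕ) (hv : Primrec v) (hi : Primrec i) (hK : Primrec K) (hN : Primrec N) :
    Primrec fun z => solB a (v z) (i z) (K z) (N z) := by
  unfold solB
  exact p_iter (p_stepC hv hK hN) (p_pow (p_pow (p_add (p_add (p_mul (p_mul (.const _) (p_mul (.const _) hK))
    (.const 2)) (p_mul hv (.const 2))) (.const 1)) (p_add hK hN)) (p_mul hi (.const 2)))

theorem p_groupB {w c l : σ → ℕ} (a : ℕ) (hw : Primrec w) (hc : Primrec c) (hl : Primrec l) :
    Primrec fun z => groupB a (w z) (c z) (l z) := by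
  unfold groupB
  exact p_mul (.const 3) (p_solB a (p_add hw (p_mul hc (.const 3))) (p_mul hc (.const 3))
    (p_add (p_add hl (.const 1)) (p_mul (.const 87) hc)) (p_mul (.const 9) hc))

theorem p_finB : Primrec (finB r) := by
  unfold finB
  have h : Primrec fun n : ℕ => n + 1 := p_add .id (.const 1)
  exact p_groupB r h (p_add (p_mul h h) (p_add h h)) (p_add (p_mul h .id) h)

theorem p_not {x : σ → Bool} (hx : Primrec x) : Primrec fun z => !(x z) := (Primrec.dom_finite _).comp hx

theorem p_reduce : Primrec (FreeGroup.reduce : WD r → WD r) := by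
  have h : Primrec₂ fun (_ : WD r) (p : LW r × WD r) =>
      (List.casesOn p.2 [p.1] fun hd tl => if p.1.1 = hd.1 ∧ p.1.2 = not hd.2 then tl else p.1 :: hd :: tl : WD r) := by
    refine Primrec.list_casesOn (f := fun q : WD r × (LW r × WD r) => q.2.2) (g := fun q => [q.2.1])
      (h := fun q t => if q.2.1.1 = t.1.1 ∧ q.2.1.2 = not t.1.2 then t.2 else q.2.1 :: t.1 :: t.2)
      (Primrec.snd.comp .snd) (Primrec.list_cons.comp (Primrec.fst.comp .snd) (.const [])) ?_
    have e1 : Primrec fun q : (WD r × (LW r × WD r)) × (LW r × WD r) => q.1.2.1 :=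
      Primrec.fst.comp (Primrec.snd.comp .fst)
    have e2 : Primrec fun q : (WD r × (LW r × WD r)) × (LW r × WD r) => q.2.1 := Primrec.fst.comp .snd
    have e3 : Primrec fun q : (WD r × (LW r × WD r)) × (LW r × WD r) => q.2.2 := Primrec.snd.comp .snd
    exact Primrec.ite (PrimrecPred.and (Primrec.eq.comp (Primrec.fst.comp e1) (Primrec.fst.comp e2))
      (Primrec.eq.comp (Primrec.snd.comp e1) (p_not (Primrec.snd.comp e2)))) e3
      (Primrec.list_cons.comp e1 (Primrec.list_cons.comp e2 e3))
  refine (Primrec.list_foldr Primrec.id (Primrec.const []) h).of_eq fun l => ?_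
  induction l with
  | nil => rfl
  | cons a l ih => rw [FreeGroup.reduce.cons, ← ih]; rfl

theorem p_invRev : Primrec (FreeGroup.invRev : WD r → WD r) :=
  Primrec.list_reverse.comp (Primrec.list_map .id
    ((Primrec.dom_finite (fun g : LW r => (g.1, !g.2))).comp Primrec.snd))

theorem p_opMul : Primrec (opMul : List (WD r) → _) := by
  unfold opMul
  have s2 : Primrec fun q : (List (WD r) × WD r) × WD r => q.1.1 := Primrec.fst.comp .fst
  exact Primrec.option_bind Primrec.list_head? (Primrec.option_map
    (Primrec.list_head?.comp (Primrec.list_tail.comp .fst))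
    (Primrec.list_cons.comp (Primrec.list_append.comp (Primrec.snd.comp .fst) .snd)
      (Primrec.list_tail.comp (Primrec.list_tail.comp s2))))

theorem p_opInv : Primrec (opInv : List (WD r) → _) := by
  unfold opInv
  exact Primrec.option_map Primrec.list_head?
    (Primrec.list_cons.comp (p_invRev.comp .snd) (Primrec.list_tail.comp .fst))

theorem p_cCon {x : σ → ℕ} (hx : Primrec x) : Primrec fun z => cCon (x z) :=
  p_add (p_mul (.const 2) (Primrec₂.natPair.comp (.const 0) (p_add (p_mul (.const 2) hx) (.const 1)))) (.const 1)
theorem p_cVar {x : σ → ℕ} (hx : Primrec x) : Primrec fun z => cVar (x z) :=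
  p_mul (.const 2) (p_add (p_mul (.const 2) hx) (.const 1))
theorem p_cBot {x : σ → ℕ} (hx : Primrec x) : Primrec fun z => cBot (x z) :=
  p_add (p_mul (.const 2) (p_add (p_mul (.const 2) (p_add hx (.const 2))) (.const 1))) (.const 1)
theorem p_cTm {x : σ → ℕ} {l : σ → List ℕ} (hx : Primrec x) (hl : Primrec l) : Primrec fun z => cTm (x z) (l z) :=
  p_mul (.const 2) (Primrec₂.natPair.comp hx (Primrec.encode.comp hl))

theorem p_div {x : σ → ℕ} (n : ℕ) (hx : Primrec x) : Primrec fun z => x z / n :=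
  Primrec.nat_div.comp hx (.const n)

theorem p_opCon : Primrec₂ (opCon : ℕ → List (WD r) → _) := by
  unfold opCon
  refine Primrec.option_bind (Primrec.decode.comp (p_div 2 (Primrec.snd.comp (Primrec.unpair.comp (p_div 2 .fst))))) ?_
  exact Primrec.ite (PrimrecPred.and (Primrec.eq.comp (Primrec.fst.comp .fst) (p_cCon (Primrec.encode.comp .snd)))
    (Primrec.eq.comp (p_reduce.comp .snd) .snd))
    (Primrec.option_some.comp (Primrec.list_cons.comp .snd (Primrec.snd.comp .fst))) (.const none)

theorem p_tst {a : σ → List (WD r)} {k c : σ → ℕ} {s : σ → List (WD r)} (ha : Primrec a) (hk : Primrec k)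
    (hc : Primrec c) (hs : Primrec s) : Primrec fun z => tst (a z) (k z) (c z) (s z) := by
  unfold tst
  exact Primrec.ite (Primrec.eq.comp hc (.const _)) (p_opMul.comp hs)
    (Primrec.ite (Primrec.eq.comp hc (.const _)) (p_opInv.comp hs)
    (Primrec.ite (Primrec.eq.comp hc (.const _)) (Primrec.option_some.comp (Primrec.list_cons.comp (.const _) hs))
    (Primrec.ite (PrimrecPred.and (Primrec.eq.comp hc (p_cVar (p_div 4 hc))) (Primrec.nat_lt.comp (p_div 4 hc) hk))
      (Primrec.option_some.comp (Primrec.list_cons.comp ((Primrec.list_getD []).comp ha (p_div 4 hc)) hs))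
      (p_opCon.comp hc hs))))

theorem p_trun {a : σ → List (WD r)} {k : σ → ℕ} {l : σ → List ℕ} (ha : Primrec a) (hk : Primrec k)
    (hl : Primrec l) : Primrec fun z => trun (a z) (k z) (l z) := by
  unfold trun
  refine Primrec.list_foldr (σ := Option (List (WD r))) (h := fun z p => p.2.bind (tst (a z) (k z) p.1)) hl (.const _) ?_
  refine Primrec.option_bind (Primrec.snd.comp .snd) ?_
  exact p_tst (ha.comp (Primrec.fst.comp .fst)) (hk.comp (Primrec.fst.comp .fst))
    (Primrec.fst.comp (Primrec.snd.comp .fst)) .snd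

theorem p_getLeft : Primrec (Sum.getLeft? : It r → _) :=
  (Primrec.sumCasesOn (h := fun _ _ => none) Primrec.id (Primrec.option_some.comp₂ Primrec₂.right)
    (Primrec.const none)).of_eq fun s => by cases s <;> rfl
theorem p_getRight : Primrec (Sum.getRight? : It r → _) :=
  (Primrec.sumCasesOn (g := fun _ _ => none) Primrec.id (Primrec.const none)
    (Primrec.option_some.comp₂ Primrec₂.right)).of_eq fun s => by cases s <;> rfl

theorem p_or {x y : σ → Bool} (hx : Primrec x) (hy : Primrec y) : Primrec fun z => x z || y z :=
  Primrec.or.comp hx hy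

theorem p_fTm {k : σ → ℕ} {v : σ → WD r} {s : σ → List (It r)} (hk : Primrec k) (hv : Primrec v)
    (hs : Primrec s) : Primrec fun z => fTm (k z) (v z) (s z) := by
  have h1 : Primrec fun z => (s z).head?.bind Sum.getLeft? :=
    Primrec.option_bind (Primrec.list_head?.comp hs) (p_getLeft.comp .snd)
  refine (Primrec.option_casesOn h1 (f := fun z => some (Sum.inl (k z, v z) :: s z))
    (g := fun z p => if p.1 = k z then
      some (Sum.inr (k z, decide (FreeGroup.reduce (v z) = FreeGroup.reduce p.2)) :: (s z).tail) else none)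
    (Primrec.option_some.comp (Primrec.list_cons.comp (Primrec.sumInl.comp (hk.pair hv)) hs)) ?_).of_eq ?_
  · refine Primrec.ite (Primrec.eq.comp (Primrec.fst.comp .snd) (hk.comp .fst)) (Primrec.option_some.comp
      (Primrec.list_cons.comp (Primrec.sumInr.comp ((hk.comp .fst).pair ?_)) (Primrec.list_tail.comp (hs.comp .fst))))
      (.const none)
    exact (Primrec.eq.comp (p_reduce.comp (hv.comp .fst)) (p_reduce.comp (Primrec.snd.comp .snd))).decide
  · intro z
    rw [fTm]
    cases (s z).head?.bind Sum.getLeft? <;> rfl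

theorem p_fImp : Primrec (fImp : List (It r) → _) := by
  unfold fImp
  refine Primrec.option_bind (Primrec.option_bind Primrec.list_head? (p_getRight.comp .snd)) ?_
  refine Primrec.option_bind (Primrec.option_bind (Primrec.list_head?.comp (Primrec.list_tail.comp .fst))
    (p_getRight.comp .snd)) ?_
  have s1 : Primrec fun q : (List (It r) × (ℕ × Bool)) × (ℕ × Bool) => q.1.1 := Primrec.fst.comp .fst
  have s2 : Primrec fun q : (List (It r) × (ℕ × Bool)) × (ℕ × Bool) => q.1.2 := Primrec.snd.comp .fst
  have s3 : Primrec fun q : (List (It r) × (ℕ × Bool)) × (ℕ × Bool) => q.2 := .snd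
  exact Primrec.ite (Primrec.eq.comp (Primrec.fst.comp s2) (Primrec.fst.comp s3))
    (Primrec.option_some.comp (Primrec.list_cons.comp (Primrec.sumInr.comp ((Primrec.fst.comp s2).pair
      (p_or (p_not (Primrec.snd.comp s2)) (Primrec.snd.comp s3)))) (Primrec.list_tail.comp (Primrec.list_tail.comp s1))))
    (.const none)

theorem p_fTk {a : σ → List (WD r)} {k : σ → ℕ} {l : σ → List ℕ} {s : σ → List (It r)} (ha : Primrec a)
    (hk : Primrec k) (hl : Primrec l) (hs : Primrec s) : Primrec fun z => fTk (a z) (k z) (l z) (s z) := by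
  unfold fTk
  refine Primrec.option_bind (p_trun ha hk hl) ?_
  refine Primrec.option_bind (Primrec.list_head?.comp .snd) ?_
  exact Primrec.ite (Primrec.eq.comp (Primrec.list_tail.comp (Primrec.snd.comp .fst)) (.const []))
    (p_fTm (hk.comp (Primrec.fst.comp .fst)) .snd (hs.comp (Primrec.fst.comp .fst))) (.const none)

theorem p_tkL {c : σ → ℕ} (hc : Primrec c) : Primrec fun z => tkL (c z) :=
  (Primrec.ofNat (List ℕ)).comp (Primrec.snd.comp (Primrec.unpair.comp (p_div 2 hc)))

theorem p_fst {a : σ → List (WD r)} {c : σ → ℕ} {s : σ → List (It r)} (ha : Primrec a)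
    (hc : Primrec c) (hs : Primrec s) : Primrec fun z => fst (a z) (c z) (s z) := by
  unfold fst
  have h1 : Primrec fun z => (c z - 11) / 4 := p_div 4 (Primrec.nat_sub.comp hc (.const 11))
  have h2 : Primrec fun z => (Nat.unpair (c z / 2)).1 := Primrec.fst.comp (Primrec.unpair.comp (p_div 2 hc))
  have h3 := p_tkL hc
  exact Primrec.ite (Primrec.eq.comp hc (.const _)) (p_fImp.comp hs)
    (Primrec.ite (Primrec.eq.comp hc (p_cBot h1))
      (Primrec.option_some.comp (Primrec.list_cons.comp (Primrec.sumInr.comp (h1.pair (.const false))) hs))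
      (Primrec.ite (Primrec.eq.comp hc (p_cTm h2 h3)) (p_fTk ha h2 h3 hs) (.const none)))

theorem p_frun {a : σ → List (WD r)} {l : σ → List ℕ} (ha : Primrec a)
    (hl : Primrec l) : Primrec fun z => frun (a z) (l z) := by
  unfold frun
  refine Primrec.list_foldr (σ := Option (List (It r))) (h := fun z p => p.2.bind (fst (a z) p.1)) hl (.const _) ?_
  refine Primrec.option_bind (Primrec.snd.comp .snd) ?_
  exact p_fst (ha.comp (Primrec.fst.comp .fst)) (Primrec.fst.comp (Primrec.snd.comp .fst)) .snd

theorem p_pre : Primrec pre := by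
  refine (Primrec.nat_rec₁ (f := fun _ l => l ++ [cImp, cAll, cImp]) [] ?_).of_eq fun n => ?_
  · exact Primrec.list_append.comp .snd (.const _)
  · induction n with
    | zero => rfl
    | succ n ih => rw [pre, ← ih]

theorem p_post : Primrec post := by
  refine (Primrec.nat_rec₁ (f := fun n l => [cBot (n + 1), cBot n] ++ l) [] ?_).of_eq fun n => ?_
  · exact Primrec.list_append.comp (Primrec.list_cons.comp (p_cBot (p_add .fst (.const 1)))
      (Primrec.list_cons.comp (p_cBot .fst) (.const []))) .snd
  · induction n with
    | zero => rfl
    | succ n ih => rw [post, ← ih]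

theorem len_pre (m : ℕ) : (pre m).length = 3 * m := by
  induction m with
  | zero => rfl
  | succ m ih => rw [pre, List.length_append, ih]; simp; omega
theorem len_post (m : ℕ) : (post m).length = 2 * m := by
  induction m with
  | zero => rfl
  | succ m ih => rw [post, List.length_append, ih]; simp; omega

def mid (m : ℕ) (l : List ℕ) : List ℕ := (l.drop (3 * m)).take (l.length - 5 * m)

theorem accept_iff (l : List ℕ) (a : List (WD r)) (m : ℕ) :
    (∃ th, accept l a m th) ↔ accept l a m (mid m l) := by
  refine ⟨?_, fun h => ⟨_, h⟩⟩
  rintro ⟨th, h⟩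
  have : mid m l = th := by
    rw [mid, h.1, List.append_assoc, List.drop_append_of_le_length (by rw [len_pre]), ← len_pre,
      List.drop_length, List.nil_append, List.take_append_of_le_length, List.take_of_length_le]
    all_goals simp only [List.length_append, len_pre, len_post]; omega
  rwa [this]

theorem p_accept : PrimrecRel fun (m : ℕ) (p : List ℕ × List (WD r)) => accept p.1 p.2 m (mid m p.1) := by
  have hm : Primrec fun q : ℕ × (List ℕ × List (WD r)) => q.1 := .fst
  have hl : Primrec fun q : ℕ × (List ℕ × List (WD r)) => q.2.1 := Primrec.fst.comp .snd
  have ha : Primrec fun q : ℕ × (List ℕ × List (WD r)) => q.2.2 := Primrec.snd.comp .snd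
  have hd : Primrec fun q : ℕ × (List ℕ × List (WD r)) => mid q.1 q.2.1 := by
    unfold mid
    exact Primrec.list_take.comp (Primrec.nat_sub.comp (Primrec.list_length.comp hl) (p_mul (.const 5) hm))
      (Primrec.list_drop.comp (p_mul (.const 3) hm) hl)
  exact PrimrecPred.and (Primrec.eq.comp hl (Primrec.list_append.comp (Primrec.list_append.comp (p_pre.comp hm) hd)
    (p_post.comp hm))) (Primrec.eq.comp (p_frun ha hd) (Primrec.option_some.comp (Primrec.list_cons.comp
      (Primrec.sumInr.comp (hm.pair (.const true))) (.const []))))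

def en {β : Type} (A : List β) (m : ℕ) : List (List β) :=
  Nat.rec (motive := fun _ => List (List β)) [ [] ]
    (fun _ L => [] :: A.flatMap fun a => L.map fun l => a :: l) m

theorem p_en {β : Type} [Primcodable β] {A : σ → List β} {m : σ → ℕ} (hA : Primrec A) (hm : Primrec m) :
    Primrec fun z => en (A z) (m z) := by
  unfold en
  refine Primrec.nat_rec' (h := fun z p => [] :: (A z).flatMap fun a => p.2.map fun l => a :: l) hm (.const [ [] ]) ?_
  refine Primrec.list_cons.comp (.const []) (Primrec.list_flatMap (hA.comp .fst) ?_)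
  exact Primrec.list_map (Primrec.snd.comp (Primrec.snd.comp .fst))
    (Primrec.list_cons.comp (Primrec.snd.comp .fst) .snd)

theorem mem_en {β : Type} (A : List β) (m : ℕ) (l : List β) (h : l.length ≤ m) (hl : ∀ x ∈ l, x ∈ A) :
    l ∈ en A m := by
  induction m generalizing l with
  | zero =>
    cases l with
    | nil => simp [en]
    | cons a l => simp at h
  | succ m ih =>
    change l ∈ [] :: A.flatMap fun a => (en A m).map fun l => a :: l
    cases l with
    | nil => simp
    | cons a l =>
      refine List.mem_cons_of_mem _ (List.mem_flatMap.2 ⟨a, hl a (by simp), List.mem_map.2 ⟨l, ih l ?_ ?_, rfl⟩⟩)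
      · simpa using h
      · exact fun x hx => hl x (by simp [hx])

noncomputable def asgs (r n : ℕ) : List (List (WD r)) := en (en (Finset.univ : Finset (LW r)).toList (finB r n)) n

theorem main (hr : 2 ≤ r) : PrimrecPred fun n : ℕ =>
    ∃ τ : (GF r).Sentence, godelNumberWithConstants r τ = n ∧ IsExistential τ ∧ FreeGroup (Fin r) ⊨ τ := by
  have h1 : PrimrecRel fun (n : ℕ) (p : List ℕ × List (WD r)) => ∃ m < n, accept p.1 p.2 m (mid m p.1) :=
    (p_accept.exists_mem_list.comp (Primrec.list_range.comp .fst) Primrec.snd).of_eq (by simp)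
  have h2 : PrimrecRel fun (a : List (WD r)) (n : ℕ) => ∃ m < n + 1,
      accept (Denumerable.ofNat (List ℕ) n) a m (mid m (Denumerable.ofNat (List ℕ) n)) :=
    h1.comp (p_add .snd (.const 1)) (((Primrec.ofNat (List ℕ)).comp Primrec.snd).pair .fst)
  have h3 : Primrec (asgs r) := p_en (p_en (.const _) p_finB) .id
  refine (h2.exists_mem_list.comp h3 Primrec.id).of_eq fun n => ?_
  rw [pred_iff hr n {a | a ∈ asgs r n}]
  · simp only [accept_iff, Set.mem_ofPred_eq, id]
    constructor
    · rintro ⟨a, ha, m, hm, h⟩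
      exact ⟨m, by omega, a, ha, h⟩
    · rintro ⟨m, hm, a, ha, h⟩
      exact ⟨a, ha, m, by omega, h⟩
  · intro a h h'
    exact mem_en _ _ _ h fun w hw => mem_en _ _ _ (h' w hw) fun x _ => by simp

end
end Mak

/-- The existential theory of a free group of finite rank at least 2, in the language of
groups with constants from the free group, is decidable: with respect to the fixed Gödel
numbering of sentences, the set of existential sentences true in the free group is
computable. -/
theorem existential_theory_of_free_group_decidable (r : ℕ) (hr : 2 ≤ r) :
    ComputablePred (fun n : ℕ =>
      ∃ σ : (groupLang[[FreeGroup (Fin r)]]).Sentence,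
        godelNumberWithConstants r σ = n ∧ IsExistential σ ∧ FreeGroup (Fin r) ⊨ σ) := by
  obtain ⟨_, h⟩ := Mak.main hr
  exact ⟨_, h.to_comp⟩
end

section
/- (Merzljakov-type formal solutions) Let F be the free group with finite basis A, |A| ≥ 2, let X = {x₁,…,xₙ} and Y = {y₁,…,yₘ} be tuples of variables, and let U₁,…,Uₛ and V be elements of the free group on X ∪ Y ∪ A (group words in the variables and constants). Suppose that for every tuple (a₁,…,aₙ) of elements of F there exists a tuple (b₁,…,bₘ) of elements of F such that Uᵢ(a,b) = 1 in F for all i = 1,…,s and V(a,b) ≠ 1 in F. Then there exist elements w₁,…,wₘ of the free group F(X ∪ A) on X ∪ A (equivalently, of the free product F(X) ∗ F(A)) such that the homomorphism from the free group on X ∪ Y ∪ A to F(X ∪ A) sending each xⱼ and each a ∈ A to itself and each yⱼ to wⱼ sends each Uᵢ to the identity element of F(X ∪ A) and sends V to a nontrivial element of F(X ∪ A). -/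
/-- The evaluation homomorphism `F(X ∪ Y ∪ A) →* F(A)` sending the variables
`xⱼ ↦ aⱼ`, `yⱼ ↦ bⱼ` and each constant `a ∈ A` to the corresponding basis element
of the free group `F = F(A)`. -/
def evalWord {n m r : ℕ} (a : Fin n → FreeGroup (Fin r)) (b : Fin m → FreeGroup (Fin r)) :
    FreeGroup ((Fin n ⊕ Fin m) ⊕ Fin r) →* FreeGroup (Fin r) :=
  FreeGroup.lift (Sum.elim (Sum.elim a b) FreeGroup.of)

/-- The substitution homomorphism `F(X ∪ Y ∪ A) →* F(X ∪ A)` sending each `xⱼ` and each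
constant `a ∈ A` to itself, and each `yⱼ` to the word `w j ∈ F(X ∪ A)`. -/
def substWord {n m r : ℕ} (w : Fin m → FreeGroup (Fin n ⊕ Fin r)) :
    FreeGroup ((Fin n ⊕ Fin m) ⊕ Fin r) →* FreeGroup (Fin n ⊕ Fin r) :=
  FreeGroup.lift
    (Sum.elim (Sum.elim (fun x => FreeGroup.of (Sum.inl x)) w)
      (fun c => FreeGroup.of (Sum.inr c)))


namespace Merz

open Monoid

abbrev C (r : ℕ) := CoprodI (fun _ : Fin r => Multiplicative ℤ)
abbrev Syl (r : ℕ) := Σ _ : Fin r, Multiplicative ℤ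

def Red {r : ℕ} (l : List (Syl r)) : Prop :=
  (∀ p ∈ l, p.2 ≠ 1) ∧ l.IsChain (fun p q => p.1 ≠ q.1)

def prodC {r : ℕ} (l : List (Syl r)) : C r :=
  (l.map (fun p => (CoprodI.of (i := p.1) p.2 : C r))).prod

def F {r : ℕ} {H : Type} [Group H] (f : Fin r → ℤ → H) (l : List (Syl r)) : H :=
  (l.map (fun p => f p.1 p.2.toAdd)).prod

noncomputable def phi {r : ℕ} {H : Type} [Group H] (f : Fin r → ℤ → H) (c : C r) : H :=
  F f (CoprodI.Word.equiv c).toList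

lemma phi_prodC {r : ℕ} {H : Type} [Group H] (f : Fin r → ℤ → H) (l : List (Syl r))
    (hl : Red l) : phi f (prodC l) = F f l := by
  have h : CoprodI.Word.equiv (prodC l) = (⟨l, hl.1, hl.2⟩ : CoprodI.Word _) := by
    rw [← Equiv.eq_symm_apply]
    rfl
  rw [phi, h]

lemma exists_red {r : ℕ} (c : C r) : ∃ l, Red l ∧ prodC l = c := by
  refine ⟨(CoprodI.Word.equiv c).toList, ⟨(CoprodI.Word.equiv c).ne_one,
    (CoprodI.Word.equiv c).chain_ne⟩, ?_⟩
  exact CoprodI.Word.equiv.symm_apply_apply c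

/-- `f` is odd and agrees with powers of `g` off `S`. -/
structure Good {r : ℕ} {H : Type} [Group H] (g : Fin r → H) (S : Set ℕ)
    (f : Fin r → ℤ → H) : Prop where
  neg : ∀ i x, f i (-x) = (f i x)⁻¹
  off : ∀ i (x : ℤ), x.natAbs ∉ S → f i x = g i ^ x

lemma key {r : ℕ} (l₁ : List (Syl r)) : ∀ l₂ : List (Syl r), Red l₁ → Red l₂ →
    ∃ B : Finset ℕ, B.card ≤ 3 ∧ ∃ l, Red l ∧ prodC l = prodC l₁ * prodC l₂ ∧
      ∀ (H : Type) [Group H] (g : Fin r → H) (S : Set ℕ) (f : Fin r → ℤ → H),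
        (∀ x ∈ B, x ∉ S) → Good g S f → F f l = F f l₁ * F f l₂ := by
  induction l₁ using List.reverseRecOn with
  | nil =>
    intro l₂ _ h₂
    exact ⟨∅, by simp, l₂, h₂, by simp [prodC], by intros; simp [F]⟩
  | append_singleton l₁ p ih =>
    intro l₂ h₁ h₂
    cases l₂ with
    | nil => exact ⟨∅, by simp, l₁ ++ [p], h₁, by simp [prodC], by intros; simp [F]⟩
    | cons q l₂ =>
      obtain ⟨i, x⟩ := p
      obtain ⟨j, y⟩ := q
      have h₁' : Red l₁ := ⟨fun p hp => h₁.1 p (by simp [hp]), (List.isChain_append.1 h₁.2).1⟩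
      have h₂' : Red l₂ := ⟨fun p hp => h₂.1 p (by simp [hp]), h₂.2.tail⟩
      by_cases hij : i = j
      · subst hij
        by_cases hxy : x * y = 1
        · obtain ⟨B, hB, l, hl, hp, hf⟩ := ih l₂ h₁' h₂'
          refine ⟨B, hB, l, hl, ?_, ?_⟩
          · rw [hp]
            have : (CoprodI.of (i := i) x : C r) * CoprodI.of (i := i) y = 1 := by
              rw [← map_mul, hxy, map_one]
            simp only [prodC, List.map_append, List.prod_append, List.map_cons, List.prod_cons,
              List.map_nil, List.prod_nil, mul_one]
            rw [mul_assoc, ← mul_assoc (CoprodI.of (M := fun _ : Fin r => Multiplicative ℤ) (i := i) x), this, one_mul]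
          · intro H _ g S f hS hg
            rw [hf H g S f hS hg]
            have hy : y.toAdd = - x.toAdd := by
              have := congrArg Multiplicative.toAdd hxy
              simp at this
              omega
            simp [F, mul_assoc, hy, hg.neg]
        · refine ⟨{x.toAdd.natAbs, y.toAdd.natAbs, (x.toAdd + y.toAdd).natAbs},
            Finset.card_le_three, l₁ ++ ⟨i, x * y⟩ :: l₂, ⟨?_, ?_⟩, ?_, ?_⟩
          · intro p hp
            simp only [List.mem_append, List.mem_cons] at hp
            rcases hp with hp | rfl | hp
            · exact h₁'.1 p hp
            · exact hxy
            · exact h₂'.1 p hp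
          · have a1 := h₁.2
            have a2 := h₂.2
            rw [List.isChain_append] at a1 ⊢
            rw [List.isChain_cons] at a2 ⊢
            refine ⟨a1.1, ⟨a2.1, a2.2⟩, ?_⟩
            intro p hp q hq
            simp at hq
            subst hq
            exact a1.2.2 p hp ⟨i, x⟩ (by simp)
          · simp [prodC, mul_assoc]
          · intro H _ g S f hS hg
            have e1 := hg.off i x.toAdd (hS _ (by simp))
            have e2 := hg.off i y.toAdd (hS _ (by simp))
            have e3 := hg.off i (x.toAdd + y.toAdd) (hS _ (by simp))
            simp [F, mul_assoc, e1, e2, e3, zpow_add]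
      · refine ⟨∅, by simp, (l₁ ++ [⟨i, x⟩]) ++ ⟨j, y⟩ :: l₂, ⟨?_, ?_⟩, ?_, ?_⟩
        · intro p hp
          rcases List.mem_append.1 hp with hp | hp
          · exact h₁.1 p hp
          · exact h₂.1 p hp
        · rw [List.isChain_append]
          refine ⟨h₁.2, h₂.2, ?_⟩
          intro p hp q hq
          simp at hp hq
          subst hp; subst hq
          exact hij
        · simp [prodC, mul_assoc]
        · intros
          simp [F, mul_assoc]

lemma phi_mul {r : ℕ} (c d : C r) :
    ∃ B : Finset ℕ, B.card ≤ 3 ∧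
      ∀ (H : Type) [Group H] (g : Fin r → H) (S : Set ℕ) (f : Fin r → ℤ → H),
        (∀ x ∈ B, x ∉ S) → Good g S f → phi f (c * d) = phi f c * phi f d := by
  obtain ⟨l₁, h₁, rfl⟩ := exists_red c
  obtain ⟨l₂, h₂, rfl⟩ := exists_red d
  obtain ⟨B, hB, l, hl, hp, hf⟩ := key l₁ l₂ h₁ h₂
  refine ⟨B, hB, fun H _ g S f hS hg => ?_⟩
  rw [← hp, phi_prodC f _ hl, phi_prodC f _ h₁, phi_prodC f _ h₂, hf H g S f hS hg]

lemma phi_one {r : ℕ} {H : Type} [Group H] (f : Fin r → ℤ → H) : phi f (1 : C r) = 1 := by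
  have := phi_prodC f ([] : List (Syl r)) ⟨by simp, by simp⟩
  simpa [prodC, F] using this

lemma phi_inv {r : ℕ} {H : Type} [Group H] (g : Fin r → H) (S : Set ℕ) (f : Fin r → ℤ → H)
    (hg : Good g S f) (c : C r) : phi f c⁻¹ = (phi f c)⁻¹ := by
  obtain ⟨l, h, rfl⟩ := exists_red c
  have hl : Red ((l.map (fun p => (⟨p.1, p.2⁻¹⟩ : Syl r))).reverse) := by
    constructor
    · intro p hp
      simp only [List.mem_reverse, List.mem_map] at hp
      obtain ⟨q, hq, rfl⟩ := hp
      simpa using h.1 q hq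
    · rw [List.isChain_reverse, List.isChain_map]
      exact h.2.imp (fun _ _ hab => hab.symm)
  have e : prodC ((l.map (fun p => (⟨p.1, p.2⁻¹⟩ : Syl r))).reverse) = (prodC l)⁻¹ := by
    simp [prodC, List.prod_inv_reverse, List.map_reverse, Function.comp_def]
  rw [← e, phi_prodC f _ hl, phi_prodC f _ h]
  simp [F, List.prod_inv_reverse, List.map_reverse, Function.comp_def, hg.neg]

lemma phi_word {r : ℕ} {T : Type} (v : T → C r) (L : List (T × Bool)) :
    ∃ B : Finset ℕ, B.card ≤ 3 * L.length ∧
      ∀ (H : Type) [Group H] (g : Fin r → H) (S : Set ℕ) (f : Fin r → ℤ → H),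
        (∀ x ∈ B, x ∉ S) → Good g S f →
        phi f (FreeGroup.lift v (FreeGroup.mk L)) =
          FreeGroup.lift (fun t => phi f (v t)) (FreeGroup.mk L) := by
  induction L with
  | nil =>
    refine ⟨∅, by simp, fun H _ g S f _ hg => ?_⟩
    simp [phi_one]
  | cons p L ih =>
    obtain ⟨t, b⟩ := p
    obtain ⟨B, hB, hf⟩ := ih
    obtain ⟨B', hB', hf'⟩ := phi_mul (cond b (v t) (v t)⁻¹) (FreeGroup.lift v (FreeGroup.mk L))
    refine ⟨B' ∪ B, ?_, fun H _ g S f hS hg => ?_⟩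
    · have := Finset.card_union_le B' B
      simp only [List.length_cons]
      omega
    · have e1 := hf H g S f (fun x hx => hS x (by simp [hx])) hg
      have e2 := hf' H g S f (fun x hx => hS x (by simp [hx])) hg
      simp only [FreeGroup.lift_mk] at e1 e2 ⊢
      simp only [List.map_cons, List.prod_cons]
      rw [e2, e1]
      cases b
      · simp [phi_inv g S f hg]
      · simp

lemma red_blocks {r : ℕ} (i j : Fin r) (hij : i ≠ j) (ks : List ℕ) (hk : ∀ k ∈ ks, k ≠ 0) :
    Red (ks.flatMap (fun k : ℕ => [(⟨i, Multiplicative.ofAdd (k : ℤ)⟩ : Syl r),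
      ⟨j, Multiplicative.ofAdd 1⟩])) := by
  constructor
  · intro p hp
    simp only [List.mem_flatMap, List.mem_cons, List.not_mem_nil, or_false] at hp
    obtain ⟨k, hk', rfl | rfl⟩ := hp
    · have := hk k hk'
      intro h
      have := congrArg Multiplicative.toAdd h
      simp at this
      contradiction
    · intro h
      have := congrArg Multiplicative.toAdd h
      simp at this
  · induction ks with
    | nil => simp
    | cons k ks ih =>
      have ih := ih (fun k hk' => hk k (by simp [hk']))
      cases ks with
      | nil => simp [hij]
      | cons k' ks =>
        simp only [List.flatMap_cons, List.cons_append, List.nil_append, List.isChain_cons_cons]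
          at ih ⊢
        exact ⟨hij, hij.symm, ih⟩

lemma phi_blocks {r : ℕ} (i j : Fin r) (hij : i ≠ j) (ks : List ℕ) (hk : ∀ k ∈ ks, k ≠ 0)
    {H : Type} [Group H] (f : Fin r → ℤ → H) :
    phi f (ks.map (fun k : ℕ => (CoprodI.of (i := i) (Multiplicative.ofAdd (k : ℤ)) : C r) *
      CoprodI.of (i := j) (Multiplicative.ofAdd (1 : ℤ)))).prod =
    (ks.map (fun k : ℕ => f i k * f j 1)).prod := by
  have h := phi_prodC f _ (red_blocks i j hij ks hk)
  have e1 : prodC (ks.flatMap (fun k : ℕ => [(⟨i, Multiplicative.ofAdd (k : ℤ)⟩ : Syl r),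
      ⟨j, Multiplicative.ofAdd 1⟩])) = (ks.map (fun k : ℕ =>
      (CoprodI.of (i := i) (Multiplicative.ofAdd (k : ℤ)) : C r) *
      CoprodI.of (i := j) (Multiplicative.ofAdd (1 : ℤ)))).prod := by
    clear h hk
    induction ks with
    | nil => simp [prodC]
    | cons k ks ih =>
      simp only [prodC, List.map_cons, List.prod_cons, List.flatMap_cons, List.map_append,
        List.prod_append, List.map_nil, List.prod_nil, mul_one] at ih ⊢
      rw [ih]
  rw [← e1, h]
  clear h hk e1
  induction ks with
  | nil => simp [F]
  | cons k ks ih =>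
    simp only [F, List.map_cons, List.prod_cons, List.flatMap_cons, List.map_append,
        List.prod_append, List.map_nil, List.prod_nil, mul_one] at ih ⊢
    rw [ih]; rfl

/-- the canonical map from the free group to the coproduct -/
def P (r : ℕ) : FreeGroup (Fin r) →* C r :=
  FreeGroup.lift (fun i => CoprodI.of (i := i) (Multiplicative.ofAdd (1 : ℤ)))

def Q (r : ℕ) : C r →* FreeGroup (Fin r) :=
  CoprodI.lift (fun i => zpowersHom _ (FreeGroup.of i))

lemma QP (r : ℕ) (x : FreeGroup (Fin r)) : Q r (P r x) = x := by
  have : (Q r).comp (P r) = MonoidHom.id _ := by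
    ext i
    simp [Q, P]
  exact DFunLike.congr_fun this x

lemma section_phi {r : ℕ} {H : Type} [Group H] (f : Fin r → ℤ → H) (ψ : H →* FreeGroup (Fin r))
    (h : ∀ i x, ψ (f i x) = FreeGroup.of i ^ x) (c : C r) : ψ (phi f c) = Q r c := by
  obtain ⟨l, hl, rfl⟩ := exists_red c
  rw [phi_prodC f _ hl]
  simp only [F, prodC, map_list_prod, List.map_map]
  congr 1
  apply List.map_congr_left
  intro p _
  simp [h, Q]

lemma phi_of {r : ℕ} {H : Type} [Group H] (f : Fin r → ℤ → H) (i : Fin r) :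
    phi f (P r (FreeGroup.of i)) = f i 1 := by
  have h := phi_prodC f [(⟨i, Multiplicative.ofAdd (1 : ℤ)⟩ : Syl r)] ⟨by
    intro p hp
    simp only [List.mem_singleton] at hp
    subst hp
    intro h
    have := congrArg Multiplicative.toAdd h
    simp at this, by simp⟩
  simpa [prodC, F, P] using h

lemma P_blocks {r : ℕ} (i j : Fin r) (ks : List ℕ) :
    P r (ks.map (fun k : ℕ => FreeGroup.of i ^ k * FreeGroup.of j)).prod =
    (ks.map (fun k : ℕ => (CoprodI.of (i := i) (Multiplicative.ofAdd (k : ℤ)) : C r) *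
      CoprodI.of (i := j) (Multiplicative.ofAdd (1 : ℤ)))).prod := by
  simp only [map_list_prod, List.map_map]
  congr 1
  apply List.map_congr_left
  intro k _
  have e : (Multiplicative.ofAdd (k : ℤ)) = (Multiplicative.ofAdd (1 : ℤ)) ^ k := by
    rw [← ofAdd_nsmul]; simp
  rw [e, map_pow]
  simp only [P, Function.comp_apply, map_mul, map_pow, FreeGroup.lift_apply_of]

def code (j t : ℕ) : ℕ := Nat.pair j t + 2

def mark {G : Type} [Group G] (x y : G) (j : ℕ) (l : List ℕ) : G :=
  (l.map (fun t => x ^ code j t * y)).prod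

lemma exists_f {r n : ℕ} (i₀ i₁ : Fin r) (hi : i₀ ≠ i₁) (K : ℕ) (t : Fin n → ℕ)
    (ht : ∀ j, t j < K) :
    ∃ (f : Fin r → ℤ → FreeGroup (Fin n ⊕ Fin r)),
      Good (fun i => FreeGroup.of (Sum.inr i)) (Set.range fun j : Fin n => code j (t j)) f ∧
      (∀ j : Fin n, phi f (P r (mark (FreeGroup.of i₀) (FreeGroup.of i₁) j (List.range K))) =
        FreeGroup.of (Sum.inl j)) ∧
      (∀ i, f i 1 = FreeGroup.of (Sum.inr i)) ∧
      ∃ ψ : FreeGroup (Fin n ⊕ Fin r) →* FreeGroup (Fin r),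
        ∀ i x, ψ (f i x) = FreeGroup.of i ^ x := by
  classical
  have hsplit : ∀ j, ∃ s : List ℕ × List ℕ, List.range K = s.1 ++ t j :: s.2 := by
    intro j
    obtain ⟨a, b, h⟩ := List.append_of_mem (List.mem_range.2 (ht j))
    exact ⟨(a, b), h⟩
  choose s hs using hsplit
  set k : Fin n → ℕ := fun j => code j (t j) with hk
  have hinj : ∀ (j j' : Fin n) (a b : ℕ), code j a = code j' b → j = j' ∧ a = b := by
    intro j j' a b h
    simp only [code, add_left_inj, Nat.pair_eq_pair] at h
    exact ⟨Fin.ext h.1, h.2⟩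
  have hkinj : Function.Injective k := fun j j' h => (hinj j j' _ _ h).1
  let X : FreeGroup (Fin n ⊕ Fin r) := FreeGroup.of (Sum.inr i₀)
  let Y : FreeGroup (Fin n ⊕ Fin r) := FreeGroup.of (Sum.inr i₁)
  let e : Fin n → FreeGroup (Fin n ⊕ Fin r) := fun j =>
    (mark X Y j (s j).1)⁻¹ * FreeGroup.of (Sum.inl j) * (mark X Y j (s j).2)⁻¹ * Y⁻¹
  let E : ℕ → FreeGroup (Fin n ⊕ Fin r) := Function.extend k e 1
  have hE : ∀ j, E (k j) = e j := fun j => hkinj.extend_apply e 1 j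
  let f : Fin r → ℤ → FreeGroup (Fin n ⊕ Fin r) := fun i x =>
    if i = i₀ ∧ x.natAbs ∈ Set.range k then E x.natAbs ^ x.sign else FreeGroup.of (Sum.inr i) ^ x
  have hgood : Good (fun i => FreeGroup.of (Sum.inr i)) (Set.range k) f := by
    constructor
    · intro i x
      simp only [f, Int.natAbs_neg, Int.sign_neg]
      split_ifs <;> simp
    · intro i x hx
      exact if_neg (fun hh => hx hh.2)
  have h1 : ∀ i, f i 1 = FreeGroup.of (Sum.inr i) := by
    intro i
    have : (1 : ℤ).natAbs ∉ Set.range k := by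
      rintro ⟨j, hj⟩
      simp [k, code] at hj
    rw [hgood.off i 1 this]
    simp
  refine ⟨f, hgood, ?_, h1, ?_⟩
  · intro j
    have hm : mark (FreeGroup.of i₀) (FreeGroup.of i₁) (j : ℕ) (List.range K) =
      (((List.range K).map (code j)).map
        (fun k : ℕ => FreeGroup.of i₀ ^ k * FreeGroup.of i₁)).prod := by
      simp [mark, Function.comp_def]
    rw [hm, P_blocks, phi_blocks i₀ i₁ hi _ (by simp [code])]
    have hnd := List.nodup_range (n := K)
    rw [hs j] at hnd ⊢
    have hne : ∀ l : List ℕ, t j ∉ l →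
        ((l.map (code j)).map (fun k : ℕ => f i₀ k * f i₁ 1)).prod = mark X Y j l := by
      intro l hl
      rw [List.map_map, mark]
      congr 1
      apply List.map_congr_left
      intro a ha
      have : ((code j a : ℕ) : ℤ).natAbs ∉ Set.range k := by
        rintro ⟨j', hj'⟩
        simp only [Int.natAbs_natCast] at hj'
        obtain ⟨rfl, rfl⟩ := hinj _ _ _ _ hj'
        exact hl ha
      simp only [Function.comp_apply]
      rw [hgood.off _ _ this, h1]
      simp [X, Y]
    have hn1 : t j ∉ (s j).1 := by
      intro h
      rw [List.nodup_append] at hnd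
      exact hnd.2.2 _ h _ (by simp) rfl
    have hn2 : t j ∉ (s j).2 := by
      rw [List.nodup_append] at hnd
      exact (List.nodup_cons.1 hnd.2.1).1
    rw [List.map_append, List.map_append, List.prod_append, List.map_cons, List.map_cons,
      List.prod_cons, hne _ hn1, hne _ hn2, h1]
    have : f i₀ ((code j (t j) : ℕ) : ℤ) = e j := by
      have hpos : ((code j (t j) : ℕ) : ℤ).sign = 1 := by
        apply Int.sign_eq_one_of_pos
        simp only [code]; omega
      simp only [f, hpos, Int.natAbs_natCast, zpow_one]
      rw [if_pos ⟨trivial, j, rfl⟩]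
      exact hE j
    rw [this]
    simp only [e, Y]
    group
  · let ψ : FreeGroup (Fin n ⊕ Fin r) →* FreeGroup (Fin r) :=
      FreeGroup.lift (Sum.elim (fun j : Fin n =>
        mark (FreeGroup.of i₀) (FreeGroup.of i₁) j (List.range K)) FreeGroup.of)
    refine ⟨ψ, ?_⟩
    have hmark : ∀ (j : ℕ) l, ψ (mark X Y j l) = mark (FreeGroup.of i₀) (FreeGroup.of i₁) j l := by
      intro j l
      simp only [mark, map_list_prod, List.map_map]
      congr 1
      apply List.map_congr_left
      intro a _
      simp [ψ, X, Y]
    intro i x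
    by_cases hx : i = i₀ ∧ x.natAbs ∈ Set.range k
    · simp only [f, if_pos hx]
      obtain ⟨rfl, j, hj⟩ := hx
      rw [← hj, hE, map_zpow]
      have : ψ (e j) = FreeGroup.of i ^ k j := by
        simp only [e, map_mul, map_inv, hmark]
        have e1 : ψ (FreeGroup.of (Sum.inl j)) =
          mark (FreeGroup.of i) (FreeGroup.of i₁) j (List.range K) := by simp [ψ]
        have e2 : ψ Y = FreeGroup.of i₁ := by simp [ψ, Y]
        rw [e1, e2, hs j]
        have e3 : mark (FreeGroup.of i) (FreeGroup.of i₁) (j : ℕ) ((s j).1 ++ t j :: (s j).2) =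
          mark (FreeGroup.of i) (FreeGroup.of i₁) j (s j).1 * (FreeGroup.of i ^ k j *
            FreeGroup.of i₁ * mark (FreeGroup.of i) (FreeGroup.of i₁) j (s j).2) := by
          simp [mark, k]
        rw [e3]
        group
      rw [this, hj, ← zpow_natCast, ← zpow_mul, mul_comm, Int.sign_mul_natAbs]
    · simp only [f, if_neg hx]
      simp [ψ]

lemma choose_t {n : ℕ} (B : Finset ℕ) (K : ℕ) (hB : B.card < K) :
    ∃ t : Fin n → ℕ, (∀ j, t j < K) ∧ ∀ j : Fin n, code j (t j) ∉ B := by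
  have : ∀ j : Fin n, ∃ a, a < K ∧ code j a ∉ B := by
    intro j
    by_contra! hcon
    have := Finset.card_le_card_of_injOn (s := Finset.range K) (t := B) (code j)
      (by intro a ha; exact hcon a (by simpa using ha))
      (by
        intro a _ b _ hab
        simp only [code, add_left_inj, Nat.pair_eq_pair] at hab
        exact hab.2)
    simp at this
    omega
  choose t h1 h2 using this
  exact ⟨t, h1, h2⟩

end Merz

/-- Merzljakov-type formal solutions: if for every tuple `a` in the free group
`F = F(A)` (`|A| = r ≥ 2`) there is a tuple `b` in `F` with `Uᵢ(a, b) = 1` for all `i`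
and `V(a, b) ≠ 1`, then there are formal solutions `w₁, …, w_m ∈ F(X ∪ A)` such that
substituting `yⱼ ↦ wⱼ` sends each `Uᵢ` to `1` and `V` to a nontrivial element
of `F(X ∪ A)`. -/
theorem merzljakov_formal_solutions (r n m s : ℕ) (hr : 2 ≤ r)
    (U : Fin s → FreeGroup ((Fin n ⊕ Fin m) ⊕ Fin r))
    (V : FreeGroup ((Fin n ⊕ Fin m) ⊕ Fin r))
    (h : ∀ a : Fin n → FreeGroup (Fin r), ∃ b : Fin m → FreeGroup (Fin r),
      (∀ i, evalWord a b (U i) = 1) ∧ evalWord a b V ≠ 1) :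
    ∃ w : Fin m → FreeGroup (Fin n ⊕ Fin r),
      (∀ i, substWord w (U i) = 1) ∧ substWord w V ≠ 1 := by
  classical
  let i₀ : Fin r := ⟨0, by omega⟩
  let i₁ : Fin r := ⟨1, by omega⟩
  have hi : i₀ ≠ i₁ := by simp [i₀, i₁]
  let W : Option (Fin s) → FreeGroup ((Fin n ⊕ Fin m) ⊕ Fin r) := fun o => o.elim V U
  let K : ℕ := (∑ o, 3 * (W o).toWord.length) + 1
  let a : Fin n → FreeGroup (Fin r) := fun j =>
    Merz.mark (FreeGroup.of i₀) (FreeGroup.of i₁) j (List.range K)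
  obtain ⟨b, hU, hV⟩ := h a
  let v : (Fin n ⊕ Fin m) ⊕ Fin r → FreeGroup (Fin r) := Sum.elim (Sum.elim a b) FreeGroup.of
  choose B hB hf using fun o => Merz.phi_word (fun z => Merz.P r (v z)) (W o).toWord
  obtain ⟨t, ht, htB⟩ := Merz.choose_t (n := n) (Finset.univ.biUnion B) K (by
    refine Nat.lt_succ_of_le (Finset.card_biUnion_le.trans ?_)
    exact Finset.sum_le_sum fun o _ => hB o)
  obtain ⟨f, hgood, hmark, h1, ψ, hψ⟩ := Merz.exists_f i₀ i₁ hi K t ht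
  have hsub : ∀ o, Merz.phi f (Merz.P r (evalWord a b (W o))) =
      substWord (fun j => Merz.phi f (Merz.P r (b j))) (W o) := by
    intro o
    have := hf o _ _ _ f (by
      rintro x hx ⟨j, rfl⟩
      exact htB j (Finset.mem_biUnion.2 ⟨o, Finset.mem_univ _, hx⟩)) hgood
    rw [FreeGroup.mk_toWord] at this
    have e1 : FreeGroup.lift (fun z => Merz.P r (v z)) = (Merz.P r).comp (evalWord a b) := by
      ext z
      simp [evalWord, v]
    have e2 : FreeGroup.lift (fun z => Merz.phi f (Merz.P r (v z))) =
        substWord (fun j => Merz.phi f (Merz.P r (b j))) := by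
      unfold substWord
      congr 1
      funext z
      rcases z with (j | j) | c
      · simpa [v, a] using hmark j
      · simp [v]
      · simp [v, Merz.phi_of, h1]
    rw [e1, e2] at this
    exact this
  refine ⟨fun j => Merz.phi f (Merz.P r (b j)), fun i => ?_, fun hcon => hV ?_⟩
  · have := hsub (some i)
    simp only [W, Option.elim, hU i, map_one, Merz.phi_one] at this
    exact this.symm
  · have := hsub none
    simp only [W, Option.elim] at this
    rw [hcon] at this
    have h2 := Merz.section_phi f ψ hψ (Merz.P r (evalWord a b V))
    rw [this, map_one, Merz.QP] at h2
    exact h2.symm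
end
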